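/- There exists s > 0, independent of n, such that if S ≥ s then P(Eⁿ_slope) → 1 as n → ∞, where Eⁿ_slope is the event that for all n⃗_a, n⃗_b ∈ Iⁿ with n⃗_b − n⃗_a = k·e⃗ for some integer k ≥ n^{0.1}, one has L(n⃗_b) − L(n⃗_a) ≥ 0.01·|n⃗_b − n⃗_a|. -/

import Mathlib

/-!
The words are encoded by their gap lists, the lengths of the (possibly empty) runs of zeros cut out
by the ones. One step of the chain replaces an entry `5` of the gap list of `x` by `4` and an entry
`1` by `2`. An optimal alignment of `x` and `y` is encoded by a segmentation, which cuts both gap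
lists into the same number of nonempty segments: consecutive segments are separated by aligned ones,
and a segment contributes the minimum of the numbers of zeros of its two sides
(`exists_cuts_optScore_le`). Hence a step gains one if the increased entry `1` forms a one-element
segment facing at least two zeros, and it loses at most one, and only if the decreased entry `5`
faces at least five zeros or does not form a one-element segment.

If `S` is large and both words have about `n / 2` ones, an optimal alignment must align nearly all
ones, so nearly all segments consist of one gap of `x` and one gap of `y`
(`Segmentation.Cuts.excess_le`). The gaps of the random `y` are geometric, so for a fixed alignment
a fraction about `1 / 4` of the entries `1` faces at least two zeros, and a fraction about `1 / 32`
of the entries `5` faces at least five. To have this for all alignments at once, `transferWeight`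
sums over all matchings of gaps with a small weight `δ` for each unmatched gap; its average over `y`
is bounded by recursion (`sum_transferWeight_le`). Markov's inequality then shows that, for fixed
`x` and all but exponentially few balanced `y`, one step satisfies `E[exp (-λ (L' - L))] ≤ 0.997`,
where `L` and `L'` are the scores before and after the step and `exp λ = 1.1`
(`card_not_hasUpwardDrift_le`).

The states of the chain are uniform on strings with prescribed block counts rather than on all
strings. Bounding the number of strings with block counts within `O(√n)` of their means from below
by `2 ^ n * exp (-O(√n log n))` (`two_pow_le_mul_card_strSetV`) transfers Hoeffding's bound for the
number of ones to such strings, and `card_strSetOnes_mul_card_strSetV` carries it back along the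
chain to its starting point, which need not be close to the mean
(`eventually_card_unbalancedStrings_le`). As the number of ones is constant along the chain, and `y`
is independent of it, every pair met by the chain has the upward drift, up to an exponentially small
probability. The exponential moments multiply along the chain, so that the slope condition between
the times `j` and `k` fails with probability at most `0.999 ^ (k - j)` up to exponentially small
terms (`IsBlockMovingChain.measureReal_increment_lt_le`). Since `k - j ≥ n ^ 0.1`, a union bound
over the polynomially many triples `(m, j, k)` finishes the proof.
-/

open scoped Classical
open Finset

noncomputable section

/-- Score of aligning two letters (`true` = 1, `false` = 0):
`s(1,1) = S`, `s(0,0) = 1`, `s(1,0) = s(0,1) = 0`. -/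
def letterScore (S : ℝ) (a b : Bool) : ℝ :=
  if a = true ∧ b = true then S else if a = false ∧ b = false then 1 else 0

/-- Score of the alignment `(π, ν)` of the strings `x` and `y`. -/
def alignScore (S : ℝ) {n k : ℕ} (x y : Fin n → Bool) (π ν : Fin k → Fin n) : ℝ :=
  ∑ i : Fin k, letterScore S (x (π i)) (y (ν i))

/-- The optimal alignment score of two binary strings of length `n`. -/
def optScore (S : ℝ) (n : ℕ) (x y : Fin n → Bool) : ℝ :=
  sSup {r : ℝ | ∃ (k : ℕ) (π ν : Fin k → Fin n),
    StrictMono π ∧ StrictMono ν ∧ r = alignScore S x y π ν}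

/-- The string `x`, extended by the (neutral) letter `true` outside `[0, n)`. -/
def ext {n : ℕ} (x : Fin n → Bool) : ℕ → Bool :=
  fun j => if h : j < n then x ⟨j, h⟩ else true

/-- `blockStart x ℓ i` holds iff a block of zeros of length `ℓ` of `x` starts at position `i`:
positions `i, …, i+ℓ-1` carry zeros, and they are delimited by ones (or the ends of `x`). -/
def blockStart {n : ℕ} (x : Fin n → Bool) (ℓ i : ℕ) : Prop :=
  0 < ℓ ∧ i + ℓ ≤ n ∧ (∀ j ∈ Finset.Ico i (i + ℓ), ext x j = false) ∧
    (i = 0 ∨ ext x (i - 1) = true) ∧ ext x (i + ℓ) = true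

/-- The set of starting positions of blocks of zeros of length `ℓ` in `x`. -/
def starts {n : ℕ} (x : Fin n → Bool) (ℓ : ℕ) : Finset ℕ :=
  (Finset.range n).filter fun i => blockStart x ℓ i

/-- The number of blocks of zeros of length `ℓ` in `x`. -/
def numBlocks {n : ℕ} (x : Fin n → Bool) (ℓ : ℕ) : ℕ := (starts x ℓ).card

/-- Probability of an event under a uniform random binary string of length `n`. -/
def probX (n : ℕ) (E : (Fin n → Bool) → Prop) : ℝ :=
  ((Finset.univ.filter E).card : ℝ) / 2 ^ n

/-- Probability of an event under two independent uniform random binary strings of length `n`. -/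
def probXY (n : ℕ) (E : (Fin n → Bool) → (Fin n → Bool) → Prop) : ℝ :=
  ((Finset.univ.filter (fun p : (Fin n → Bool) × (Fin n → Bool) => E p.1 p.2)).card : ℝ) / 4 ^ n

/-- Expectation of a function of a uniform random binary string of length `n`. -/
def expX (n : ℕ) (f : (Fin n → Bool) → ℝ) : ℝ := (∑ x, f x) / 2 ^ n

/-- Expectation of a function of two independent uniform random binary strings of length `n`. -/
def expXY (n : ℕ) (f : (Fin n → Bool) → (Fin n → Bool) → ℝ) : ℝ := (∑ x, ∑ y, f x y) / 4 ^ n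

/-- The string obtained from `x` by removing one zero from the block of zeros starting at `p`
and inserting one extra zero into the block of zeros starting at `q`. -/
def modifyStr {n : ℕ} (x : Fin n → Bool) (p q : ℕ) : Fin n → Bool :=
  fun i => (((List.ofFn x).eraseIdx p).insertIdx (if p < q then q - 1 else q) false).getD i false

/-- The Euclidean norm on `ℝ⁴`. -/
def enorm4 (v : Fin 4 → ℝ) : ℝ := Real.sqrt (∑ i, v i ^ 2)

/-- A vector of `ℝ⁴` all of whose coordinates are natural numbers. -/
def isNatVec (v : Fin 4 → ℝ) : Prop := ∀ i, ∃ k : ℕ, v i = (k : ℝ)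

/-- `H_a = {(n₁, 0, n₄, n₅) | n₁, n₄, n₅ ∈ ℕ}`. -/
def Ha : Set (Fin 4 → ℝ) := {v | isNatVec v ∧ v 1 = 0}

/-- `H_b = {(n₁, n₂, 0, n₅) | n₁, n₂, n₅ ∈ ℕ}`. -/
def Hb : Set (Fin 4 → ℝ) := {v | isNatVec v ∧ v 2 = 0}

/-- The direction `e⃗ = (-1, 1, 1, -1)`. -/
def evec : Fin 4 → ℝ := ![-1, 1, 1, -1]

/-- The block lengths `1, 2, 4, 5` under consideration. -/
def blockLen : Fin 4 → ℕ := ![1, 2, 4, 5]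

/-- The vector `N⃗(x) = (N₁(x), N₂(x), N₄(x), N₅(x))` of numbers of blocks of zeros of
lengths `1, 2, 4, 5` of `x`, as a vector of `ℝ⁴`. -/
def NvecR {n : ℕ} (x : Fin n → Bool) : Fin 4 → ℝ := fun i => (numBlocks x (blockLen i) : ℝ)

/-- `μ⃗ = (E[N₁], E[N₂], E[N₄], E[N₅])` for a uniform random binary string of length `n`. -/
def muVec (n : ℕ) : Fin 4 → ℝ := fun i => expX n (fun x => (numBlocks x (blockLen i) : ℝ))

/-- The set `Iⁿ = C·((H_a ∪ H_b) ∩ B(0, √n)) + C·{k e⃗ | k ∈ [-√n, √n]} + μ⃗`. -/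
def Iset (n : ℕ) (C : ℝ) : Set (Fin 4 → ℝ) :=
  {w | ∃ v ∈ Ha ∪ Hb, enorm4 v ≤ Real.sqrt n ∧
    ∃ k : ℝ, |k| ≤ Real.sqrt n ∧ w = C • v + C • (k • evec) + muVec n}

open MeasureTheory ProbabilityTheory Filter

/-- The number of pairs `(p, q)`, with `p` the start of a block of zeros of length 5 of `x` and
`q` the start of a block of zeros of length 1 of `x`, whose associated modification of `x`
(removing a zero from the first block and adding it to the second) produces `z`. -/
def pairCount {n : ℕ} (x z : Fin n → Bool) : ℕ :=
  (((starts x 5) ×ˢ (starts x 1)).filter fun pq => modifyStr x pq.1 pq.2 = z).card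

/-- The one-step transition probability of the chain: from `x`, remove a zero from a uniformly
chosen block of zeros of length 5 and add it to a uniformly chosen block of zeros of length 1. -/
def transProb {n : ℕ} (x z : Fin n → Bool) : ℝ :=
  if (starts x 5).Nonempty ∧ (starts x 1).Nonempty then
    (pairCount x z : ℝ) / (((starts x 5).card : ℝ) * ((starts x 1).card : ℝ))
  else if z = x then 1 else 0

/-- The finset of binary strings of length `n` with block-count vector `m : Fin 4 → ℕ`
(blocks of zeros of lengths `1, 2, 4, 5`). -/
def strSetV (n : ℕ) (m : Fin 4 → ℕ) : Finset (Fin n → Bool) :=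
  Finset.univ.filter fun x => ∀ i, numBlocks x (blockLen i) = m i

/-- A vector of `ℕ⁴` viewed in `ℝ⁴`. -/
def natVec (m : Fin 4 → ℕ) : Fin 4 → ℝ := fun i => (m i : ℝ)

/-! ### Strings as gap lists -/

/-- The lengths (possibly `0`) of the maximal runs of zeros before the first one, between
consecutive ones and after the last one of a binary word. -/
def gaps : List Bool → List ℕ
  | [] => [0]
  | true :: l => 0 :: gaps l
  | false :: l => (gaps l).modifyHead (· + 1)

/-- The binary word with a prescribed (nonempty) gap list. -/
def ofGaps : List ℕ → List Bool
  | [] => []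
  | [a] => List.replicate a false
  | a :: b :: t => List.replicate a false ++ true :: ofGaps (b :: t)

/-- The position in the word at which the gap number `i` starts. -/
def gapPos (a : List ℕ) (i : ℕ) : ℕ := (a.take i).sum + i

/-- The indices of the gaps of length `ℓ`. -/
def indicesOf (a : List ℕ) (ℓ : ℕ) : Finset ℕ :=
  (Finset.range a.length).filter fun i => a[i]? = some ℓ

lemma mem_indicesOf {a : List ℕ} {ℓ i : ℕ} : i ∈ indicesOf a ℓ ↔ a[i]? = some ℓ := by
  rw [indicesOf, Finset.mem_filter, Finset.mem_range]
  exact ⟨fun h => h.2, fun h => ⟨(List.getElem?_eq_some_iff.1 h).1, h⟩⟩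

lemma gaps_ne_nil (l : List Bool) : gaps l ≠ [] := by
  induction l with
  | nil => simp [gaps]
  | cons b l ih => cases b <;> simp [gaps, ih]

lemma exists_gaps_cons (l : List Bool) : ∃ h t, gaps l = h :: t :=
  List.exists_cons_of_ne_nil (gaps_ne_nil l)

lemma gaps_append_true_cons (l l' : List Bool) : gaps (l ++ true :: l') = gaps l ++ gaps l' := by
  induction l with
  | nil => simp [gaps]
  | cons b l ih =>
    obtain ⟨h, t, e⟩ := exists_gaps_cons l
    cases b <;> simp [gaps, ih, e]

lemma gaps_replicate (a : ℕ) : gaps (List.replicate a false) = [a] := by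
  induction a with
  | zero => simp [gaps]
  | succ a ih => simp [List.replicate_succ, gaps, ih]

lemma gaps_ofGaps : ∀ A : List ℕ, A ≠ [] → gaps (ofGaps A) = A
  | [], h => absurd rfl h
  | [a], _ => gaps_replicate a
  | a :: b :: t, _ => by
    rw [ofGaps, gaps_append_true_cons, gaps_replicate, gaps_ofGaps (b :: t) (by simp)]; simp

lemma ofGaps_append_cons (A : List ℕ) (hA : A ≠ []) (b : ℕ) (B : List ℕ) :
    ofGaps (A ++ b :: B) = ofGaps A ++ true :: ofGaps (b :: B) := by
  induction A with
  | nil => exact absurd rfl hA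
  | cons a A ih =>
    cases A with
    | nil => simp [ofGaps]
    | cons c A => simp only [List.cons_append, ofGaps, List.append_assoc] at ih ⊢; simp [ih]

lemma ofGaps_succ (h : ℕ) (t : List ℕ) : ofGaps ((h + 1) :: t) = false :: ofGaps (h :: t) := by
  cases t <;> simp [ofGaps, List.replicate_succ]

lemma ofGaps_gaps (l : List Bool) : ofGaps (gaps l) = l := by
  induction l with
  | nil => simp [gaps, ofGaps]
  | cons b l ih =>
    obtain ⟨h, t, e⟩ := exists_gaps_cons l
    cases b
    · simp only [gaps, e, List.modifyHead_cons, ofGaps_succ]; rw [← e, ih]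
    · simp only [gaps, e, ofGaps]; rw [← e, ih]; simp

lemma gaps_injective : Function.Injective gaps := fun l l' h => by
  rw [← ofGaps_gaps l, h, ofGaps_gaps]

lemma sum_gaps (l : List Bool) : (gaps l).sum = l.count false := by
  induction l with
  | nil => simp [gaps]
  | cons b l ih =>
    obtain ⟨h, t, e⟩ := exists_gaps_cons l
    cases b <;> simp [gaps, e] at ih ⊢ <;> omega

lemma length_gaps (l : List Bool) : (gaps l).length = l.count true + 1 := by
  induction l with
  | nil => simp [gaps]
  | cons b l ih => cases b <;> simp [gaps, ih]

lemma sum_add_length_gaps (l : List Bool) : (gaps l).sum + (gaps l).length = l.length + 1 := by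
  rw [sum_gaps, length_gaps, ← List.count_false_add_count_true l]; ring

lemma length_ofGaps (A : List ℕ) (hA : A ≠ []) : (ofGaps A).length + 1 = A.sum + A.length := by
  have := sum_add_length_gaps (ofGaps A)
  rw [gaps_ofGaps A hA] at this; omega

lemma count_false_ofGaps (A : List ℕ) (hA : A ≠ []) : (ofGaps A).count false = A.sum := by
  rw [← sum_gaps, gaps_ofGaps A hA]

lemma gapPos_zero (a : List ℕ) : gapPos a 0 = 0 := by simp [gapPos]

lemma gapPos_cons_succ (h : ℕ) (t : List ℕ) (i : ℕ) :
    gapPos (h :: t) (i + 1) = gapPos t i + (h + 1) := by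
  simp [gapPos]; ring

lemma gapPos_strictMono (a : List ℕ) : StrictMono (gapPos a) := by
  apply strictMono_nat_of_lt_succ
  intro i
  have : (a.take i).sum ≤ (a.take (i + 1)).sum := by
    rw [List.take_add_one, List.sum_append]; omega
  unfold gapPos; omega

lemma gaps_eraseIdx (l : List Bool) (i v : ℕ) (h : (gaps l)[i]? = some (v + 1)) :
    gaps (l.eraseIdx (gapPos (gaps l) i)) = (gaps l).set i v := by
  induction l generalizing i with
  | nil => cases i <;> simp [gaps] at h
  | cons b l ih =>
    obtain ⟨g, t, e⟩ := exists_gaps_cons l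
    cases b
    · cases i with
      | zero => simpa [gaps, e, gapPos_zero] using h
      | succ i =>
        have h' : (gaps l)[i + 1]? = some (v + 1) := by simpa [gaps, e] using h
        have := ih _ h'
        simp only [gaps, e, List.modifyHead_cons, gapPos_cons_succ] at this ⊢
        rw [← add_assoc, List.eraseIdx_cons_succ, gaps, this]; simp
    · cases i with
      | zero => simp [gaps] at h
      | succ i =>
        have h' : (gaps l)[i]? = some (v + 1) := by simpa [gaps] using h
        simp only [gaps, gapPos_cons_succ, List.eraseIdx_cons_succ, ih _ h', zero_add,
          List.set_cons_succ]

lemma gaps_insertIdx (l : List Bool) (i v : ℕ) (h : (gaps l)[i]? = some v) :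
    gaps (l.insertIdx (gapPos (gaps l) i) false) = (gaps l).set i (v + 1) := by
  induction l generalizing i with
  | nil => cases i <;> simp_all [gaps, gapPos, eq_comm]
  | cons b l ih =>
    obtain ⟨g, t, e⟩ := exists_gaps_cons l
    cases b
    · cases i with
      | zero => simpa [gaps, e, gapPos_zero] using h
      | succ i =>
        have h' : (gaps l)[i + 1]? = some v := by simpa [gaps, e] using h
        have := ih _ h'
        simp only [gaps, e, List.modifyHead_cons, gapPos_cons_succ] at this ⊢
        rw [← add_assoc, List.insertIdx_succ_cons, gaps, this]; simp
    · cases i with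
      | zero => simpa [gaps, gapPos_zero, eq_comm] using h
      | succ i =>
        have h' : (gaps l)[i]? = some v := by simpa [gaps] using h
        simp only [gaps, gapPos_cons_succ, List.insertIdx_succ_cons, ih _ h', zero_add,
          List.set_cons_succ]

lemma gaps_getElem?_zero_iff (l : List Bool) (ℓ : ℕ) : (gaps l)[0]? = some ℓ ↔
    ℓ ≤ l.length ∧ (∀ j, j < ℓ → l.getD j true = false) ∧ l.getD ℓ true = true := by
  induction l generalizing ℓ with
  | nil =>
    simp only [gaps, List.getElem?_cons_zero, Option.some.injEq, List.length_nil, Nat.le_zero_eq]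
    refine ⟨fun h => ?_, fun h => h.1.symm⟩
    subst h; simp
  | cons b l ih =>
    obtain ⟨g, t, e⟩ := exists_gaps_cons l
    cases b
    · cases ℓ with
      | zero => simp [gaps, e]
      | succ ℓ =>
        have := ih ℓ
        simp only [e, gaps, List.modifyHead_cons, List.getElem?_cons_zero, Option.some.injEq,
          add_left_inj, List.length_cons, add_le_add_iff_right, List.getD_cons_succ] at this ⊢
        rw [this]
        refine and_congr_right fun _ => and_congr_left fun _ => ⟨fun h j hj => ?_, fun h j hj => ?_⟩
        · cases j with
          | zero => simp
          | succ j => simpa using h j (by omega)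
        · simpa using h (j + 1) (by omega)
    · cases ℓ with
      | zero => simp [gaps]
      | succ ℓ =>
        simp only [gaps, List.getElem?_cons_zero, Option.some.injEq]
        refine ⟨fun h => by omega, fun h => ?_⟩
        have := h.2.1 0 (by omega)
        simp at this

/-- The condition `blockStart` for words given as lists. -/
def IsZeroBlock (l : List Bool) (ℓ p : ℕ) : Prop :=
  p + ℓ ≤ l.length ∧ (∀ j, p ≤ j → j < p + ℓ → l.getD j true = false) ∧
    (p = 0 ∨ l.getD (p - 1) true = true) ∧ l.getD (p + ℓ) true = true

lemma isZeroBlock_cons_succ (b : Bool) (l : List Bool) (ℓ p : ℕ) :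
    IsZeroBlock (b :: l) ℓ (p + 1) ↔ IsZeroBlock l ℓ p ∧ (p = 0 → b = true) := by
  have zeros : (∀ j, p + 1 ≤ j → j < p + 1 + ℓ → (b :: l).getD j true = false) ↔
      (∀ j, p ≤ j → j < p + ℓ → l.getD j true = false) := by
    refine ⟨fun h j h1 h2 => by simpa using h (j + 1) (by omega) (by omega), fun h j h1 h2 => ?_⟩
    cases j with
    | zero => omega
    | succ j => simpa using h j (by omega) (by omega)
  unfold IsZeroBlock
  rw [zeros, add_right_comm p 1 ℓ]
  cases p <;> simp only [List.getD_cons_succ, List.length_cons, add_le_add_iff_right,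
    add_tsub_cancel_right, zero_tsub, reduceCtorEq, false_or, true_or, true_and, zero_add,
    false_imp_iff, forall_const, and_true]
  tauto

lemma isZeroBlock_zero_iff (l : List Bool) (ℓ : ℕ) :
    IsZeroBlock l ℓ 0 ↔ ∃ i, (gaps l)[i]? = some ℓ ∧ gapPos (gaps l) i = 0 := by
  have head : IsZeroBlock l ℓ 0 ↔ (gaps l)[0]? = some ℓ := by
    rw [gaps_getElem?_zero_iff]; simp [IsZeroBlock]
  rw [head]
  refine ⟨fun h => ⟨0, h, gapPos_zero _⟩, ?_⟩
  rintro ⟨i, h, hi⟩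
  obtain rfl : i = 0 := by unfold gapPos at hi; omega
  exact h

lemma exists_gap_cons_iff (b : Bool) (l : List Bool) (ℓ p : ℕ) :
    (∃ i, (gaps (b :: l))[i]? = some ℓ ∧ gapPos (gaps (b :: l)) i = p + 1) ↔
      (∃ i, (gaps l)[i]? = some ℓ ∧ gapPos (gaps l) i = p) ∧ (p = 0 → b = true) := by
  obtain ⟨g, t, e⟩ := exists_gaps_cons l
  cases b
  · simp only [e, gaps, List.modifyHead_cons]
    constructor
    · rintro ⟨_ | i, h, hi⟩
      · simp [gapPos_zero] at hi
      · rw [gapPos_cons_succ] at hi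
        exact ⟨⟨i + 1, by simpa using h, by rw [gapPos_cons_succ]; omega⟩, fun _ => by omega⟩
    · rintro ⟨⟨_ | i, h, hi⟩, hp⟩
      · exact absurd (hp (by rw [← hi, gapPos_zero])) (by simp)
      · refine ⟨i + 1, by simpa using h, ?_⟩
        rw [gapPos_cons_succ] at hi ⊢; omega
  · simp only [gaps]
    constructor
    · rintro ⟨_ | i, h, hi⟩
      · simp [gapPos_zero] at hi
      · rw [gapPos_cons_succ] at hi
        exact ⟨⟨i, by simpa using h, by omega⟩, fun _ => trivial⟩
    · rintro ⟨⟨i, h, hi⟩, -⟩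
      exact ⟨i + 1, by simpa using h, by rw [gapPos_cons_succ]; omega⟩

lemma isZeroBlock_iff_exists_gap (l : List Bool) (ℓ p : ℕ) :
    IsZeroBlock l ℓ p ↔ ∃ i, (gaps l)[i]? = some ℓ ∧ gapPos (gaps l) i = p := by
  induction l generalizing p with
  | nil =>
    cases p with
    | zero => exact isZeroBlock_zero_iff _ _
    | succ p =>
      refine ⟨fun h => absurd h.1 (by simp), ?_⟩
      rintro ⟨_ | i, h, hi⟩ <;> simp [gaps, gapPos] at h hi
  | cons b l ih =>
    cases p with
    | zero => exact isZeroBlock_zero_iff _ _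
    | succ p => rw [isZeroBlock_cons_succ, ih, exists_gap_cons_iff]

/-- The gap list of a string indexed by `Fin n`. -/
def gapsOf {n : ℕ} (x : Fin n → Bool) : List ℕ := gaps (List.ofFn x)

lemma ext_eq_getD {n : ℕ} (x : Fin n → Bool) (j : ℕ) :
    _root_.ext x j = (List.ofFn x).getD j true := by
  unfold _root_.ext
  split_ifs with h
  · rw [List.getD_eq_getElem _ _ (by simpa using h)]; simp
  · rw [List.getD_eq_default _ _ (by simpa using h)]

lemma starts_eq_image_gapPos {n : ℕ} (x : Fin n → Bool) (ℓ : ℕ) (hℓ : 0 < ℓ) :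
    starts x ℓ = (indicesOf (gapsOf x) ℓ).image (gapPos (gapsOf x)) := by
  ext1 p
  have h1 : p ∈ starts x ℓ ↔ IsZeroBlock (List.ofFn x) ℓ p := by
    simp only [starts, blockStart, IsZeroBlock, ext_eq_getD, Finset.mem_filter, Finset.mem_range,
      Finset.mem_Ico, List.length_ofFn]
    constructor
    · rintro ⟨-, -, h2, h3, h4⟩; exact ⟨h2, fun j hj hj' => h3 j ⟨hj, hj'⟩, h4⟩
    · rintro ⟨h2, h3, h4⟩; exact ⟨by omega, hℓ, h2, fun j hj => h3 j hj.1 hj.2, h4⟩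
  rw [h1, isZeroBlock_iff_exists_gap]
  simp only [Finset.mem_image, mem_indicesOf, gapsOf]

lemma sum_starts_eq_sum_indicesOf {n : ℕ} (x : Fin n → Bool) (ℓ : ℕ) (hℓ : 0 < ℓ) (f : ℕ → ℝ) :
    ∑ p ∈ starts x ℓ, f p = ∑ i ∈ indicesOf (gapsOf x) ℓ, f (gapPos (gapsOf x) i) := by
  rw [starts_eq_image_gapPos x ℓ hℓ, Finset.sum_image]
  exact fun i _ j _ h => (gapPos_strictMono _).injective h

lemma card_indicesOf (a : List ℕ) (ℓ : ℕ) : (indicesOf a ℓ).card = a.count ℓ := by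
  induction a with
  | nil => simp [indicesOf]
  | cons b a ih =>
    rw [indicesOf, Finset.card_filter] at ih ⊢
    rw [List.length_cons, Finset.sum_range_succ', List.count_cons]
    simp only [List.getElem?_cons_succ, List.getElem?_cons_zero, ih, Option.some.injEq, beq_iff_eq]

lemma numBlocks_eq_count {n : ℕ} (x : Fin n → Bool) (ℓ : ℕ) (hℓ : 0 < ℓ) :
    numBlocks x ℓ = (gapsOf x).count ℓ := by
  rw [numBlocks, starts_eq_image_gapPos x ℓ hℓ,
    Finset.card_image_of_injective _ (gapPos_strictMono _).injective, card_indicesOf]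

lemma ofFn_modifyStr {n : ℕ} (x : Fin n → Bool) (p q : ℕ) (hp : p < n) (hq : q ≤ n) :
    List.ofFn (modifyStr x p q) =
      ((List.ofFn x).eraseIdx p).insertIdx (if p < q then q - 1 else q) false := by
  have hl : (((List.ofFn x).eraseIdx p).insertIdx (if p < q then q - 1 else q) false).length =
      n := by
    rw [List.length_insertIdx, List.length_eraseIdx]
    simp only [List.length_ofFn, hp, if_true]
    split_ifs <;> omega
  apply List.ext_getElem
  · rw [hl]; simp
  · intro i h1 h2
    simp only [List.getElem_ofFn, modifyStr]
    rw [List.getD_eq_getElem _ _ h2]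

lemma sum_take_set (a : List ℕ) (i k v w : ℕ) (h : a[i]? = some v) :
    ((a.set i w).take k).sum + (if i < k then v else 0) =
      (a.take k).sum + (if i < k then w else 0) := by
  induction a generalizing i k with
  | nil => simp at h
  | cons b a ih =>
    cases k with
    | zero => simp
    | succ k =>
      cases i with
      | zero => simp at h; simp [h]; ring
      | succ i =>
        have := ih i k (by simpa using h)
        simp only [List.set_cons_succ, List.take_succ_cons, List.sum_cons, add_lt_add_iff_right]
        omega

lemma sum_set_add (A : List ℕ) (i v w : ℕ) (h : A[i]? = some v) :
    (A.set i w).sum + v = A.sum + w := by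
  simpa [(List.getElem?_eq_some_iff.1 h).1, List.take_of_length_le] using
    sum_take_set A i A.length v w h

lemma eq_singleton_of_getElem? {A : List ℕ} {i v : ℕ} (h : A[i]? = some v) (hA : A.length = 1) :
    A = [v] := by
  obtain ⟨b, rfl⟩ := List.length_eq_one_iff.1 hA
  cases i <;> simp_all

lemma gapPos_add_le {n : ℕ} {x : Fin n → Bool} {i ℓ : ℕ} (hi : (gapsOf x)[i]? = some ℓ) :
    gapPos (gapsOf x) i + ℓ ≤ n := by
  simpa [gapsOf] using ((isZeroBlock_iff_exists_gap (List.ofFn x) ℓ _).2 ⟨i, hi, rfl⟩).1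

lemma indicesOf_ne {a : List ℕ} {ℓ ℓ' i k : ℕ} (hℓ : ℓ ≠ ℓ') (hi : i ∈ indicesOf a ℓ)
    (hk : k ∈ indicesOf a ℓ') : i ≠ k := by
  rintro rfl
  rw [mem_indicesOf] at hi hk
  exact hℓ (Option.some.inj (hi.symm.trans hk))

lemma gapsOf_modifyStr {n : ℕ} (x : Fin n → Bool) (i k : ℕ) (hi : i ∈ indicesOf (gapsOf x) 5)
    (hk : k ∈ indicesOf (gapsOf x) 1) :
    gapsOf (modifyStr x (gapPos (gapsOf x) i) (gapPos (gapsOf x) k)) =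
      ((gapsOf x).set i 4).set k 2 := by
  have hne : i ≠ k := indicesOf_ne (by norm_num) hi hk
  rw [mem_indicesOf] at hi hk
  have pos_i := gapPos_add_le hi
  have pos_k := gapPos_add_le hk
  simp only [gapsOf] at hi hk pos_i pos_k ⊢
  set l := List.ofFn x with hl
  have erased := gaps_eraseIdx l i 4 hi
  have erased_k : (gaps (l.eraseIdx (gapPos (gaps l) i)))[k]? = some 1 := by
    rw [erased, List.getElem?_set_ne hne]; exact hk
  rw [ofFn_modifyStr x _ _ (by omega) (by omega), ← hl, ← erased,
    ← gaps_insertIdx _ k 1 erased_k]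
  congr 2
  -- Erasing a zero from gap `i` shifts the start of gap `k` by one exactly if `i < k`.
  have shift := sum_take_set (gaps l) i k 5 4 hi
  simp only [(gapPos_strictMono (gaps l)).lt_iff_lt, erased]
  unfold gapPos
  split_ifs at shift ⊢ with h <;> omega

/-! ### Optimal alignments and segmentations of gap lists -/

/-- `r` is the score of some alignment of the words `x` and `y`, an alignment being a pair of
subwords of equal length. -/
def IsAlignScore (S : ℝ) (x y : List Bool) (r : ℝ) : Prop :=
  ∃ u v : List Bool, u.Sublist x ∧ v.Sublist y ∧ u.length = v.length ∧
    r = (List.zipWith (letterScore S) u v).sum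

lemma ofFn_comp_sublist {α : Type*} {n k : ℕ} (x : Fin n → α) {π : Fin k → Fin n}
    (hπ : StrictMono π) : (List.ofFn (x ∘ π)).Sublist (List.ofFn x) := by
  rw [List.sublist_iff_exists_fin_orderEmbedding_get_eq]
  refine ⟨OrderEmbedding.ofStrictMono
    (fun i => Fin.cast List.length_ofFn.symm (π (Fin.cast List.length_ofFn i))) ?_, ?_⟩
  · intro i j hij
    refine hπ (?_ : Fin.cast List.length_ofFn i < Fin.cast (List.length_ofFn (f := x ∘ π)) j)
    exact hij
  · intro i
    rw [List.get_ofFn, List.get_ofFn]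
    rfl

lemma exists_strictMono_of_sublist_ofFn {α : Type*} {n k : ℕ} {x : Fin n → α} {u : List α}
    (hu : u.Sublist (List.ofFn x)) (hk : u.length = k) :
    ∃ π : Fin k → Fin n, StrictMono π ∧ u = List.ofFn (x ∘ π) := by
  subst hk
  obtain ⟨f, hf⟩ := List.sublist_iff_exists_fin_orderEmbedding_get_eq.1 hu
  refine ⟨fun i => Fin.cast List.length_ofFn (f i), fun i j hij => f.strictMono hij, ?_⟩
  refine List.ext_getElem (by simp) fun i h1 _ => ?_
  have := hf ⟨i, h1⟩
  rw [List.get_ofFn] at this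
  rw [List.getElem_ofFn]
  exact this

lemma alignScore_eq_sum_zipWith {n k : ℕ} (S : ℝ) (x y : Fin n → Bool) (π ν : Fin k → Fin n) :
    alignScore S x y π ν =
      (List.zipWith (letterScore S) (List.ofFn (x ∘ π)) (List.ofFn (y ∘ ν))).sum := by
  have : List.zipWith (letterScore S) (List.ofFn (x ∘ π)) (List.ofFn (y ∘ ν)) =
      List.ofFn (fun i => letterScore S (x (π i)) (y (ν i))) := by
    apply List.ext_getElem <;> simp
  rw [this, List.sum_ofFn, alignScore]

lemma exists_alignScore_eq_iff {n : ℕ} (S : ℝ) (x y : Fin n → Bool) (r : ℝ) :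
    (∃ (k : ℕ) (π ν : Fin k → Fin n), StrictMono π ∧ StrictMono ν ∧ r = alignScore S x y π ν) ↔
      IsAlignScore S (List.ofFn x) (List.ofFn y) r := by
  constructor
  · rintro ⟨k, π, ν, hπ, hν, rfl⟩
    exact ⟨_, _, ofFn_comp_sublist x hπ, ofFn_comp_sublist y hν, by simp,
      alignScore_eq_sum_zipWith S x y π ν⟩
  · rintro ⟨u, v, hu, hv, hl, rfl⟩
    obtain ⟨π, hπ, eu⟩ := exists_strictMono_of_sublist_ofFn hu rfl
    obtain ⟨ν, hν, ev⟩ := exists_strictMono_of_sublist_ofFn hv hl.symm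
    exact ⟨_, π, ν, hπ, hν, by rw [alignScore_eq_sum_zipWith, ← eu, ← ev]⟩

lemma finite_setOf_alignScore {n : ℕ} (S : ℝ) (x y : Fin n → Bool) :
    {r : ℝ | ∃ (k : ℕ) (π ν : Fin k → Fin n),
      StrictMono π ∧ StrictMono ν ∧ r = alignScore S x y π ν}.Finite := by
  have finite_union : (⋃ k ∈ Set.Iic n, Set.range
      (fun q : (Fin k → Fin n) × (Fin k → Fin n) => alignScore S x y q.1 q.2)).Finite :=
    (Set.finite_Iic n).biUnion fun k _ => Set.finite_range _
  refine finite_union.subset ?_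
  rintro r ⟨k, π, ν, hπ, -, rfl⟩
  simp only [Set.mem_iUnion, Set.mem_range]
  exact ⟨k, by simpa using Fintype.card_le_of_injective π hπ.injective, (π, ν), rfl⟩

lemma IsAlignScore.le_optScore {n : ℕ} {S : ℝ} {x y : Fin n → Bool} {r : ℝ}
    (h : IsAlignScore S (List.ofFn x) (List.ofFn y) r) : r ≤ optScore S n x y :=
  le_csSup (finite_setOf_alignScore S x y).bddAbove ((exists_alignScore_eq_iff S x y r).2 h)

lemma isAlignScore_optScore {n : ℕ} (S : ℝ) (x y : Fin n → Bool) :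
    IsAlignScore S (List.ofFn x) (List.ofFn y) (optScore S n x y) := by
  rw [← exists_alignScore_eq_iff]
  refine Set.Nonempty.csSup_mem ?_ (finite_setOf_alignScore S x y)
  exact ⟨_, 0, Fin.elim0, Fin.elim0, fun i => i.elim0, fun i => i.elim0, rfl⟩

lemma IsAlignScore.append {S : ℝ} {x y x' y' : List Bool} {r r' : ℝ} (h : IsAlignScore S x y r)
    (h' : IsAlignScore S x' y' r') : IsAlignScore S (x ++ x') (y ++ y') (r + r') := by
  obtain ⟨u, v, hu, hv, hl, rfl⟩ := h
  obtain ⟨u', v', hu', hv', hl', rfl⟩ := h'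
  refine ⟨u ++ u', v ++ v', hu.append hu', hv.append hv', by simp [hl, hl'], ?_⟩
  rw [List.zipWith_append hl, List.sum_append]

lemma isAlignScore_mul_letterScore (S : ℝ) (b : Bool) (k : ℕ) (x y : List Bool)
    (hx : k ≤ x.count b) (hy : k ≤ y.count b) : IsAlignScore S x y (k * letterScore S b b) := by
  refine ⟨List.replicate k b, List.replicate k b, List.replicate_sublist_iff.2 hx,
    List.replicate_sublist_iff.2 hy, rfl, ?_⟩
  rw [List.zipWith_replicate]; simp

lemma letterScore_true_true (S : ℝ) : letterScore S true true = S := by simp [letterScore]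

lemma letterScore_false_false (S : ℝ) : letterScore S false false = 1 := by simp [letterScore]

lemma letterScore_le_min_count (S : ℝ) {b c : Bool} {r q : List Bool} (hb : b ∈ r) (hc : c ∈ q)
    (hbc : ¬ (b = true ∧ c = true)) :
    letterScore S b c ≤ (min (r.count false) (q.count false) : ℕ) := by
  unfold letterScore
  rw [if_neg hbc]
  split_ifs with h
  · obtain ⟨rfl, rfl⟩ := h
    exact_mod_cast le_min (List.count_pos_iff.2 hb) (List.count_pos_iff.2 hc)
  · positivity

lemma exists_gaps_append_eq (r : List Bool) {l : List Bool} {A A' : List ℕ} (hA : A ≠ [])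
    (h : gaps l = A ++ A') :
    ∃ B : List ℕ, B ≠ [] ∧ B.sum = A.sum + r.count false ∧ gaps (r ++ l) = B ++ A' := by
  induction r with
  | nil => exact ⟨A, hA, by simp, by simpa using h⟩
  | cons b r ih =>
    obtain ⟨B, hB, hs, hg⟩ := ih
    cases b
    · obtain ⟨c, B, rfl⟩ := List.exists_cons_of_ne_nil hB
      refine ⟨(c + 1) :: B, by simp, ?_, by simp [gaps, hg]⟩
      rw [List.sum_cons] at hs ⊢
      rw [List.count_cons_self]
      omega
    · exact ⟨0 :: B, by simp, by simp [hs], by simp [gaps, hg]⟩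

/-- A list of segments, each consisting of consecutive gaps of a word `x` and consecutive gaps of a
word `y`. It encodes an alignment of the two words: the ones separating consecutive segments are
matched, and inside each segment as many zeros as possible. -/
abbrev Segmentation : Type := List (List ℕ × List ℕ)

namespace Segmentation

/-- The gap list of the first word. -/
def xGaps (sg : Segmentation) : List ℕ := (sg.map Prod.fst).flatten

/-- The gap list of the second word. -/
def yGaps (sg : Segmentation) : List ℕ := (sg.map Prod.snd).flatten

/-- The number of zeros aligned inside the segments. -/
def zeroScore (sg : Segmentation) : ℕ := (sg.map fun s => min s.1.sum s.2.sum).sum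

/-- The score of the alignment encoded by a nonempty segmentation. -/
def totalScore (S : ℝ) (sg : Segmentation) : ℝ := sg.zeroScore + S * ((sg.length : ℝ) - 1)

/-- `sg` cuts the gap lists `a` and `g` into equally many nonempty consecutive segments. -/
structure Cuts (sg : Segmentation) (a g : List ℕ) : Prop where
  ne_nil : sg ≠ []
  segment_ne_nil : ∀ s ∈ sg, s.1 ≠ [] ∧ s.2 ≠ []
  xGaps_eq : sg.xGaps = a
  yGaps_eq : sg.yGaps = g

variable {sg : Segmentation} {a g : List ℕ} {x y : List Bool}

lemma xGaps_cons (s : List ℕ × List ℕ) (t : Segmentation) : xGaps (s :: t) = s.1 ++ xGaps t := by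
  simp [xGaps]

lemma yGaps_cons (s : List ℕ × List ℕ) (t : Segmentation) : yGaps (s :: t) = s.2 ++ yGaps t := by
  simp [yGaps]

lemma zeroScore_cons (s : List ℕ × List ℕ) (t : Segmentation) :
    zeroScore (s :: t) = min s.1.sum s.2.sum + zeroScore t := by
  simp [zeroScore]

lemma zeroScore_le_sum_xGaps (sg : Segmentation) : sg.zeroScore ≤ sg.xGaps.sum := by
  induction sg with
  | nil => simp [zeroScore]
  | cons s t ih => rw [zeroScore_cons, xGaps_cons, List.sum_append]; omega

lemma cuts_singleton {A G : List ℕ} (hA : A ≠ []) (hG : G ≠ []) : Cuts [(A, G)] A G :=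
  ⟨by simp, by simp [hA, hG], by simp [xGaps], by simp [yGaps]⟩

lemma Cuts.cons {A G : List ℕ} (hA : A ≠ []) (hG : G ≠ []) (h : sg.Cuts a g) :
    Cuts ((A, G) :: sg) (A ++ a) (G ++ g) :=
  ⟨by simp, List.forall_mem_cons.2 ⟨⟨hA, hG⟩, h.segment_ne_nil⟩, by rw [xGaps_cons, h.xGaps_eq],
    by rw [yGaps_cons, h.yGaps_eq]⟩

/-- Letters put in front of the two words can be absorbed by the first segment. -/
lemma Cuts.exists_prepend (h : sg.Cuts (gaps x) (gaps y)) (r q : List Bool) :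
    ∃ sg' : Segmentation, sg'.Cuts (gaps (r ++ x)) (gaps (q ++ y)) ∧ sg'.length = sg.length ∧
      sg.zeroScore + min (r.count false) (q.count false) ≤ sg'.zeroScore := by
  obtain ⟨hne, hall, hx, hy⟩ := h
  obtain ⟨⟨A, G⟩, t, rfl⟩ := List.exists_cons_of_ne_nil hne
  rw [List.forall_mem_cons] at hall
  rw [xGaps_cons] at hx
  rw [yGaps_cons] at hy
  obtain ⟨A', hA', sumA', gapsA'⟩ := exists_gaps_append_eq r hall.1.1 hx.symm
  obtain ⟨G', hG', sumG', gapsG'⟩ := exists_gaps_append_eq q hall.1.2 hy.symm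
  refine ⟨(A', G') :: t, ⟨by simp, ?_, ?_, ?_⟩, by simp, ?_⟩
  · exact List.forall_mem_cons.2 ⟨⟨hA', hG'⟩, hall.2⟩
  · rw [xGaps_cons, gapsA']
  · rw [yGaps_cons, gapsG']
  · simp only [zeroScore_cons, sumA', sumG']
    omega

lemma exists_cuts_sum_zipWith_le (S : ℝ) {u v x y : List Bool} (hu : u.Sublist x)
    (hv : v.Sublist y) (hl : u.length = v.length) : ∃ sg : Segmentation,
      sg.Cuts (gaps x) (gaps y) ∧ (List.zipWith (letterScore S) u v).sum ≤ sg.totalScore S := by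
  induction u generalizing v x y with
  | nil =>
    exact ⟨[(gaps x, gaps y)], cuts_singleton (gaps_ne_nil x) (gaps_ne_nil y), by simp [totalScore]⟩
  | cons b u ih =>
    obtain ⟨c, v, rfl⟩ := List.exists_cons_of_length_pos (l := v) (by simp [← hl])
    obtain ⟨r, x', rfl, hr, hx'⟩ := List.cons_sublist_iff.1 hu
    obtain ⟨q, y', rfl, hq, hy'⟩ := List.cons_sublist_iff.1 hv
    obtain ⟨sg, hsg, le_sg⟩ := ih hx' hy' (by simpa using hl)
    rw [List.zipWith_cons_cons, List.sum_cons]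
    rw [totalScore] at le_sg
    by_cases hbc : b = true ∧ c = true
    · obtain ⟨rfl, rfl⟩ := hbc
      obtain ⟨r₁, r₂, rfl⟩ := List.append_of_mem hr
      obtain ⟨q₁, q₂, rfl⟩ := List.append_of_mem hq
      obtain ⟨sg', cuts', length', score'⟩ := hsg.exists_prepend r₂ q₂
      refine ⟨(gaps r₁, gaps q₁) :: sg', ?_, ?_⟩
      · simpa only [List.append_assoc, List.cons_append, gaps_append_true_cons] using
          cuts'.cons (gaps_ne_nil r₁) (gaps_ne_nil q₁)
      · have score'' : sg.zeroScore ≤ zeroScore ((gaps r₁, gaps q₁) :: sg') := by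
          rw [zeroScore_cons]; omega
        have : (sg.zeroScore : ℝ) ≤ zeroScore ((gaps r₁, gaps q₁) :: sg') := by
          exact_mod_cast score''
        rw [totalScore, List.length_cons, length', letterScore_true_true]
        push_cast
        linarith
    · obtain ⟨sg', cuts', length', score'⟩ := hsg.exists_prepend r q
      refine ⟨sg', cuts', ?_⟩
      have : (sg.zeroScore : ℝ) + (min (r.count false) (q.count false) : ℕ) ≤ sg'.zeroScore := by
        exact_mod_cast score'
      have := letterScore_le_min_count S hr hq hbc
      rw [totalScore, length']
      linarith

lemma Cuts.isAlignScore (S : ℝ) (h : sg.Cuts a g) :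
    IsAlignScore S (ofGaps a) (ofGaps g) (sg.totalScore S) := by
  induction sg generalizing a g with
  | nil => exact absurd rfl h.ne_nil
  | cons s t ih =>
    obtain ⟨-, hall, rfl, rfl⟩ := h
    obtain ⟨⟨hA, hG⟩, hall⟩ := List.forall_mem_cons.1 hall
    have zeros : IsAlignScore S (ofGaps s.1) (ofGaps s.2) (min s.1.sum s.2.sum : ℕ) := by
      simpa [letterScore_false_false] using
        isAlignScore_mul_letterScore S false (min s.1.sum s.2.sum) (ofGaps s.1) (ofGaps s.2)
          (by rw [count_false_ofGaps _ hA]; exact min_le_left _ _)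
          (by rw [count_false_ofGaps _ hG]; exact min_le_right _ _)
    cases t with
    | nil => simpa [xGaps, yGaps, totalScore, zeroScore] using zeros
    | cons s' t =>
      have one : IsAlignScore S [true] [true] S := by
        simpa [letterScore_true_true] using
          isAlignScore_mul_letterScore S true 1 [true] [true] (by simp) (by simp)
      have rest := ih ⟨by simp, hall, rfl, rfl⟩
      have ne_nil := hall s' (by simp)
      obtain ⟨b, A, ex⟩ := List.exists_cons_of_ne_nil
        (show xGaps (s' :: t) ≠ [] by simp [xGaps_cons, ne_nil])
      obtain ⟨c, G, ey⟩ := List.exists_cons_of_ne_nil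
        (show yGaps (s' :: t) ≠ [] by simp [yGaps_cons, ne_nil])
      rw [ex, ey] at rest
      rw [xGaps_cons, yGaps_cons, ex, ey, ofGaps_append_cons _ hA, ofGaps_append_cons _ hG]
      convert zeros.append (one.append rest) using 1
      · rfl
      · rfl
      · simp only [totalScore, zeroScore_cons s, List.length_cons]
        push_cast
        ring

/-- Replace the entry number `i` of the gap list of the first word by `v`. -/
def setX : Segmentation → ℕ → ℕ → Segmentation
  | [], _, _ => []
  | (A, G) :: t, i, v =>
    if i < A.length then (A.set i v, G) :: t else (A, G) :: setX t (i - A.length) v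

/-- The shape of the segment `(A, G)` which contains the gap number `i` of the first word: the
length of `A` and the sum of `G`. It is `(0, 0)` if there is no such segment. -/
def shapeAt : Segmentation → ℕ → ℕ × ℕ
  | [], _ => (0, 0)
  | (A, G) :: t, i => if i < A.length then (A.length, G.sum) else shapeAt t (i - A.length)

/-- The shape of a segment in which a gap of length `1` stands alone and faces at least two zeros,
so that increasing this gap to `2` increases the score. -/
def IsGaining (c : ℕ × ℕ) : Prop := c.1 = 1 ∧ 2 ≤ c.2

/-- The shape of a segment in which a gap of length `5` does not stand alone or faces at least five
zeros. In all other segments decreasing this gap to `4` leaves the score unchanged. -/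
def IsLosing (c : ℕ × ℕ) : Prop := c.1 = 1 → 5 ≤ c.2

lemma shapeAt_setX (sg : Segmentation) (i v k : ℕ) :
    shapeAt (sg.setX i v) k = shapeAt sg k := by
  induction sg generalizing i k with
  | nil => rfl
  | cons s t ih =>
    rw [setX]
    split_ifs with h <;> simp only [shapeAt, List.length_set, ih]

lemma xGaps_setX (sg : Segmentation) (i v : ℕ) : (sg.setX i v).xGaps = sg.xGaps.set i v := by
  induction sg generalizing i with
  | nil => simp [xGaps, setX]
  | cons s t ih =>
    rw [setX, xGaps_cons]
    split_ifs with h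
    · rw [xGaps_cons, List.set_append_left _ _ h]
    · rw [xGaps_cons, List.set_append_right _ _ (by simpa using h), ih]

lemma yGaps_setX (sg : Segmentation) (i v : ℕ) : (sg.setX i v).yGaps = sg.yGaps := by
  induction sg generalizing i with
  | nil => simp [yGaps, setX]
  | cons s t ih =>
    rw [setX]
    split_ifs with h <;> simp [yGaps_cons, ih]

lemma length_setX (sg : Segmentation) (i v : ℕ) : (sg.setX i v).length = sg.length := by
  induction sg generalizing i with
  | nil => simp [setX]
  | cons s t ih =>
    rw [setX]
    split_ifs with h <;> simp [ih]

lemma segment_ne_nil_setX (i v : ℕ) (h : ∀ s ∈ sg, s.1 ≠ [] ∧ s.2 ≠ []) :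
    ∀ s ∈ sg.setX i v, s.1 ≠ [] ∧ s.2 ≠ [] := by
  induction sg generalizing i with
  | nil => simp [setX]
  | cons s t ih =>
    rw [List.forall_mem_cons] at h
    rw [setX]
    split_ifs with hi <;> rw [List.forall_mem_cons]
    · exact ⟨by simpa using h.1, h.2⟩
    · exact ⟨h.1, ih _ h.2⟩

lemma Cuts.setX (h : sg.Cuts a g) (i v : ℕ) : (sg.setX i v).Cuts (a.set i v) g :=
  ⟨by rw [← List.length_pos_iff, length_setX, List.length_pos_iff]; exact h.ne_nil,
    segment_ne_nil_setX i v h.segment_ne_nil, by rw [xGaps_setX, h.xGaps_eq],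
    by rw [yGaps_setX, h.yGaps_eq]⟩

/-- Only the segment `(A, G)` which contains the gap `i` matters for the effect of `setX`. -/
lemma exists_zeroScore_setX {i v : ℕ} (h : sg.xGaps[i]? = some v) :
    ∃ (A G : List ℕ) (j : ℕ), A[j]? = some v ∧ sg.shapeAt i = (A.length, G.sum) ∧
      ∀ w, (sg.setX i w).zeroScore + min A.sum G.sum =
        sg.zeroScore + min (A.set j w).sum G.sum := by
  induction sg generalizing i with
  | nil => simp [xGaps] at h
  | cons s t ih =>
    rw [xGaps_cons] at h
    by_cases hi : i < s.1.length
    · refine ⟨s.1, s.2, i, by rwa [List.getElem?_append_left hi] at h, by simp [shapeAt, hi], ?_⟩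
      intro w
      simp only [setX, if_pos hi, zeroScore_cons]
      omega
    · rw [List.getElem?_append_right (by simpa using hi)] at h
      obtain ⟨A, G, j, hj, shape, score⟩ := ih h
      refine ⟨A, G, j, hj, by simp [shapeAt, hi, shape], fun w => ?_⟩
      have := score w
      simp only [setX, if_neg hi, zeroScore_cons]
      omega

lemma zeroScore_setX_two {i : ℕ} (h : sg.xGaps[i]? = some 1) :
    sg.zeroScore + (if IsGaining (sg.shapeAt i) then 1 else 0) ≤ (sg.setX i 2).zeroScore := by
  obtain ⟨A, G, j, hj, shape, score⟩ := exists_zeroScore_setX h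
  have sum_set := sum_set_add A j 1 2 hj
  have := score 2
  rw [shape]
  split_ifs with gaining
  · have : A.sum = 1 := by simp [eq_singleton_of_getElem? hj gaining.1]
    have : 2 ≤ G.sum := gaining.2
    omega
  · omega

lemma zeroScore_setX_four {i : ℕ} (h : sg.xGaps[i]? = some 5) :
    sg.zeroScore ≤ (sg.setX i 4).zeroScore + (if IsLosing (sg.shapeAt i) then 1 else 0) := by
  obtain ⟨A, G, j, hj, shape, score⟩ := exists_zeroScore_setX h
  have sum_set := sum_set_add A j 5 4 hj
  have := score 4
  rw [shape]
  split_ifs with losing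
  · omega
  · rw [IsLosing, Classical.not_imp] at losing
    have : A.sum = 5 := by simp [eq_singleton_of_getElem? hj losing.1]
    have : ¬ 5 ≤ G.sum := losing.2
    omega

end Segmentation

/-- The number of ones of a string. -/
def numOnes {n : ℕ} (x : Fin n → Bool) : ℕ := (List.ofFn x).count true

lemma length_gapsOf {n : ℕ} (x : Fin n → Bool) : (gapsOf x).length = numOnes x + 1 :=
  length_gaps _

lemma sum_add_length_gapsOf {n : ℕ} (x : Fin n → Bool) :
    (gapsOf x).sum + (gapsOf x).length = n + 1 := by
  rw [gapsOf, sum_add_length_gaps, List.length_ofFn]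

lemma ofGaps_gapsOf {n : ℕ} (x : Fin n → Bool) : ofGaps (gapsOf x) = List.ofFn x := ofGaps_gaps _

section OptimalSegmentation

variable {n : ℕ} {S : ℝ} {x y : Fin n → Bool} {sg : Segmentation}

lemma Segmentation.Cuts.totalScore_le_optScore (S : ℝ) (h : sg.Cuts (gapsOf x) (gapsOf y)) :
    sg.totalScore S ≤ optScore S n x y := by
  have := h.isAlignScore S
  rw [ofGaps_gapsOf, ofGaps_gapsOf] at this
  exact this.le_optScore

lemma exists_cuts_optScore_le (S : ℝ) (x y : Fin n → Bool) : ∃ sg : Segmentation,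
    sg.Cuts (gapsOf x) (gapsOf y) ∧ optScore S n x y ≤ sg.totalScore S := by
  obtain ⟨u, v, hu, hv, hl, e⟩ := isAlignScore_optScore S x y
  rw [e]
  exact Segmentation.exists_cuts_sum_zipWith_le S hu hv hl

/-- Aligning all ones scores at least the left side, and all aligned zeros count at most `n`. -/
lemma Segmentation.Cuts.mul_min_numOnes_le (h : sg.Cuts (gapsOf x) (gapsOf y))
    (optimal : optScore S n x y ≤ sg.totalScore S) :
    S * (min (numOnes x) (numOnes y) : ℕ) ≤ n + S * ((sg.length : ℝ) - 1) := by
  have ones_le : (min (numOnes x) (numOnes y) : ℕ) * S ≤ optScore S n x y := by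
    simpa only [letterScore_true_true] using (isAlignScore_mul_letterScore S true _ _ _
      (min_le_left (numOnes x) (numOnes y)) (min_le_right _ _)).le_optScore
  have zeroScore_le : sg.zeroScore ≤ n := by
    have := sg.zeroScore_le_sum_xGaps
    rw [h.xGaps_eq] at this
    have := sum_add_length_gapsOf x
    have := length_gapsOf x
    omega
  have : (sg.zeroScore : ℝ) ≤ n := by exact_mod_cast zeroScore_le
  rw [totalScore] at optimal
  linarith

open Segmentation in
theorem Segmentation.Cuts.optScore_le_optScore_modifyStr (h : sg.Cuts (gapsOf x) (gapsOf y))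
    (optimal : optScore S n x y ≤ sg.totalScore S) {i k : ℕ} (hi : i ∈ indicesOf (gapsOf x) 5)
    (hk : k ∈ indicesOf (gapsOf x) 1) :
    optScore S n x y + (if IsGaining (sg.shapeAt k) then 1 else 0) -
        (if IsLosing (sg.shapeAt i) then 1 else 0) ≤
      optScore S n (modifyStr x (gapPos (gapsOf x) i) (gapPos (gapsOf x) k)) y := by
  have hik : i ≠ k := indicesOf_ne (by decide) hi hk
  have cuts : ((sg.setX i 4).setX k 2).Cuts
      (gapsOf (modifyStr x (gapPos (gapsOf x) i) (gapPos (gapsOf x) k))) (gapsOf y) := by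
    rw [gapsOf_modifyStr x i k hi hk]
    exact (h.setX i 4).setX k 2
  have score_le := cuts.totalScore_le_optScore S
  rw [totalScore, length_setX, length_setX] at score_le
  rw [totalScore] at optimal
  have loss : (sg.zeroScore : ℝ) ≤
      (sg.setX i 4).zeroScore + (if IsLosing (sg.shapeAt i) then 1 else 0) := by
    have := zeroScore_setX_four (i := i) (by rw [h.xGaps_eq]; exact mem_indicesOf.1 hi)
    exact_mod_cast this
  have gain : ((sg.setX i 4).zeroScore : ℝ) + (if IsGaining (sg.shapeAt k) then 1 else 0) ≤
      ((sg.setX i 4).setX k 2).zeroScore := by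
    have := zeroScore_setX_two (sg := sg.setX i 4) (i := k)
      (by rw [xGaps_setX, h.xGaps_eq, List.getElem?_set_ne hik]; exact mem_indicesOf.1 hk)
    rw [shapeAt_setX] at this
    exact_mod_cast this
  linarith

end OptimalSegmentation
/-! ### A transfer weight for segmentations -/

/-- The total weight of all ways to match some entries of `a` with some entries of `g` in
increasing order, where a matched pair `(p, q)` has weight `w p q` and an unmatched entry has
weight `δ`. -/
def transferWeight (w : ℕ → ℕ → ℝ) (δ : ℝ) : List ℕ → List ℕ → ℝ
  | [], g => δ ^ g.length
  | _ :: a, [] => δ ^ (a.length + 1)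
  | p :: a, q :: g => w p q * transferWeight w δ a g + δ * transferWeight w δ (p :: a) g +
      δ * transferWeight w δ a (q :: g)
termination_by a g => a.length + g.length

section TransferWeight

variable {w : ℕ → ℕ → ℝ} {δ : ℝ}

lemma transferWeight_nil (g : List ℕ) : transferWeight w δ [] g = δ ^ g.length := by
  rw [transferWeight]

lemma transferWeight_cons_nil (p : ℕ) (a : List ℕ) :
    transferWeight w δ (p :: a) [] = δ ^ (a.length + 1) := by
  rw [transferWeight]

lemma transferWeight_cons_cons (p : ℕ) (a : List ℕ) (q : ℕ) (g : List ℕ) :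
    transferWeight w δ (p :: a) (q :: g) = w p q * transferWeight w δ a g +
      δ * transferWeight w δ (p :: a) g + δ * transferWeight w δ a (q :: g) := by
  rw [transferWeight]

lemma transferWeight_nonneg (hw : ∀ p q, 0 ≤ w p q) (hδ : 0 ≤ δ) :
    ∀ a g : List ℕ, 0 ≤ transferWeight w δ a g
  | [], g => by rw [transferWeight_nil]; positivity
  | p :: a, [] => by rw [transferWeight_cons_nil]; positivity
  | p :: a, q :: g => by
    rw [transferWeight_cons_cons]
    have matched := transferWeight_nonneg hw hδ a g
    have skip_right := transferWeight_nonneg hw hδ (p :: a) g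
    have skip_left := transferWeight_nonneg hw hδ a (q :: g)
    have := hw p q
    positivity
termination_by a g => a.length + g.length

lemma mul_transferWeight_le_cons_left (hw : ∀ p q, 0 ≤ w p q) (hδ : 0 ≤ δ) (p : ℕ)
    (a g : List ℕ) : δ * transferWeight w δ a g ≤ transferWeight w δ (p :: a) g := by
  cases g with
  | nil =>
    rw [transferWeight_cons_nil]
    cases a with
    | nil => simp [transferWeight_nil]
    | cons b a => rw [transferWeight_cons_nil, List.length_cons, pow_succ' δ (a.length + 1)]
  | cons q g =>
    rw [transferWeight_cons_cons]
    have matched := mul_nonneg (hw p q) (transferWeight_nonneg hw hδ a g)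
    have skip_right := mul_nonneg hδ (transferWeight_nonneg hw hδ (p :: a) g)
    linarith

lemma mul_transferWeight_le_cons_right (hw : ∀ p q, 0 ≤ w p q) (hδ : 0 ≤ δ) (a : List ℕ)
    (q : ℕ) (g : List ℕ) : δ * transferWeight w δ a g ≤ transferWeight w δ a (q :: g) := by
  cases a with
  | nil => rw [transferWeight_nil, transferWeight_nil, List.length_cons, pow_succ']
  | cons p a =>
    rw [transferWeight_cons_cons]
    have matched := mul_nonneg (hw p q) (transferWeight_nonneg hw hδ a g)
    have skip_left := mul_nonneg hδ (transferWeight_nonneg hw hδ a (q :: g))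
    linarith

lemma pow_mul_transferWeight_le_append (hw : ∀ p q, 0 ≤ w p q) (hδ : 0 ≤ δ)
    (A G a g : List ℕ) :
    δ ^ (A.length + G.length) * transferWeight w δ a g ≤ transferWeight w δ (A ++ a) (G ++ g) := by
  induction A with
  | nil =>
    induction G with
    | nil => simp
    | cons q G ih =>
      refine le_trans (le_of_eq ?_) ((mul_le_mul_of_nonneg_left ih hδ).trans
        (mul_transferWeight_le_cons_right hw hδ _ q _))
      simp only [List.length_cons]
      ring
  | cons p A ih =>
    refine le_trans (le_of_eq ?_) ((mul_le_mul_of_nonneg_left ih hδ).trans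
      (mul_transferWeight_le_cons_left hw hδ p _ _))
    simp only [List.length_cons]
    ring

/-- Only the last entries of the first segments `A ++ [p]` and `G ++ [q]` are matched. -/
lemma pow_mul_mul_transferWeight_le (hw : ∀ p q, 0 ≤ w p q) (hδ : 0 ≤ δ) (A G a g : List ℕ)
    (p q : ℕ) :
    δ ^ (A.length + G.length) * (w p q * transferWeight w δ a g) ≤
      transferWeight w δ ((A ++ [p]) ++ a) ((G ++ [q]) ++ g) := by
  rw [List.append_assoc, List.append_assoc, List.singleton_append, List.singleton_append]
  refine le_trans ?_ (pow_mul_transferWeight_le_append hw hδ A G _ _)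
  gcongr
  rw [transferWeight_cons_cons]
  have skip_right := mul_nonneg hδ (transferWeight_nonneg hw hδ (p :: a) g)
  have skip_left := mul_nonneg hδ (transferWeight_nonneg hw hδ a (q :: g))
  linarith

end TransferWeight

/-- The weight which gives the value `r` to the matches of a gap of length `v` with a gap of length
at least `k`. With `(v, k, r) = (1, 2, 1 / 2)` it penalizes the segments in which a gap of length
`1` can gain, with `(v, k, r) = (5, 5, 2)` it rewards those in which a gap of length `5` can
lose. -/
def thresholdWeight (v k : ℕ) (r : ℝ) (p q : ℕ) : ℝ := if p = v ∧ k ≤ q then r else 1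

lemma thresholdWeight_nonneg {r : ℝ} (hr : 0 ≤ r) (v k p q : ℕ) :
    0 ≤ thresholdWeight v k r p q := by
  unfold thresholdWeight
  positivity

namespace Segmentation

/-- The number of gaps of the two words beyond one gap of each per segment. -/
def excess (sg : Segmentation) : ℕ := (sg.map fun s => s.1.length + s.2.length - 2).sum

lemma excess_add (sg : Segmentation) (h : ∀ s ∈ sg, s.1 ≠ [] ∧ s.2 ≠ []) :
    sg.excess + 2 * sg.length = sg.xGaps.length + sg.yGaps.length := by
  induction sg with
  | nil => simp [excess, xGaps, yGaps]
  | cons s t ih =>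
    rw [List.forall_mem_cons] at h
    have := ih h.2
    have := List.length_pos_iff.2 h.1.1
    have := List.length_pos_iff.2 h.1.2
    rw [xGaps_cons, yGaps_cons, excess, List.map_cons, List.sum_cons, ← excess]
    simp only [List.length_append, List.length_cons]
    omega

/-- The number of gaps of length `v` of the first word whose segment has a shape in `Q`. -/
def countGaps (sg : Segmentation) (v : ℕ) (Q : ℕ × ℕ → Prop) : ℕ :=
  ((indicesOf sg.xGaps v).filter fun i => Q (sg.shapeAt i)).card

lemma countGaps_eq_sum (sg : Segmentation) (v : ℕ) (Q : ℕ × ℕ → Prop) :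
    sg.countGaps v Q = ∑ i ∈ Finset.range sg.xGaps.length,
      if sg.xGaps[i]? = some v ∧ Q (sg.shapeAt i) then 1 else 0 := by
  rw [countGaps, indicesOf, Finset.filter_filter, Finset.card_filter]

lemma countGaps_nil (v : ℕ) (Q : ℕ × ℕ → Prop) : countGaps [] v Q = 0 := by
  simp [countGaps, xGaps, indicesOf]

lemma countGaps_cons (A G : List ℕ) (t : Segmentation) (v : ℕ) (Q : ℕ × ℕ → Prop) :
    countGaps ((A, G) :: t) v Q =
      (if Q (A.length, G.sum) then A.count v else 0) + countGaps t v Q := by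
  rw [countGaps_eq_sum, countGaps_eq_sum, xGaps_cons, List.length_append, Finset.sum_range_add]
  congr 1
  · have summand_eq : ∀ i ∈ Finset.range A.length,
        (if (A ++ xGaps t)[i]? = some v ∧ Q (shapeAt ((A, G) :: t) i) then 1 else 0) =
          if Q (A.length, G.sum) then (if A[i]? = some v then 1 else 0) else 0 := by
      intro i hi
      rw [Finset.mem_range] at hi
      rw [List.getElem?_append_left hi, shapeAt, if_pos hi]
      by_cases hQ : Q (A.length, G.sum) <;> simp [hQ]
    rw [Finset.sum_congr rfl summand_eq]
    split_ifs with hQ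
    · rw [← card_indicesOf, indicesOf, Finset.card_filter]
    · exact Finset.sum_const_zero
  · refine Finset.sum_congr rfl fun i _ => ?_
    have : shapeAt ((A, G) :: t) (A.length + i) = shapeAt t i := by
      rw [shapeAt, if_neg (by omega), Nat.add_sub_cancel_left]
    simp only [this, List.getElem?_append_right (Nat.le_add_right _ _), Nat.add_sub_cancel_left]

/-- A segmentation contributes to the transfer weight the matching which pairs the last entries of
the two sides of each segment and leaves `sg.excess` entries unmatched. The factor `K` makes up for
the segments with more than one entry on a side, in which the last entries carry no information. -/
lemma pow_excess_mul_pow_countGaps_le {w : ℕ → ℕ → ℝ} {δ c K : ℝ} {v : ℕ} {Q : ℕ × ℕ → Prop}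
    (hw : ∀ p q, 0 ≤ w p q) (hδ : 0 ≤ δ) (hc : 0 ≤ c) (hK : 0 ≤ K)
    (segment_le : ∀ (A G : List ℕ) (p q : ℕ),
      K ^ (A.length + G.length) *
        c ^ (if Q ((A ++ [p]).length, (G ++ [q]).sum) then (A ++ [p]).count v else 0) ≤ w p q)
    (sg : Segmentation) (h : ∀ s ∈ sg, s.1 ≠ [] ∧ s.2 ≠ []) :
    (δ * K) ^ sg.excess * c ^ sg.countGaps v Q ≤ transferWeight w δ sg.xGaps sg.yGaps := by
  induction sg with
  | nil => simp [excess, xGaps, yGaps, transferWeight_nil, countGaps_nil]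
  | cons s t ih =>
    obtain ⟨A', G'⟩ := s
    obtain ⟨⟨hA, hG⟩, ht⟩ := List.forall_mem_cons.1 h
    obtain ⟨A, p, rfl⟩ := (List.eq_nil_or_concat' A').resolve_left hA
    obtain ⟨G, q, rfl⟩ := (List.eq_nil_or_concat' G').resolve_left hG
    have excess_cons : excess ((A ++ [p], G ++ [q]) :: t) = A.length + G.length + excess t := by
      simp only [excess, List.map_cons, List.sum_cons, List.length_append, List.length_singleton]
      omega
    rw [xGaps_cons, yGaps_cons, countGaps_cons, excess_cons]
    have matched_le := mul_le_mul (segment_le A G p q) (ih ht) (by positivity) (hw p q)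
    refine le_trans (le_of_eq ?_) ((mul_le_mul_of_nonneg_left matched_le
      (pow_nonneg hδ (A.length + G.length))).trans
      (pow_mul_mul_transferWeight_le hw hδ A G _ _ p q))
    ring

lemma segment_le_gainWeight (A G : List ℕ) (p q : ℕ) :
    (1 / 4 : ℝ) ^ (A.length + G.length) * (1 / 2) ^
      (if IsGaining ((A ++ [p]).length, (G ++ [q]).sum) then (A ++ [p]).count 1 else 0) ≤
      thresholdWeight 1 2 (1 / 2) p q := by
  have quarter_le : (1 / 4 : ℝ) ^ (A.length + G.length) ≤ (1 / 2) ^ (A.length + G.length) := by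
    gcongr; norm_num
  refine (mul_le_mul_of_nonneg_right quarter_le (by positivity)).trans ?_
  rw [← pow_add, thresholdWeight]
  split_ifs with gaining hpq hpq
  · have : 0 < (A ++ [p]).count 1 := List.count_pos_iff.2 (by simp [hpq.1])
    exact pow_le_of_le_one (by norm_num) (by norm_num) (by omega)
  · exact pow_le_one₀ (by norm_num) (by norm_num)
  · have : A.length ≠ 0 := by
      intro hA
      refine gaining ⟨by simp [hA], ?_⟩
      simp only [List.sum_append, List.sum_singleton]
      omega
    exact pow_le_of_le_one (by norm_num) (by norm_num) (by omega)
  · exact pow_le_one₀ (by norm_num) (by norm_num)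

lemma segment_le_lossWeight (A G : List ℕ) (p q : ℕ) :
    (1 / 4 : ℝ) ^ (A.length + G.length) * 2 ^
      (if IsLosing ((A ++ [p]).length, (G ++ [q]).sum) then (A ++ [p]).count 5 else 0) ≤
      thresholdWeight 5 5 2 p q := by
  have le_of_le : ∀ k, k ≤ 2 * (A.length + G.length) →
      (1 / 4 : ℝ) ^ (A.length + G.length) * 2 ^ k ≤ thresholdWeight 5 5 2 p q := by
    intro k hk
    calc (1 / 4 : ℝ) ^ (A.length + G.length) * 2 ^ k
        ≤ (1 / 4) ^ (A.length + G.length) * 2 ^ (2 * (A.length + G.length)) := by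
          gcongr; norm_num
      _ = 1 := by rw [pow_mul, ← mul_pow]; norm_num
      _ ≤ _ := by unfold thresholdWeight; split_ifs <;> norm_num
  split_ifs with losing
  · have count_le : (A ++ [p]).count 5 ≤ A.length + 1 := by
      simpa using List.count_le_length (a := 5) (l := A ++ [p])
    by_cases alone : A = [] ∧ G = [] ∧ p = 5
    · obtain ⟨rfl, rfl, rfl⟩ := alone
      have : 5 ≤ q := by simpa [IsLosing] using losing
      simp [thresholdWeight, this]
    · apply le_of_le
      rcases A with _ | ⟨b, A⟩
      · rcases G with _ | ⟨d, G⟩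
        · simp_all
        · simp only [List.nil_append, List.length_nil, List.length_cons] at count_le ⊢
          omega
      · simp only [List.length_cons] at count_le ⊢
        omega
  · exact le_of_le 0 (Nat.zero_le _)

variable {sg : Segmentation} {a g : List ℕ} {δ : ℝ}

lemma Cuts.pow_countGaps_le_gainWeight (h : sg.Cuts a g) (hδ : 0 ≤ δ) :
    (δ * (1 / 4)) ^ sg.excess * (1 / 2) ^ sg.countGaps 1 IsGaining ≤
      transferWeight (thresholdWeight 1 2 (1 / 2)) δ a g := by
  rw [← h.xGaps_eq, ← h.yGaps_eq]
  exact pow_excess_mul_pow_countGaps_le (thresholdWeight_nonneg (by norm_num) 1 2) hδ (by norm_num)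
    (by norm_num) segment_le_gainWeight sg h.segment_ne_nil

lemma Cuts.pow_countGaps_le_lossWeight (h : sg.Cuts a g) (hδ : 0 ≤ δ) :
    (δ * (1 / 4)) ^ sg.excess * 2 ^ sg.countGaps 5 IsLosing ≤
      transferWeight (thresholdWeight 5 5 2) δ a g := by
  rw [← h.xGaps_eq, ← h.yGaps_eq]
  exact pow_excess_mul_pow_countGaps_le (thresholdWeight_nonneg (by norm_num) 5 5) hδ (by norm_num)
    (by norm_num) segment_le_lossWeight sg h.segment_ne_nil

end Segmentation
/-! ### The average transfer weight -/

/-- The average of `f` over `K` independent gaps with law `g ↦ 2⁻⁽ᵍ⁺¹⁾`, truncated to `g < B`. -/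
def geomAvg (B : ℕ) : ℕ → (List ℕ → ℝ) → ℝ
  | 0, f => f []
  | K + 1, f => ∑ g ∈ Finset.range B, (1 / 2 : ℝ) ^ (g + 1) * geomAvg B K fun l => f (g :: l)

section GeomAvg

variable {B K : ℕ} {f f' : List ℕ → ℝ}

lemma geomAvg_add :
    geomAvg B K (fun l => f l + f' l) = geomAvg B K f + geomAvg B K f' := by
  induction K generalizing f f' with
  | zero => rfl
  | succ K ih => simp only [geomAvg, ih, mul_add, Finset.sum_add_distrib]

lemma geomAvg_const_mul (c : ℝ) : geomAvg B K (fun l => c * f l) = c * geomAvg B K f := by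
  induction K generalizing f with
  | zero => rfl
  | succ K ih =>
    simp only [geomAvg, ih, Finset.mul_sum]
    exact Finset.sum_congr rfl fun g _ => by ring

lemma geomAvg_nonneg (hf : ∀ l, 0 ≤ f l) : 0 ≤ geomAvg B K f := by
  induction K generalizing f with
  | zero => exact hf _
  | succ K ih => exact Finset.sum_nonneg fun g _ => mul_nonneg (by positivity) (ih fun l => hf _)

lemma geomAvg_le_succ (hf : ∀ l, 0 ≤ f l) : geomAvg B K f ≤ geomAvg (B + 1) K f := by
  induction K generalizing f with
  | zero => exact le_rfl
  | succ K ih =>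
    rw [geomAvg, geomAvg, Finset.sum_range_succ]
    refine le_add_of_le_of_nonneg (Finset.sum_le_sum fun g _ => ?_) ?_
    · exact mul_le_mul_of_nonneg_left (ih fun l => hf _) (by positivity)
    · exact mul_nonneg (by positivity) (geomAvg_nonneg fun l => hf _)

end GeomAvg

lemma sum_half_pow_le_one (B : ℕ) : ∑ g ∈ Finset.range B, (1 / 2 : ℝ) ^ (g + 1) ≤ 1 := by
  have sum_eq : ∑ g ∈ Finset.range B, (1 / 2 : ℝ) ^ (g + 1) = 1 - (1 / 2) ^ B := by
    induction B with
    | zero => simp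
    | succ B ih => rw [Finset.sum_range_succ, ih]; ring
  rw [sum_eq, sub_le_self_iff]
  positivity

lemma geomAvg_pow_length_le_one (B K : ℕ) {δ : ℝ} (h0 : 0 ≤ δ) (h1 : δ ≤ 1) :
    geomAvg B K (fun l => δ ^ l.length) ≤ 1 := by
  induction K with
  | zero => simp [geomAvg]
  | succ K ih =>
    simp only [geomAvg, List.length_cons, pow_succ' δ, geomAvg_const_mul]
    rw [← Finset.sum_mul]
    exact mul_le_one₀ (sum_half_pow_le_one B)
      (mul_nonneg h0 (geomAvg_nonneg fun l => pow_nonneg h0 _)) (mul_le_one₀ h1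
        (geomAvg_nonneg fun l => pow_nonneg h0 _) ih)

section AverageTransferWeight

variable {w : ℕ → ℕ → ℝ} {δ : ℝ} {ρ : ℕ → ℝ}

lemma geomAvg_transferWeight_cons (B K p : ℕ) (a : List ℕ) :
    geomAvg B (K + 1) (transferWeight w δ (p :: a)) =
      (∑ g ∈ Finset.range B, (1 / 2 : ℝ) ^ (g + 1) * w p g) * geomAvg B K (transferWeight w δ a) +
      (∑ g ∈ Finset.range B, (1 / 2 : ℝ) ^ (g + 1)) *
        (δ * geomAvg B K (transferWeight w δ (p :: a))) +
      δ * geomAvg B (K + 1) (transferWeight w δ a) := by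
  simp only [geomAvg, transferWeight_cons_cons, geomAvg_add, geomAvg_const_mul, Finset.sum_mul,
    Finset.mul_sum, ← Finset.sum_add_distrib]
  exact Finset.sum_congr rfl fun g _ => by ring

lemma pow_length_le_prod (h0 : 0 ≤ δ) (hρ : ∀ p, δ ≤ ρ p) (a : List ℕ) :
    δ ^ a.length ≤ (a.map ρ).prod := by
  induction a with
  | nil => simp
  | cons p a ih =>
    rw [List.length_cons, pow_succ', List.map_cons, List.prod_cons]
    exact mul_le_mul (hρ p) ih (by positivity) (h0.trans (hρ p))

lemma growth_rate_le {r : ℝ} (h0 : 0 ≤ δ) (h1 : δ ≤ 1 / 2) (hr : 1 / 2 ≤ r) :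
    r + δ * (1 + 2 * δ) * r + δ * (1 + 2 * δ) ≤ (1 + 2 * δ) ^ 2 * r := by
  have skip_le : δ * (1 + 2 * δ) * 1 ≤ δ * (1 + 2 * δ) * (2 * r) :=
    mul_le_mul_of_nonneg_left (by linarith) (by positivity)
  have : 0 ≤ δ * (1 - 2 * δ) * r := mul_nonneg (mul_nonneg h0 (by linarith)) (by linarith)
  linarith [this, skip_le, show (1 + 2 * δ) ^ 2 * r -
    (r + δ * (1 + 2 * δ) * r + δ * (1 + 2 * δ) * (2 * r)) = δ * (1 - 2 * δ) * r by ring]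

/-- The growth rate `1 + 2 * δ` per gap absorbs the unmatched gaps. -/
lemma geomAvg_transferWeight_le (hw : ∀ p q, 0 ≤ w p q) (h0 : 0 ≤ δ) (h1 : δ ≤ 1 / 2)
    (hρ : ∀ p, 1 / 2 ≤ ρ p) {B : ℕ}
    (hB : ∀ p, ∑ g ∈ Finset.range B, (1 / 2 : ℝ) ^ (g + 1) * w p g ≤ ρ p) :
    ∀ (a : List ℕ) (K : ℕ),
      geomAvg B K (transferWeight w δ a) ≤ (1 + 2 * δ) ^ (a.length + K) * (a.map ρ).prod
  | [], K => by
    rw [funext fun l => transferWeight_nil (w := w) (δ := δ) l, List.map_nil, List.prod_nil,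
      mul_one]
    exact (geomAvg_pow_length_le_one B K h0 (by linarith)).trans (one_le_pow₀ (by linarith))
  | p :: a, 0 => by
    rw [geomAvg, transferWeight_cons_nil]
    have prod_ge := pow_length_le_prod h0 (fun q => h1.trans (hρ q)) (p :: a)
    refine prod_ge.trans (le_mul_of_one_le_left ?_ (one_le_pow₀ (by linarith)))
    exact le_trans (by positivity) prod_ge
  | p :: a, K + 1 => by
    have matched := geomAvg_transferWeight_le hw h0 h1 hρ hB a K
    have skip_right := geomAvg_transferWeight_le hw h0 h1 hρ hB (p :: a) K
    have skip_left := geomAvg_transferWeight_le hw h0 h1 hρ hB a (K + 1)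
    have nonneg : ∀ b, 0 ≤ geomAvg B K (transferWeight w δ b) :=
      fun b => geomAvg_nonneg (transferWeight_nonneg hw h0 b)
    have prod_nonneg : 0 ≤ (a.map ρ).prod :=
      List.prod_nonneg (by simpa using fun b _ => by linarith [hρ b])
    rw [geomAvg_transferWeight_cons]
    rw [List.map_cons, List.prod_cons, List.length_cons] at skip_right ⊢
    calc _ ≤ ρ p * ((1 + 2 * δ) ^ (a.length + K) * (a.map ρ).prod) +
          1 * (δ * ((1 + 2 * δ) ^ (a.length + 1 + K) * (ρ p * (a.map ρ).prod))) +
          δ * ((1 + 2 * δ) ^ (a.length + (K + 1)) * (a.map ρ).prod) :=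
        add_le_add_three
          (mul_le_mul (hB p) matched (nonneg a) (by linarith [hρ p]))
          (mul_le_mul (sum_half_pow_le_one B) (mul_le_mul_of_nonneg_left skip_right h0)
            (mul_nonneg h0 (nonneg _)) zero_le_one)
          (mul_le_mul_of_nonneg_left skip_left h0)
      _ = (ρ p + δ * (1 + 2 * δ) * ρ p + δ * (1 + 2 * δ)) *
          ((1 + 2 * δ) ^ (a.length + K) * (a.map ρ).prod) := by ring
      _ ≤ (1 + 2 * δ) ^ 2 * ρ p * ((1 + 2 * δ) ^ (a.length + K) * (a.map ρ).prod) :=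
        mul_le_mul_of_nonneg_right (growth_rate_le h0 h1 (hρ p)) (by positivity)
      _ = _ := by ring
termination_by a K => a.length + K

end AverageTransferWeight

lemma sum_strings_cons {n : ℕ} (F : (Fin (n + 1) → Bool) → ℝ) :
    ∑ x, F x =
      ∑ x : Fin n → Bool, F (Fin.cons false x) + ∑ x : Fin n → Bool, F (Fin.cons true x) := by
  rw [← (Fin.consEquiv (fun _ : Fin (n + 1) => Bool)).sum_comp, Fintype.sum_prod_type,
    Fintype.sum_bool, add_comm]
  rfl

/-- The gap list of a string after a zero has been put in front of it. -/
def incHead (l : List ℕ) : List ℕ := (l.headD 0 + 1) :: l.tail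

lemma gapsOf_cons_false {n : ℕ} (y : Fin n → Bool) :
    gapsOf (Fin.cons false y : Fin (n + 1) → Bool) = incHead (gapsOf y) := by
  obtain ⟨g, l, gaps_eq⟩ := exists_gaps_cons (List.ofFn y)
  simp [gapsOf, gaps, incHead, gaps_eq]

lemma gapsOf_cons_true {n : ℕ} (y : Fin n → Bool) :
    gapsOf (Fin.cons true y : Fin (n + 1) → Bool) = 0 :: gapsOf y := by
  simp [gapsOf, gaps]

/-- A geometric gap is zero with probability `1 / 2` and otherwise one more than a geometric
gap. -/
lemma geomAvg_incHead_add_le (B K : ℕ) {f : List ℕ → ℝ} (hf : ∀ l, 0 ≤ f l) :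
    geomAvg B (K + 1) (fun l => f (incHead l)) + geomAvg (B + 1) K (fun l => f (0 :: l)) ≤
      2 * geomAvg (B + 1) (K + 1) f := by
  have step_le : ∀ g, (1 / 2 : ℝ) ^ (g + 1) * geomAvg B K (fun l => f ((g + 1) :: l)) ≤
      2 * ((1 / 2) ^ (g + 1 + 1) * geomAvg (B + 1) K fun l => f ((g + 1) :: l)) := by
    intro g
    refine (mul_le_mul_of_nonneg_left (geomAvg_le_succ fun l => hf _) (by positivity)).trans
      (le_of_eq ?_)
    ring
  simp only [geomAvg, incHead, List.headD_cons, List.tail_cons]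
  rw [Finset.sum_range_succ', mul_add, Finset.mul_sum]
  refine add_le_add (Finset.sum_le_sum fun g _ => step_le g) (le_of_eq ?_)
  ring

/-- A uniform string is dominated by independent geometric gaps. -/
lemma sum_gapsOf_le (n : ℕ) {B : ℕ} (hB : n + 1 ≤ B) {f : List ℕ → ℝ} (hf : ∀ l, 0 ≤ f l) :
    ∑ y : Fin n → Bool, f (gapsOf y) ≤
      2 ^ (n + 1) * ∑ K ∈ Finset.range (n + 1), geomAvg B (K + 1) f := by
  induction n generalizing B f with
  | zero =>
    have gapsOf_eq : ∀ y : Fin 0 → Bool, gapsOf y = [0] := by simp [gapsOf, gaps]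
    have := Finset.single_le_sum (f := fun g => (1 / 2 : ℝ) ^ (g + 1) * f [g])
      (fun g _ => mul_nonneg (by positivity) (hf _)) (Finset.mem_range.2 hB)
    simp only [geomAvg, Finset.range_one, Finset.sum_singleton, zero_add, Fintype.sum_unique,
      gapsOf_eq, pow_one] at this ⊢
    linarith
  | succ n ih =>
    obtain ⟨B, rfl⟩ := Nat.exists_eq_add_of_le' (show 1 ≤ B by omega)
    rw [sum_strings_cons]
    simp only [gapsOf_cons_false, gapsOf_cons_true]
    have sum_inc_le : ∑ K ∈ Finset.range (n + 1), geomAvg B (K + 1) (fun l => f (incHead l)) ≤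
        ∑ K ∈ Finset.range (n + 2), geomAvg B (K + 1) (fun l => f (incHead l)) :=
      Finset.sum_le_sum_of_subset_of_nonneg (Finset.range_subset_range.2 (by omega))
        fun K _ _ => geomAvg_nonneg fun l => hf _
    have sum_zero_le : ∑ K ∈ Finset.range (n + 1), geomAvg (B + 1) (K + 1) (fun l => f (0 :: l)) ≤
        ∑ K ∈ Finset.range (n + 2), geomAvg (B + 1) K (fun l => f (0 :: l)) := by
      rw [Finset.sum_range_succ' _ (n + 1)]
      exact le_add_of_nonneg_right (geomAvg_nonneg fun l => hf _)
    calc _ ≤ 2 ^ (n + 1) * ∑ K ∈ Finset.range (n + 2), geomAvg B (K + 1) (fun l => f (incHead l)) +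
          2 ^ (n + 1) * ∑ K ∈ Finset.range (n + 2), geomAvg (B + 1) K (fun l => f (0 :: l)) :=
        add_le_add
          ((ih (by omega) fun l => hf _).trans
            (mul_le_mul_of_nonneg_left sum_inc_le (by positivity)))
          ((ih (B := B + 1) (by omega) fun l => hf _).trans
            (mul_le_mul_of_nonneg_left sum_zero_le (by positivity)))
      _ ≤ 2 ^ (n + 1) * ∑ K ∈ Finset.range (n + 2), 2 * geomAvg (B + 1) (K + 1) f := by
        rw [← mul_add, ← Finset.sum_add_distrib]
        gcongr with K
        exact geomAvg_incHead_add_le B K hf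
      _ = 2 ^ (n + 1 + 1) * ∑ K ∈ Finset.range (n + 1 + 1), geomAvg (B + 1) (K + 1) f := by
        rw [← Finset.mul_sum]
        ring

lemma sum_transferWeight_le {w : ℕ → ℕ → ℝ} {δ : ℝ} {ρ : ℕ → ℝ} (hw : ∀ p q, 0 ≤ w p q)
    (h0 : 0 ≤ δ) (h1 : δ ≤ 1 / 2) (hρ : ∀ p, 1 / 2 ≤ ρ p)
    (avg_le : ∀ B p, ∑ g ∈ Finset.range B, (1 / 2 : ℝ) ^ (g + 1) * w p g ≤ ρ p)
    {n : ℕ} (x : Fin n → Bool) :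
    ∑ y : Fin n → Bool, transferWeight w δ (gapsOf x) (gapsOf y) ≤
      2 ^ (n + 1) * ((n + 1) * ((1 + 2 * δ) ^ (2 * n + 2) * ((gapsOf x).map ρ).prod)) := by
  refine (sum_gapsOf_le n le_rfl (transferWeight_nonneg hw h0 _)).trans ?_
  have prod_nonneg : 0 ≤ ((gapsOf x).map ρ).prod :=
    List.prod_nonneg (by simpa using fun b _ => by linarith [hρ b])
  have geomAvg_le : ∀ K ∈ Finset.range (n + 1),
      geomAvg (n + 1) (K + 1) (transferWeight w δ (gapsOf x)) ≤
        (1 + 2 * δ) ^ (2 * n + 2) * ((gapsOf x).map ρ).prod := by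
    intro K hK
    rw [Finset.mem_range] at hK
    refine (geomAvg_transferWeight_le hw h0 h1 hρ (avg_le _) _ _).trans
      (mul_le_mul_of_nonneg_right (pow_le_pow_right₀ (by linarith) ?_) prod_nonneg)
    have := sum_add_length_gapsOf x
    omega
  refine mul_le_mul_of_nonneg_left ((Finset.sum_le_sum geomAvg_le).trans ?_) (by positivity)
  simp

lemma prod_map_ite (l : List ℕ) (v : ℕ) (r : ℝ) :
    (l.map fun a => if a = v then r else 1).prod = r ^ l.count v := by
  induction l with
  | nil => simp
  | cons b l ih =>
    rw [List.map_cons, List.prod_cons, ih, List.count_cons]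
    by_cases h : b = v <;> simp [h, pow_succ, mul_comm]

lemma sum_half_pow_mul_thresholdWeight_le (v k : ℕ) {r : ℝ} (hr : 0 ≤ r) (B p : ℕ) :
    ∑ g ∈ Finset.range B, (1 / 2 : ℝ) ^ (g + 1) * thresholdWeight v k r p g ≤
      if p = v then 1 + (r - 1) * (1 / 2) ^ k else 1 := by
  split_ifs with hp
  · have sum_eq : ∑ g ∈ Finset.range (k + B), (1 / 2 : ℝ) ^ (g + 1) * thresholdWeight v k r p g =
        1 + (r - 1) * (1 / 2) ^ k - r * (1 / 2) ^ (k + B) := by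
      induction B with
      | zero =>
        have below : ∀ g ∈ Finset.range k,
            (1 / 2 : ℝ) ^ (g + 1) * thresholdWeight v k r p g =
              (1 / 2) ^ g - (1 / 2) ^ (g + 1) := by
          intro g hg
          rw [Finset.mem_range] at hg
          rw [thresholdWeight, if_neg (by omega)]
          ring
        rw [add_zero, Finset.sum_congr rfl below, Finset.sum_range_sub']
        ring
      | succ B ih =>
        rw [← add_assoc, Finset.sum_range_succ, ih, thresholdWeight,
          if_pos ⟨hp, Nat.le_add_right k B⟩]
        ring
    calc _ ≤ ∑ g ∈ Finset.range (k + B), (1 / 2 : ℝ) ^ (g + 1) * thresholdWeight v k r p g :=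
          Finset.sum_le_sum_of_subset_of_nonneg (Finset.range_subset_range.2 (by omega))
            fun g _ _ => mul_nonneg (by positivity) (thresholdWeight_nonneg hr _ _ _ _)
      _ ≤ _ := by rw [sum_eq, sub_le_self_iff]; positivity
  · simpa only [thresholdWeight, hp, false_and, if_false, mul_one] using sum_half_pow_le_one B

lemma sum_transferWeight_thresholdWeight_le {v k : ℕ} {r δ : ℝ} (hv : 0 < v) (hk : 1 ≤ k)
    (hr : 0 ≤ r) (h0 : 0 ≤ δ) (h1 : δ ≤ 1 / 2) {n : ℕ} (x : Fin n → Bool) :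
    ∑ y : Fin n → Bool, transferWeight (thresholdWeight v k r) δ (gapsOf x) (gapsOf y) ≤
      2 ^ (n + 1) * ((n + 1) * ((1 + 2 * δ) ^ (2 * n + 2) *
        (1 + (r - 1) * (1 / 2) ^ k) ^ numBlocks x v)) := by
  rw [numBlocks_eq_count x v hv, ← prod_map_ite]
  refine sum_transferWeight_le (thresholdWeight_nonneg hr v k) h0 h1 (fun p => ?_)
    (sum_half_pow_mul_thresholdWeight_le v k hr) x
  have half_pow_le : (1 / 2 : ℝ) ^ k ≤ 1 / 2 :=
    pow_le_of_le_one (by norm_num) (by norm_num) (by omega)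
  have : (0 : ℝ) < (1 / 2) ^ k := by positivity
  split_ifs <;> nlinarith

lemma card_mul_le_sum {α : Type*} [Fintype α] (P : α → Prop) [DecidablePred P] {f : α → ℝ} {t : ℝ}
    (nonneg : ∀ y, 0 ≤ f y) (le_of_mem : ∀ y, P y → t ≤ f y) :
    ((Finset.univ.filter P).card : ℝ) * t ≤ ∑ y, f y := by
  rw [← nsmul_eq_mul]
  exact (Finset.card_nsmul_le_sum _ _ _ fun y hy => le_of_mem y (Finset.mem_filter.1 hy).2).trans
    (Finset.sum_le_sum_of_subset_of_nonneg (Finset.subset_univ _) fun y _ _ => nonneg y)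

/-! ### The drift of the chain -/

lemma sum_transProb {n : ℕ} (x : Fin n → Bool) (h5 : 0 < numBlocks x 5) (h1 : 0 < numBlocks x 1)
    (F : (Fin n → Bool) → ℝ) :
    ∑ z, transProb x z * F z = (∑ i ∈ indicesOf (gapsOf x) 5, ∑ k ∈ indicesOf (gapsOf x) 1,
      F (modifyStr x (gapPos (gapsOf x) i) (gapPos (gapsOf x) k))) /
        (numBlocks x 5 * numBlocks x 1) := by
  have starts_nonempty : (starts x 5).Nonempty ∧ (starts x 1).Nonempty :=
    ⟨Finset.card_pos.1 h5, Finset.card_pos.1 h1⟩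
  have summand_eq : ∀ z, transProb x z * F z =
      (∑ pq ∈ (starts x 5) ×ˢ (starts x 1), if modifyStr x pq.1 pq.2 = z then F z else 0) /
        (numBlocks x 5 * numBlocks x 1) := by
    intro z
    rw [transProb, if_pos starts_nonempty, pairCount, ← Finset.sum_filter, Finset.sum_const,
      nsmul_eq_mul, div_mul_eq_mul_div]
    rfl
  rw [Finset.sum_congr rfl fun z _ => summand_eq z, ← Finset.sum_div, Finset.sum_comm]
  congr 1
  simp only [Finset.sum_ite_eq, Finset.mem_univ, if_true]
  rw [Finset.sum_product, sum_starts_eq_sum_indicesOf x 5 (by norm_num)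
    (fun p => ∑ q ∈ starts x 1, F (modifyStr x p q))]
  exact Finset.sum_congr rfl fun i _ => sum_starts_eq_sum_indicesOf x 1 one_pos _

/-- The parameter of the exponential moments of the score, with `exp driftExponent = 1.1`. -/
def driftExponent : ℝ := Real.log 1.1

lemma exp_driftExponent : Real.exp driftExponent = 1.1 := Real.exp_log (by norm_num)

lemma exp_neg_driftExponent : Real.exp (-driftExponent) = 10 / 11 := by
  rw [Real.exp_neg, exp_driftExponent]; norm_num

lemma driftExponent_pos : 0 < driftExponent := Real.log_pos (by norm_num)

/-- From the state `x`, one step of the chain increases the score against `y` on (exponential)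
average. -/
def HasUpwardDrift (S : ℝ) {n : ℕ} (x y : Fin n → Bool) : Prop :=
  ∑ z, transProb x z * Real.exp (-driftExponent * (optScore S n z y - optScore S n x y)) ≤ 0.997

lemma sum_exp_ite {ι : Type*} (s : Finset ι) (P : ι → Prop) (c : ℝ) :
    ∑ i ∈ s, Real.exp (if P i then c else 0) =
      s.card + (s.filter P).card * (Real.exp c - 1) := by
  have : ∀ i ∈ s, Real.exp (if P i then c else 0) = 1 + if P i then Real.exp c - 1 else 0 := by
    intro i _; split_ifs <;> simp
  rw [Finset.sum_congr rfl this, Finset.sum_add_distrib, ← Finset.sum_filter]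
  simp only [Finset.sum_const, nsmul_eq_mul, mul_one]

section Drift

open Segmentation

variable {n : ℕ} {S ε : ℝ} {x y : Fin n → Bool} {sg : Segmentation}

lemma Segmentation.Cuts.sum_indicesOf_exp_ite (h : sg.Cuts (gapsOf x) (gapsOf y)) {v : ℕ}
    (hv : 0 < v) (Q : ℕ × ℕ → Prop) (c : ℝ) :
    ∑ i ∈ indicesOf (gapsOf x) v, Real.exp (if Q (sg.shapeAt i) then c else 0) =
      numBlocks x v + sg.countGaps v Q * (Real.exp c - 1) := by
  rw [sum_exp_ite, card_indicesOf, ← numBlocks_eq_count x v hv, countGaps, h.xGaps_eq]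

lemma Segmentation.Cuts.countGaps_le_numBlocks (h : sg.Cuts (gapsOf x) (gapsOf y)) {v : ℕ}
    (hv : 0 < v) (Q : ℕ × ℕ → Prop) : sg.countGaps v Q ≤ numBlocks x v := by
  rw [countGaps, h.xGaps_eq, numBlocks_eq_count x v hv, ← card_indicesOf]
  exact Finset.card_filter_le _ _

lemma Segmentation.Cuts.sum_exp_modifyStr_le (h : sg.Cuts (gapsOf x) (gapsOf y))
    (optimal : optScore S n x y ≤ sg.totalScore S) :
    ∑ i ∈ indicesOf (gapsOf x) 5, ∑ k ∈ indicesOf (gapsOf x) 1, Real.exp (-driftExponent *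
      (optScore S n (modifyStr x (gapPos (gapsOf x) i) (gapPos (gapsOf x) k)) y -
        optScore S n x y)) ≤
      (numBlocks x 5 + sg.countGaps 5 IsLosing * 0.1) *
        (numBlocks x 1 - sg.countGaps 1 IsGaining * (1 / 11)) := by
  calc _ ≤ ∑ i ∈ indicesOf (gapsOf x) 5, ∑ k ∈ indicesOf (gapsOf x) 1,
        Real.exp (if IsLosing (sg.shapeAt i) then driftExponent else 0) *
          Real.exp (if IsGaining (sg.shapeAt k) then -driftExponent else 0) := by
        refine Finset.sum_le_sum fun i hi => Finset.sum_le_sum fun k hk => ?_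
        rw [← Real.exp_add, Real.exp_le_exp]
        have score_le := h.optScore_le_optScore_modifyStr optimal hi hk
        have := driftExponent_pos
        split_ifs at score_le ⊢ <;> nlinarith
    _ = _ := by
        rw [← Finset.sum_mul_sum, h.sum_indicesOf_exp_ite (by norm_num),
          h.sum_indicesOf_exp_ite one_pos, exp_driftExponent, exp_neg_driftExponent]
        ring

lemma Segmentation.Cuts.hasUpwardDrift (h : sg.Cuts (gapsOf x) (gapsOf y))
    (optimal : optScore S n x y ≤ sg.totalScore S) (h5 : 0 < numBlocks x 5)
    (h1 : 0 < numBlocks x 1)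
    (many_gaining : 0.11 * (numBlocks x 1 : ℝ) ≤ sg.countGaps 1 IsGaining)
    (few_losing : sg.countGaps 5 IsLosing ≤ 0.07 * (numBlocks x 5 : ℝ)) :
    HasUpwardDrift S x y := by
  have hp5 : (0 : ℝ) < numBlocks x 5 := by exact_mod_cast h5
  have hp1 : (0 : ℝ) < numBlocks x 1 := by exact_mod_cast h1
  have gaining_le : (sg.countGaps 1 IsGaining : ℝ) ≤ numBlocks x 1 := by
    exact_mod_cast h.countGaps_le_numBlocks one_pos IsGaining
  rw [HasUpwardDrift, sum_transProb x h5 h1, div_le_iff₀ (by positivity)]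
  calc _ ≤ (numBlocks x 5 + sg.countGaps 5 IsLosing * 0.1 : ℝ) *
          (numBlocks x 1 - sg.countGaps 1 IsGaining * (1 / 11)) := h.sum_exp_modifyStr_le optimal
    _ ≤ (numBlocks x 5 * 1.007) * (numBlocks x 1 * 0.99) :=
        mul_le_mul (by linarith) (by linarith) (by linarith) (by positivity)
    _ ≤ _ := by linarith [mul_pos hp5 hp1]

/-- The number of ones of `x` differs from `n / 2` by at most `ε * n`. -/
def IsBalanced (ε : ℝ) {n : ℕ} (x : Fin n → Bool) : Prop := |(numOnes x : ℝ) - n / 2| ≤ ε * n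

/-- For large `S` an optimal alignment matches almost all ones, so that almost all segments consist
of one gap of each string. -/
lemma Segmentation.Cuts.excess_le (h : sg.Cuts (gapsOf x) (gapsOf y))
    (optimal : optScore S n x y ≤ sg.totalScore S) (hε : 0 < ε) (hS : 1 / ε ≤ S)
    (hx : IsBalanced ε x) (hy : IsBalanced ε y) : (sg.excess : ℝ) ≤ 4 * ε * n := by
  have hS0 : 0 < S := lt_of_lt_of_le (by positivity) hS
  have excess_eq : (sg.excess : ℝ) + 2 * sg.length = (numOnes x + 1) + (numOnes y + 1) := by
    have := sg.excess_add h.segment_ne_nil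
    rw [h.xGaps_eq, h.yGaps_eq, length_gapsOf, length_gapsOf] at this
    exact_mod_cast this
  have numOnes_le : ((min (numOnes x) (numOnes y) : ℕ) : ℝ) ≤ ε * n + (sg.length - 1) := by
    refine le_of_mul_le_mul_left ((h.mul_min_numOnes_le optimal).trans ?_) hS0
    have : 1 * (n : ℝ) ≤ S * ε * n :=
      mul_le_mul_of_nonneg_right ((div_le_iff₀ hε).1 hS) (Nat.cast_nonneg n)
    linarith
  rw [IsBalanced, abs_le] at hx hy
  rcases le_total (numOnes x) (numOnes y) with hxy | hyx
  · rw [min_eq_left hxy] at numOnes_le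
    linarith
  · rw [min_eq_right hyx] at numOnes_le
    linarith

end Drift

lemma one_add_pow_le_exp {t : ℝ} (h : 0 ≤ 1 + t) (N : ℕ) : (1 + t) ^ N ≤ Real.exp (t * N) := by
  rw [mul_comm, Real.exp_nat_mul]
  exact pow_le_pow_left₀ h (by linarith [Real.add_one_le_exp t]) N

/-- Markov's inequality for the transfer weight against `x`. -/
lemma card_le_of_exp_le_transferWeight {n : ℕ} (x : Fin n → Bool) {κ r a : ℝ} {v k : ℕ}
    (hκ : 0 < κ) (hκ1 : κ ≤ 1) (hv : 0 < v) (hk : 1 ≤ k) (hr : 0 ≤ r) {P : (Fin n → Bool) → Prop}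
    (le_weight : ∀ y, P y → Real.exp (a - 0.002 * κ * n) ≤
      transferWeight (thresholdWeight v k r) (κ / 2000) (gapsOf x) (gapsOf y))
    (rate_le : (1 + (r - 1) * (1 / 2) ^ k) ^ numBlocks x v ≤ Real.exp (a - 0.01 * κ * n)) :
    ((Finset.univ.filter P).card : ℝ) ≤ 2 ^ n * (4 * (n + 1) * Real.exp (-(0.006 * κ * n))) := by
  have growth_le : (1 + 2 * (κ / 2000)) ^ (2 * n + 2) ≤ Real.exp (0.002 * κ * n) * 2 := by
    refine (one_add_pow_le_exp (by positivity) _).trans ?_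
    have exponent_eq : 2 * (κ / 2000) * ((2 * n + 2 : ℕ) : ℝ) = 0.002 * κ * n + 0.002 * κ := by
      push_cast; ring
    rw [exponent_eq, Real.exp_add]
    refine mul_le_mul_of_nonneg_left ?_ (Real.exp_pos _).le
    rw [← Real.le_log_iff_exp_le two_pos]
    linarith [Real.log_two_gt_d9]
  have markov := (card_mul_le_sum P
    (fun y => transferWeight_nonneg (thresholdWeight_nonneg hr v k) (by positivity) _ _)
    le_weight).trans
    (sum_transferWeight_thresholdWeight_le hv hk hr (by positivity) (by linarith) x)
  have rate_nonneg : 0 ≤ 1 + (r - 1) * (1 / 2) ^ k := by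
    have : (1 / 2 : ℝ) ^ k ≤ 1 := pow_le_one₀ (by norm_num) (by norm_num)
    have : 0 ≤ r * (1 / 2) ^ k := by positivity
    linarith
  refine le_of_mul_le_mul_right (markov.trans ?_) (Real.exp_pos (a - 0.002 * κ * n))
  calc _ ≤ 2 ^ (n + 1) * ((n + 1) * ((Real.exp (0.002 * κ * n) * 2) *
        Real.exp (a - 0.01 * κ * n))) := by gcongr
    _ = 2 ^ n * (4 * (n + 1)) * (Real.exp (0.002 * κ * n) * Real.exp (a - 0.01 * κ * n)) := by
      ring
    _ = 2 ^ n * (4 * (n + 1)) * (Real.exp (-(0.006 * κ * n)) * Real.exp (a - 0.002 * κ * n)) := by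
      rw [← Real.exp_add, ← Real.exp_add]; ring_nf
    _ = _ := by ring

/-- The tolerance for the number of ones at which the cost of the unmatched gaps of an optimal
alignment, with weight `κ / 2000` each, is `exp (-0.002 * κ * n)`. -/
def balanceTol (κ : ℝ) : ℝ := 0.0005 * κ / Real.log (8000 / κ)

section RareStrings

open Segmentation

variable {n : ℕ} {κ : ℝ} {x y : Fin n → Bool}

lemma log_pos_of_le_one (hκ : 0 < κ) (hκ1 : κ ≤ 1) : 0 < Real.log (8000 / κ) :=
  Real.log_pos (by rw [lt_div_iff₀ hκ]; linarith)

lemma balanceTol_pos (hκ : 0 < κ) (hκ1 : κ ≤ 1) : 0 < balanceTol κ :=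
  div_pos (by positivity) (log_pos_of_le_one hκ hκ1)

lemma exp_le_pow_of_le_balanceTol (hκ : 0 < κ) (hκ1 : κ ≤ 1) {m : ℕ}
    (hm : (m : ℝ) ≤ 4 * balanceTol κ * n) :
    Real.exp (-(0.002 * κ * n)) ≤ (κ / 2000 * (1 / 4)) ^ m := by
  have log_pos := log_pos_of_le_one hκ hκ1
  have base_eq : κ / 2000 * (1 / 4) = Real.exp (-Real.log (8000 / κ)) := by
    rw [Real.exp_neg, Real.exp_log (by positivity)]
    field_simp
    norm_num
  rw [base_eq, ← Real.exp_nat_mul, Real.exp_le_exp, mul_neg, neg_le_neg_iff]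
  calc (m : ℝ) * Real.log (8000 / κ) ≤ 4 * balanceTol κ * n * Real.log (8000 / κ) :=
        mul_le_mul_of_nonneg_right hm log_pos.le
    _ = 0.002 * κ * n := by rw [balanceTol]; field_simp; ring

lemma card_few_gaining_le (x : Fin n → Bool) (hκ : 0 < κ) (hκ1 : κ ≤ 1)
    (h1 : κ * n ≤ numBlocks x 1) :
    ((Finset.univ.filter fun y : Fin n → Bool => ∃ sg : Segmentation,
      sg.Cuts (gapsOf x) (gapsOf y) ∧ (sg.excess : ℝ) ≤ 4 * balanceTol κ * n ∧
        (sg.countGaps 1 IsGaining : ℝ) ≤ 0.11 * numBlocks x 1).card : ℝ) ≤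
      2 ^ n * (4 * (n + 1) * Real.exp (-(0.006 * κ * n))) := by
  refine card_le_of_exp_le_transferWeight (a := -(0.08 * numBlocks x 1)) (v := 1) (k := 2)
    (r := 1 / 2) x hκ hκ1 one_pos one_le_two (by norm_num) ?_ ?_
  · rintro y ⟨sg, h, excess_le, few_gaining⟩
    refine le_trans ?_ (h.pow_countGaps_le_gainWeight (by positivity))
    rw [sub_eq_neg_add, Real.exp_add]
    refine mul_le_mul (exp_le_pow_of_le_balanceTol hκ hκ1 excess_le) ?_ (Real.exp_pos _).le
      (by positivity)
    rw [one_div, inv_pow, ← Real.exp_log (show (0 : ℝ) < 2 by norm_num), ← Real.exp_nat_mul,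
      ← Real.exp_neg, Real.exp_le_exp, neg_le_neg_iff]
    nlinarith [Real.log_two_lt_d9, Real.log_two_gt_d9, (numBlocks x 1).cast_nonneg (α := ℝ)]
  · refine (one_add_pow_le_exp (by norm_num) _).trans (Real.exp_le_exp.2 ?_)
    linarith

lemma card_many_losing_le (x : Fin n → Bool) (hκ : 0 < κ) (hκ1 : κ ≤ 1)
    (h5 : κ * n ≤ numBlocks x 5) :
    ((Finset.univ.filter fun y : Fin n → Bool => ∃ sg : Segmentation,
      sg.Cuts (gapsOf x) (gapsOf y) ∧ (sg.excess : ℝ) ≤ 4 * balanceTol κ * n ∧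
        0.07 * (numBlocks x 5 : ℝ) ≤ sg.countGaps 5 IsLosing).card : ℝ) ≤
      2 ^ n * (4 * (n + 1) * Real.exp (-(0.006 * κ * n))) := by
  refine card_le_of_exp_le_transferWeight (a := 0.045 * numBlocks x 5) (v := 5) (k := 5)
    (r := 2) x hκ hκ1 (by norm_num) (by norm_num) two_pos.le ?_ ?_
  · rintro y ⟨sg, h, excess_le, many_losing⟩
    refine le_trans ?_ (h.pow_countGaps_le_lossWeight (by positivity))
    rw [sub_eq_neg_add, Real.exp_add]
    refine mul_le_mul (exp_le_pow_of_le_balanceTol hκ hκ1 excess_le) ?_ (Real.exp_pos _).le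
      (by positivity)
    rw [← Real.le_log_iff_exp_le (by positivity), Real.log_pow]
    nlinarith [Real.log_two_gt_d9, (numBlocks x 5).cast_nonneg (α := ℝ)]
  · refine (one_add_pow_le_exp (by norm_num) _).trans (Real.exp_le_exp.2 ?_)
    linarith

theorem card_not_hasUpwardDrift_le (hκ : 0 < κ) (hκ1 : κ ≤ 1) {S : ℝ} (hS : 1 / balanceTol κ ≤ S)
    (hn : 0 < n) (hx : IsBalanced (balanceTol κ) x) (h1 : κ * n ≤ numBlocks x 1)
    (h5 : κ * n ≤ numBlocks x 5) :
    ((Finset.univ.filter fun y : Fin n → Bool =>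
      IsBalanced (balanceTol κ) y ∧ ¬ HasUpwardDrift S x y).card : ℝ) ≤
      2 ^ n * (8 * (n + 1) * Real.exp (-(0.006 * κ * n))) := by
  have pos_of_le : ∀ v, κ * n ≤ numBlocks x v → 0 < numBlocks x v := fun v hv =>
    Nat.cast_pos.1 (lt_of_lt_of_le (mul_pos hκ (Nat.cast_pos.2 hn)) hv)
  have subset_union : (Finset.univ.filter fun y : Fin n → Bool =>
      IsBalanced (balanceTol κ) y ∧ ¬ HasUpwardDrift S x y) ⊆
      (Finset.univ.filter fun y : Fin n → Bool => ∃ sg : Segmentation,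
        sg.Cuts (gapsOf x) (gapsOf y) ∧ (sg.excess : ℝ) ≤ 4 * balanceTol κ * n ∧
          (sg.countGaps 1 IsGaining : ℝ) ≤ 0.11 * numBlocks x 1) ∪
      (Finset.univ.filter fun y : Fin n → Bool => ∃ sg : Segmentation,
        sg.Cuts (gapsOf x) (gapsOf y) ∧ (sg.excess : ℝ) ≤ 4 * balanceTol κ * n ∧
          0.07 * (numBlocks x 5 : ℝ) ≤ sg.countGaps 5 IsLosing) := by
    intro y hy
    obtain ⟨hyb, no_drift⟩ := (Finset.mem_filter.1 hy).2
    obtain ⟨sg, h, optimal⟩ := exists_cuts_optScore_le S x y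
    have excess_le := h.excess_le optimal (balanceTol_pos hκ hκ1) hS hx hyb
    rw [Finset.mem_union, Finset.mem_filter, Finset.mem_filter]
    by_contra! hnot
    exact no_drift (h.hasUpwardDrift optimal (pos_of_le 5 h5) (pos_of_le 1 h1)
      (hnot.1 (Finset.mem_univ y) sg h excess_le).le
      (hnot.2 (Finset.mem_univ y) sg h excess_le).le)
  have card_le := (Finset.card_le_card subset_union).trans (Finset.card_union_le _ _)
  calc _ ≤ _ := Nat.cast_le.2 card_le
    _ ≤ 2 ^ n * (4 * (n + 1) * Real.exp (-(0.006 * κ * n))) +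
        2 ^ n * (4 * (n + 1) * Real.exp (-(0.006 * κ * n))) := by
      rw [Nat.cast_add]
      exact add_le_add (card_few_gaining_le x hκ hκ1 h1) (card_many_losing_le x hκ hκ1 h5)
    _ = _ := by ring

end RareStrings

/-! ### Counting strings with prescribed block counts -/

/-- The string of length `n` with gap list `a`, for a nonempty list `a` such that
`a.sum + a.length = n + 1`. -/
def strOfGaps (n : ℕ) (a : List ℕ) : Fin n → Bool := fun i => (ofGaps a).getD i false

lemma gapsOf_strOfGaps {n : ℕ} {a : List ℕ} (ha : a ≠ []) (h : a.sum + a.length = n + 1) :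
    gapsOf (strOfGaps n a) = a := by
  have length_eq := length_ofGaps a ha
  have ofFn_eq : List.ofFn (strOfGaps n a) = ofGaps a := by
    apply List.ext_getElem
    · rw [List.length_ofFn]; omega
    · intro i _ hi
      rw [List.getElem_ofFn, strOfGaps, List.getD_eq_getElem _ _ hi]
  rw [gapsOf, ofFn_eq, gaps_ofGaps a ha]

lemma gapsOf_injective {n : ℕ} : Function.Injective (gapsOf (n := n)) :=
  gaps_injective.comp List.ofFn_injective

lemma gapsOf_ne_nil {n : ℕ} (x : Fin n → Bool) : gapsOf x ≠ [] := gaps_ne_nil _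

lemma strOfGaps_gapsOf {n : ℕ} (x : Fin n → Bool) : strOfGaps n (gapsOf x) = x :=
  gapsOf_injective (gapsOf_strOfGaps (gapsOf_ne_nil x) (sum_add_length_gapsOf x))

lemma count_set_add {a : List ℕ} {i v : ℕ} (h : a[i]? = some v) (w c : ℕ) :
    (a.set i w).count c + (if v = c then 1 else 0) = a.count c + (if w = c then 1 else 0) := by
  induction a generalizing i with
  | nil => simp at h
  | cons b a ih =>
    cases i with
    | zero =>
      obtain rfl : b = v := by simpa using h
      simp only [List.set_cons_zero, List.count_cons, beq_iff_eq]
      omega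
    | succ i =>
      have := ih (i := i) (by simpa using h)
      simp only [List.set_cons_succ, List.count_cons]
      omega

/-- The string obtained from `x` by changing the lengths of the gaps `i` and `k` to `p` and `q`.
The total length of the two gaps has to be preserved. -/
def setGaps {n : ℕ} (x : Fin n → Bool) (i k p q : ℕ) : Fin n → Bool :=
  strOfGaps n (((gapsOf x).set i p).set k q)

section SetGaps

variable {n p q i k : ℕ} {x : Fin n → Bool}

lemma gapsOf_setGaps {p' q' : ℕ} (hpq : p ≠ q) (hi : i ∈ indicesOf (gapsOf x) p)
    (hk : k ∈ indicesOf (gapsOf x) q) (hsum : p' + q' = p + q) :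
    gapsOf (setGaps x i k p' q') = ((gapsOf x).set i p').set k q' := by
  have hne := indicesOf_ne hpq hi hk
  rw [mem_indicesOf] at hi hk
  apply gapsOf_strOfGaps
  · simpa only [ne_eq, List.set_eq_nil_iff] using gapsOf_ne_nil x
  · have sum_i := sum_set_add (gapsOf x) i p p' hi
    have sum_k := sum_set_add ((gapsOf x).set i p') k q q'
      ((List.getElem?_set_ne hne).trans hk)
    have total := sum_add_length_gapsOf x
    simp only [List.length_set]
    omega

lemma mem_indicesOf_setGaps {p' q' : ℕ} (hpq : p ≠ q) (hi : i ∈ indicesOf (gapsOf x) p)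
    (hk : k ∈ indicesOf (gapsOf x) q) (hsum : p' + q' = p + q) :
    i ∈ indicesOf (gapsOf (setGaps x i k p' q')) p' ∧
      k ∈ indicesOf (gapsOf (setGaps x i k p' q')) q' := by
  have hne := indicesOf_ne hpq hi hk
  rw [gapsOf_setGaps hpq hi hk hsum, mem_indicesOf, mem_indicesOf, List.getElem?_set_ne hne.symm]
  rw [mem_indicesOf, List.getElem?_eq_some_iff] at hi hk
  exact ⟨List.getElem?_set_self hi.1, List.getElem?_set_self (by simpa using hk.1)⟩

lemma setGaps_setGaps {p' q' : ℕ} (hpq : p ≠ q) (hi : i ∈ indicesOf (gapsOf x) p)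
    (hk : k ∈ indicesOf (gapsOf x) q) (hsum : p' + q' = p + q) :
    setGaps (setGaps x i k p' q') i k p q = x := by
  have hne := indicesOf_ne hpq hi hk
  rw [setGaps, gapsOf_setGaps hpq hi hk hsum, List.set_comm _ _ hne.symm, List.set_set,
    List.set_set]
  rw [mem_indicesOf, List.getElem?_eq_some_iff] at hi hk
  obtain ⟨_, rfl⟩ := hi
  obtain ⟨_, rfl⟩ := hk
  rw [List.set_getElem_self, List.set_getElem_self, strOfGaps_gapsOf]

lemma numOnes_setGaps {p' q' : ℕ} (hpq : p ≠ q) (hi : i ∈ indicesOf (gapsOf x) p)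
    (hk : k ∈ indicesOf (gapsOf x) q) (hsum : p' + q' = p + q) :
    numOnes (setGaps x i k p' q') = numOnes x := by
  have length_eq := length_gapsOf (setGaps x i k p' q')
  rw [gapsOf_setGaps hpq hi hk hsum, List.length_set, List.length_set, length_gapsOf] at length_eq
  omega

lemma count_gapsOf_setGaps {p' q' : ℕ} (hpq : p ≠ q) (hi : i ∈ indicesOf (gapsOf x) p)
    (hk : k ∈ indicesOf (gapsOf x) q) (hsum : p' + q' = p + q) (c : ℕ) :
    (gapsOf (setGaps x i k p' q')).count c +
        ((if p = c then 1 else 0) + (if q = c then 1 else 0)) =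
      (gapsOf x).count c + ((if p' = c then 1 else 0) + (if q' = c then 1 else 0)) := by
  rw [gapsOf_setGaps hpq hi hk hsum]
  have hne := indicesOf_ne hpq hi hk
  rw [mem_indicesOf] at hi hk
  have count_i := count_set_add hi p' c
  have count_k := count_set_add (a := (gapsOf x).set i p')
    ((List.getElem?_set_ne hne).trans hk) q' c
  omega

lemma modifyStr_gapPos (hi : i ∈ indicesOf (gapsOf x) 5) (hk : k ∈ indicesOf (gapsOf x) 1) :
    modifyStr x (gapPos (gapsOf x) i) (gapPos (gapsOf x) k) = setGaps x i k 4 2 :=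
  gapsOf_injective <| by
    rw [gapsOf_modifyStr x i k hi hk, gapsOf_setGaps (p' := 4) (by norm_num) hi hk rfl]

end SetGaps

/-- The block-count vector `m + j e`; the subtractions are truncated unless `j ≤ m 0` and
`j ≤ m 3`. -/
def shiftCounts (m : Fin 4 → ℕ) (j : ℕ) : Fin 4 → ℕ := ![m 0 - j, m 1 + j, m 2 + j, m 3 - j]

lemma shiftCounts_zero (m : Fin 4 → ℕ) : shiftCounts m 0 = m := by
  funext i; fin_cases i <;> rfl

lemma shiftCounts_succ (m : Fin 4 → ℕ) (j : ℕ) :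
    shiftCounts (shiftCounts m j) 1 = shiftCounts m (j + 1) := by
  funext i; fin_cases i <;> rfl

section Counting

variable {n i k : ℕ} {m : Fin 4 → ℕ} {x : Fin n → Bool}

lemma mem_strSetV : x ∈ strSetV n m ↔
    (gapsOf x).count 1 = m 0 ∧ (gapsOf x).count 2 = m 1 ∧ (gapsOf x).count 4 = m 2 ∧
      (gapsOf x).count 5 = m 3 := by
  simp [strSetV, Fin.forall_fin_succ, blockLen, numBlocks_eq_count]

lemma setGaps_mem_strSetV_shiftCounts (hx : x ∈ strSetV n m) (hi : i ∈ indicesOf (gapsOf x) 5)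
    (hk : k ∈ indicesOf (gapsOf x) 1) : setGaps x i k 4 2 ∈ strSetV n (shiftCounts m 1) := by
  have count := count_gapsOf_setGaps (p' := 4) (q' := 2) (by norm_num) hi hk rfl
  have count1 := count 1
  have count2 := count 2
  have count4 := count 4
  have count5 := count 5
  rw [mem_strSetV] at hx ⊢
  simp [shiftCounts] at count1 count2 count4 count5 ⊢
  omega

lemma setGaps_mem_strSetV (h0 : 0 < m 0) (h3 : 0 < m 3) (hx : x ∈ strSetV n (shiftCounts m 1))
    (hi : i ∈ indicesOf (gapsOf x) 4) (hk : k ∈ indicesOf (gapsOf x) 2) :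
    setGaps x i k 5 1 ∈ strSetV n m := by
  have count := count_gapsOf_setGaps (p' := 5) (q' := 1) (by norm_num) hi hk rfl
  have count1 := count 1
  have count2 := count 2
  have count4 := count 4
  have count5 := count 5
  rw [mem_strSetV] at hx ⊢
  simp [shiftCounts] at hx count1 count2 count4 count5
  omega

/-- The strings with block counts `m` whose number of ones satisfies `P`. -/
def strSetOnes (n : ℕ) (m : Fin 4 → ℕ) (P : ℕ → Prop) : Finset (Fin n → Bool) :=
  (strSetV n m).filter fun x => P (numOnes x)

/-- The strings of `strSetOnes n m P` with a marked gap of length `p` and a marked gap of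
length `q`. -/
def markedStrings (n : ℕ) (m : Fin 4 → ℕ) (P : ℕ → Prop) (p q : ℕ) :
    Finset ((_ : Fin n → Bool) × ℕ × ℕ) :=
  (strSetOnes n m P).sigma fun x => indicesOf (gapsOf x) p ×ˢ indicesOf (gapsOf x) q

variable {P : ℕ → Prop}

lemma mem_strSetOnes : x ∈ strSetOnes n m P ↔ x ∈ strSetV n m ∧ P (numOnes x) := Finset.mem_filter

lemma mem_markedStrings {p q : ℕ} {t : (_ : Fin n → Bool) × ℕ × ℕ} :
    t ∈ markedStrings n m P p q ↔ t.1 ∈ strSetOnes n m P ∧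
      t.2.1 ∈ indicesOf (gapsOf t.1) p ∧ t.2.2 ∈ indicesOf (gapsOf t.1) q := by
  rw [markedStrings, Finset.mem_sigma, Finset.mem_product]

lemma card_markedStrings {p q cp cq : ℕ}
    (h : ∀ x ∈ strSetV n m, (gapsOf x).count p = cp ∧ (gapsOf x).count q = cq) :
    (markedStrings n m P p q).card = (strSetOnes n m P).card * (cp * cq) := by
  rw [markedStrings, Finset.card_sigma, ← smul_eq_mul, ← Finset.sum_const]
  refine Finset.sum_congr rfl fun x hx => ?_
  rw [Finset.card_product, card_indicesOf, card_indicesOf, (h x (mem_strSetOnes.1 hx).1).1,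
    (h x (mem_strSetOnes.1 hx).1).2]

/-- The string of `t` with its marked gaps set to the lengths `p` and `q`, with the same marks. -/
def setMarkedGaps (p q : ℕ) (t : (_ : Fin n → Bool) × ℕ × ℕ) : (_ : Fin n → Bool) × ℕ × ℕ :=
  ⟨setGaps t.1 t.2.1 t.2.2 p q, t.2⟩

lemma setMarkedGaps_mem_markedStrings {m' : Fin 4 → ℕ} {p q p' q' : ℕ}
    {t : (_ : Fin n → Bool) × ℕ × ℕ} (hpq : p ≠ q) (hsum : p' + q' = p + q)
    (maps : ∀ x ∈ strSetV n m, ∀ i ∈ indicesOf (gapsOf x) p, ∀ k ∈ indicesOf (gapsOf x) q,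
      setGaps x i k p' q' ∈ strSetV n m')
    (ht : t ∈ markedStrings n m P p q) : setMarkedGaps p' q' t ∈ markedStrings n m' P p' q' := by
  obtain ⟨hx, hi, hk⟩ := mem_markedStrings.1 ht
  rw [mem_strSetOnes, ← numOnes_setGaps hpq hi hk hsum] at hx
  exact mem_markedStrings.2 ⟨mem_strSetOnes.2 ⟨maps _ hx.1 _ hi _ hk, hx.2⟩,
    mem_indicesOf_setGaps hpq hi hk hsum⟩

lemma setMarkedGaps_setMarkedGaps {p q p' q' : ℕ} {t : (_ : Fin n → Bool) × ℕ × ℕ} (hpq : p ≠ q)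
    (hsum : p' + q' = p + q) (ht : t ∈ markedStrings n m P p q) :
    setMarkedGaps p q (setMarkedGaps p' q' t) = t := by
  obtain ⟨-, hi, hk⟩ := mem_markedStrings.1 ht
  exact congrArg (Sigma.mk · t.2) (setGaps_setGaps hpq hi hk hsum)

-- A step of the chain can be undone once the two gaps are marked.
lemma card_markedStrings_shiftCounts (n : ℕ) (h0 : 0 < m 0) (h3 : 0 < m 3) (P : ℕ → Prop) :
    (markedStrings n m P 5 1).card = (markedStrings n (shiftCounts m 1) P 4 2).card :=
  Finset.card_nbij' (setMarkedGaps 4 2) (setMarkedGaps 5 1)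
    (fun _ => setMarkedGaps_mem_markedStrings (by norm_num) rfl fun _ hx _ hi _ hk =>
      setGaps_mem_strSetV_shiftCounts hx hi hk)
    (fun _ => setMarkedGaps_mem_markedStrings (by norm_num) rfl fun _ hx _ hi _ hk =>
      setGaps_mem_strSetV h0 h3 hx hi hk)
    (fun _ => setMarkedGaps_setMarkedGaps (by norm_num) rfl)
    (fun _ => setMarkedGaps_setMarkedGaps (by norm_num) rfl)

lemma card_strSetOnes_step (n : ℕ) (h0 : 0 < m 0) (h3 : 0 < m 3) (P : ℕ → Prop) :
    (strSetOnes n m P).card * (m 3 * m 0) =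
      (strSetOnes n (shiftCounts m 1) P).card * ((m 2 + 1) * (m 1 + 1)) := by
  have before : (markedStrings n m P 5 1).card = (strSetOnes n m P).card * (m 3 * m 0) :=
    card_markedStrings fun x hx => ⟨(mem_strSetV.1 hx).2.2.2, (mem_strSetV.1 hx).1⟩
  have after : (markedStrings n (shiftCounts m 1) P 4 2).card =
      (strSetOnes n (shiftCounts m 1) P).card * ((m 2 + 1) * (m 1 + 1)) :=
    card_markedStrings fun x hx => ⟨(mem_strSetV.1 hx).2.2.1, (mem_strSetV.1 hx).2.1⟩
  rw [← before, ← after, card_markedStrings_shiftCounts n h0 h3 P]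

lemma card_strSetV_step (n : ℕ) (h0 : 0 < m 0) (h3 : 0 < m 3) :
    (strSetV n m).card * (m 3 * m 0) =
      (strSetV n (shiftCounts m 1)).card * ((m 2 + 1) * (m 1 + 1)) := by
  simpa only [strSetOnes, Finset.filter_true] using
    card_strSetOnes_step n h0 h3 fun _ => True

lemma strSetV_shiftCounts_nonempty {j : ℕ} (hne : (strSetV n m).Nonempty) (h0 : j ≤ m 0)
    (h3 : j ≤ m 3) : (strSetV n (shiftCounts m j)).Nonempty := by
  induction j with
  | zero => rwa [shiftCounts_zero]
  | succ j ih =>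
    have pos0 : 0 < shiftCounts m j 0 := Nat.sub_pos_of_lt h0
    have pos3 : 0 < shiftCounts m j 3 := Nat.sub_pos_of_lt h3
    have step := card_strSetV_step n pos0 pos3
    rw [shiftCounts_succ] at step
    have card_pos := Finset.card_pos.2 (ih (by omega) (by omega))
    exact Finset.card_pos.1 (Nat.pos_of_mul_pos_right
      (step ▸ Nat.mul_pos card_pos (Nat.mul_pos pos3 pos0)))

-- The conditional law of the number of ones given the block counts is constant along the chain.
lemma card_strSetOnes_mul_card_strSetV {j : ℕ} (hne : (strSetV n m).Nonempty) (h0 : j ≤ m 0)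
    (h3 : j ≤ m 3) (P : ℕ → Prop) :
    (strSetOnes n m P).card * (strSetV n (shiftCounts m j)).card =
      (strSetOnes n (shiftCounts m j) P).card * (strSetV n m).card := by
  induction j with
  | zero => rw [shiftCounts_zero]
  | succ j ih =>
    have pos0 : 0 < shiftCounts m j 0 := Nat.sub_pos_of_lt h0
    have pos3 : 0 < shiftCounts m j 3 := Nat.sub_pos_of_lt h3
    have step_ones := card_strSetOnes_step n pos0 pos3 P
    have step_all := card_strSetV_step n pos0 pos3
    rw [shiftCounts_succ] at step_ones step_all
    have card_pos : 0 < (strSetV n (shiftCounts m j)).card :=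
      Finset.card_pos.2 (strSetV_shiftCounts_nonempty hne (by omega) (by omega))
    replace ih := ih (by omega) (by omega)
    set u := shiftCounts m j 3 * shiftCounts m j 0
    set v := (shiftCounts m j 2 + 1) * (shiftCounts m j 1 + 1)
    have v_pos : 0 < v := Nat.mul_pos (Nat.succ_pos _) (Nat.succ_pos _)
    apply Nat.eq_of_mul_eq_mul_right (Nat.mul_pos v_pos card_pos)
    set A := (strSetV n (shiftCounts m j)).card
    set A' := (strSetV n (shiftCounts m (j + 1))).card
    set B := (strSetOnes n (shiftCounts m j) P).card
    set B' := (strSetOnes n (shiftCounts m (j + 1)) P).card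
    calc (strSetOnes n m P).card * A' * (v * A)
        = ((strSetOnes n m P).card * A) * (A' * v) := by ring
      _ = (B * (strSetV n m).card) * (A * u) := by rw [ih, step_all]
      _ = (B * u) * ((strSetV n m).card * A) := by ring
      _ = (B' * v) * ((strSetV n m).card * A) := by rw [step_ones]
      _ = B' * (strSetV n m).card * (v * A) := by ring

end Counting

/-! ### Concentration of block counts and of the number of ones -/

section BoundedDifferences

variable {n : ℕ} {c : ℝ}

lemma sum_eq_two_pow_mul_expX (f : (Fin n → Bool) → ℝ) : ∑ x, f x = 2 ^ n * expX n f := by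
  rw [expX]; field_simp

lemma expX_succ (f : (Fin (n + 1) → Bool) → ℝ) : expX (n + 1) f =
    (expX n (fun x => f (Fin.cons false x)) + expX n (fun x => f (Fin.cons true x))) / 2 := by
  simp only [expX]
  rw [sum_strings_cons, pow_succ]
  field_simp

lemma abs_expX_sub_expX_le {f g : (Fin n → Bool) → ℝ} (h : ∀ x, |f x - g x| ≤ c) :
    |expX n f - expX n g| ≤ c := by
  rw [expX, expX, ← sub_div, ← Finset.sum_sub_distrib, abs_div,
    abs_of_pos (by positivity : (0 : ℝ) < 2 ^ n), div_le_iff₀ (by positivity)]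
  calc |∑ x, (f x - g x)| ≤ ∑ x, |f x - g x| := Finset.abs_sum_le_sum_abs _ _
    _ ≤ ∑ _x : Fin n → Bool, c := Finset.sum_le_sum fun x _ => h x
    _ = c * 2 ^ n := by simp [mul_comm]

lemma expX_sub_sq (f : (Fin n → Bool) → ℝ) (a : ℝ) : expX n (fun x => (f x - a) ^ 2) =
    expX n (fun x => (f x - expX n f) ^ 2) + (expX n f - a) ^ 2 := by
  have expand (b : ℝ) : expX n (fun x => (f x - b) ^ 2) =
      expX n (fun x => f x ^ 2) - 2 * b * expX n f + b ^ 2 := by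
    simp only [sub_sq, expX, Finset.sum_add_distrib, Finset.sum_sub_distrib, Finset.sum_const,
      Finset.card_univ, Fintype.card_fun, Fintype.card_bool, Fintype.card_fin, nsmul_eq_mul,
      ← Finset.sum_mul, ← Finset.mul_sum]
    push_cast
    field_simp
  rw [expand, expand]
  ring

-- Efron–Stein up to a constant factor, by conditioning on the first letter.
lemma expX_sub_expX_sq_le (f : (Fin n → Bool) → ℝ)
    (h : ∀ x i, |f (Function.update x i true) - f (Function.update x i false)| ≤ c) :
    expX n (fun x => (f x - expX n f) ^ 2) ≤ n * c ^ 2 := by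
  induction n with
  | zero => simp [expX]
  | succ n ih =>
    have tail_diff (b : Bool) (x : Fin n → Bool) (i : Fin n) :
        |f (Fin.cons b (Function.update x i true)) - f (Fin.cons b (Function.update x i false))| ≤
          c := by
      simpa only [Fin.cons_update] using h (Fin.cons b x) i.succ
    have var_false := ih (fun x => f (Fin.cons false x)) (tail_diff false)
    have var_true := ih (fun x => f (Fin.cons true x)) (tail_diff true)
    rw [expX_succ fun x => (f x - _) ^ 2, expX_sub_sq fun x => f (Fin.cons false x),
      expX_sub_sq fun x => f (Fin.cons true x), expX_succ f]
    set a := expX n fun x => f (Fin.cons false x)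
    set b := expX n fun x => f (Fin.cons true x)
    have head_diff : |b - a| ≤ c :=
      abs_expX_sub_expX_le fun x => by simpa only [Fin.update_cons_zero] using h (Fin.cons true x) 0
    have head_sq : (b - a) ^ 2 ≤ c ^ 2 := by
      rw [← sq_abs]
      gcongr
    push_cast
    nlinarith [sq_nonneg (b - a)]

lemma card_lt_abs_sub_expX_le (f : (Fin n → Bool) → ℝ)
    (h : ∀ x i, |f (Function.update x i true) - f (Function.update x i false)| ≤ c) {t : ℝ}
    (ht : 0 < t) :
    ((univ.filter fun x => t < |f x - expX n f|).card : ℝ) ≤ 2 ^ n * (n * c ^ 2 / t ^ 2) := by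
  have markov := card_mul_le_sum (fun x => t < |f x - expX n f|)
    (f := fun x => (f x - expX n f) ^ 2) (t := t ^ 2) (fun _ => sq_nonneg _) fun x hx => by
      rw [← sq_abs (f x - expX n f)]
      gcongr
  rw [mul_div_assoc', le_div_iff₀ (by positivity)]
  refine markov.trans ?_
  rw [sum_eq_two_pow_mul_expX]
  gcongr
  exact expX_sub_expX_sq_le f h

end BoundedDifferences

lemma exists_gaps_append_false_cons (l₁ l₂ : List Bool) : ∃ A a b B, gaps l₁ = A ++ [a] ∧
    gaps l₂ = b :: B ∧ gaps (l₁ ++ false :: l₂) = A ++ (a + 1 + b) :: B := by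
  obtain ⟨b, B, gaps_right⟩ := exists_gaps_cons l₂
  refine ⟨(gaps l₁).dropLast, (gaps l₁).getLast (gaps_ne_nil _), b, B,
    (List.dropLast_append_getLast _).symm, gaps_right, ?_⟩
  induction l₁ with
  | nil => simp [gaps, gaps_right]; omega
  | cons c l₁ ih =>
    obtain ⟨d, A, gaps_left⟩ := exists_gaps_cons l₁
    cases c <;> cases A <;> (simp_all [gaps]; try omega)

lemma abs_count_gaps_append_cons_sub_le (ℓ : ℕ) (l₁ l₂ : List Bool) :
    |((gaps (l₁ ++ true :: l₂)).count ℓ : ℝ) - ((gaps (l₁ ++ false :: l₂)).count ℓ : ℝ)| ≤ 2 := by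
  obtain ⟨A, a, b, B, gaps_left, gaps_right, gaps_false⟩ := exists_gaps_append_false_cons l₁ l₂
  rw [gaps_append_true_cons, gaps_left, gaps_right, gaps_false]
  simp only [List.count_append, List.count_cons, List.count_nil]
  push_cast
  rw [abs_le]
  constructor <;> (split_ifs <;> linarith)

lemma gapsOf_update {n : ℕ} (x : Fin n → Bool) (i : Fin n) (b : Bool) :
    gapsOf (Function.update x i b) =
      gaps ((List.ofFn x).take i ++ b :: (List.ofFn x).drop (i + 1)) := by
  have set_eq : (List.ofFn x).set i b =
      (List.ofFn x).take i ++ b :: (List.ofFn x).drop (i + 1) := by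
    rw [List.set_eq_take_append_cons_drop, if_pos (by simp)]
  rw [gapsOf, ← set_eq]
  congr 1
  apply List.ext_getElem
  · simp
  · intro j _ _
    simp [List.getElem_set, Function.update_apply, Fin.ext_iff, eq_comm]

/-- The mean number of gaps of length `ℓ` of a uniform string of length `n`. -/
def meanGapCount (n ℓ : ℕ) : ℝ := expX n fun x => ((gapsOf x).count ℓ : ℝ)

lemma card_gapCount_deviation_le (n ℓ : ℕ) (hn : 0 < n) :
    ((univ.filter fun x : Fin n → Bool =>
      7 * √n < |((gapsOf x).count ℓ : ℝ) - meanGapCount n ℓ|).card : ℝ) ≤ 2 ^ n * (4 / 49) := by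
  have chebyshev := card_lt_abs_sub_expX_le (fun x : Fin n → Bool => ((gapsOf x).count ℓ : ℝ))
    (c := 2) (fun x i => by
      simpa only [gapsOf_update] using abs_count_gaps_append_cons_sub_le ℓ _ _)
    (t := 7 * √n) (by positivity)
  have ratio : (n : ℝ) * 2 ^ 2 / (7 * √n) ^ 2 = 4 / 49 := by
    rw [mul_pow, Real.sq_sqrt (by positivity)]
    field_simp
    norm_num
  rwa [ratio] at chebyshev

lemma sum_headD_gapsOf_eq (n h : ℕ) :
    ∑ x : Fin (n + h + 1) → Bool, (if (gapsOf x).headD 0 = h then (1 : ℝ) else 0) = 2 ^ n := by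
  induction h with
  | zero =>
    rw [sum_strings_cons]
    simp [gapsOf_cons_true, gapsOf_cons_false, incHead]
  | succ h ih =>
    rw [show n + (h + 1) + 1 = (n + h + 1) + 1 by ring, sum_strings_cons, ← ih]
    simp [gapsOf_cons_true, gapsOf_cons_false, incHead]

lemma count_gapsOf_eq_tail_add_head {n : ℕ} (x : Fin n → Bool) (ℓ : ℕ) :
    ((gapsOf x).count ℓ : ℝ) =
      (gapsOf x).tail.count ℓ + (if (gapsOf x).headD 0 = ℓ then (1 : ℝ) else 0) := by
  obtain ⟨h, t, gaps_eq⟩ := List.exists_cons_of_ne_nil (gapsOf_ne_nil x)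
  simp [gaps_eq, List.count_cons]

lemma mul_two_pow_le_sum_count_tail_gapsOf (n ℓ : ℕ) :
    (n : ℝ) * 2 ^ n ≤ 2 * ∑ x : Fin (n + ℓ + 1) → Bool, ((gapsOf x).tail.count ℓ : ℝ) := by
  induction n with
  | zero => simp only [Nat.cast_zero, zero_mul]; positivity
  | succ n ih =>
    rw [show n + 1 + ℓ + 1 = (n + ℓ + 1) + 1 by ring, sum_strings_cons]
    simp only [gapsOf_cons_true, gapsOf_cons_false, incHead, List.tail_cons,
      count_gapsOf_eq_tail_add_head, Finset.sum_add_distrib, sum_headD_gapsOf_eq]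
    push_cast
    rw [pow_succ]
    linarith

lemma le_meanGapCount {n ℓ : ℕ} (hℓ : ℓ ≤ 6) (hn : 100 ≤ n) :
    (n : ℝ) / 300 ≤ meanGapCount n ℓ := by
  obtain ⟨k, rfl⟩ : ∃ k, n = k + ℓ + 1 := ⟨n - ℓ - 1, by omega⟩
  have pow_ℓ : (2 : ℝ) ^ (ℓ + 1) ≤ 128 :=
    calc (2 : ℝ) ^ (ℓ + 1) ≤ 2 ^ 7 := by gcongr <;> [norm_num; omega]
      _ = 128 := by norm_num
  have k_large : (93 : ℝ) ≤ k := by exact_mod_cast (by omega : 93 ≤ k)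
  have n_le : ((k + ℓ + 1 : ℕ) : ℝ) ≤ k + 7 := by exact_mod_cast (by omega : k + ℓ + 1 ≤ k + 7)
  rw [meanGapCount, expX, le_div_iff₀ (by positivity)]
  calc ((k + ℓ + 1 : ℕ) : ℝ) / 300 * 2 ^ (k + ℓ + 1)
      = ((k + ℓ + 1 : ℕ) : ℝ) / 300 * (2 ^ k * 2 ^ (ℓ + 1)) := by rw [add_assoc k, pow_add]
    _ ≤ ((k : ℝ) + 7) / 300 * (2 ^ k * 128) := by gcongr
    _ ≤ k * 2 ^ k / 2 := by nlinarith [pow_pos (two_pos : (0 : ℝ) < 2) k]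
    _ ≤ ∑ x : Fin (k + ℓ + 1) → Bool, ((gapsOf x).tail.count ℓ : ℝ) := by
        linarith [mul_two_pow_le_sum_count_tail_gapsOf k ℓ]
    _ ≤ ∑ x : Fin (k + ℓ + 1) → Bool, ((gapsOf x).count ℓ : ℝ) := by
        gcongr
        exact (List.tail_sublist _).count_le _

lemma numOnes_cons {n : ℕ} (b : Bool) (x : Fin n → Bool) :
    numOnes (Fin.cons b x : Fin (n + 1) → Bool) = numOnes x + (if b then 1 else 0) := by
  cases b <;> simp [numOnes]

lemma sum_exp_numOnes (n : ℕ) (t : ℝ) :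
    ∑ x : Fin n → Bool, Real.exp (t * (2 * numOnes x - n)) = (2 * Real.cosh t) ^ n := by
  induction n with
  | zero => simp [numOnes]
  | succ n ih =>
    rw [sum_strings_cons, pow_succ, ← ih, Finset.sum_mul, ← Finset.sum_add_distrib]
    refine Finset.sum_congr rfl fun x _ => ?_
    simp only [numOnes_cons, if_true, if_false, Bool.false_eq_true]
    push_cast
    rw [Real.cosh_eq, mul_div_cancel₀ _ two_ne_zero, mul_add (Real.exp _), ← Real.exp_add,
      ← Real.exp_add, add_comm]
    congr 2 <;> ring

lemma sum_exp_numOnes_le (n : ℕ) (t : ℝ) :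
    ∑ x : Fin n → Bool, Real.exp (t * (2 * numOnes x - n)) ≤ 2 ^ n * Real.exp (t ^ 2 / 2 * n) := by
  rw [sum_exp_numOnes, mul_pow, mul_comm _ (n : ℝ), Real.exp_nat_mul]
  gcongr
  exact Real.cosh_le_exp_half_sq t

lemma card_not_isBalanced_le (n : ℕ) {ε : ℝ} (hε : 0 < ε) :
    ((univ.filter fun x : Fin n → Bool => ¬IsBalanced ε x).card : ℝ) ≤
      2 ^ n * (2 * Real.exp (-(2 * ε ^ 2 * n))) := by
  have markov := card_mul_le_sum (fun x : Fin n → Bool => ¬IsBalanced ε x)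
    (f := fun x =>
      Real.exp (2 * ε * (2 * numOnes x - n)) + Real.exp (-(2 * ε) * (2 * numOnes x - n)))
    (t := Real.exp (4 * ε ^ 2 * n)) (fun _ => by positivity) fun x hx => by
      rw [IsBalanced, not_le, lt_abs] at hx
      rcases hx with upper | lower
      · refine le_add_of_le_of_nonneg (Real.exp_le_exp.2 ?_) (Real.exp_pos _).le
        nlinarith
      · refine le_add_of_nonneg_of_le (Real.exp_pos _).le (Real.exp_le_exp.2 ?_)
        nlinarith
  have tails := add_le_add (sum_exp_numOnes_le n (2 * ε)) (sum_exp_numOnes_le n (-(2 * ε)))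
  rw [Finset.sum_add_distrib] at markov
  refine le_of_mul_le_mul_right (markov.trans (tails.trans_eq ?_))
    (Real.exp_pos (4 * ε ^ 2 * n))
  rw [show 4 * ε ^ 2 * n = 2 * ε ^ 2 * n + 2 * ε ^ 2 * n by ring, Real.exp_add, Real.exp_neg,
    neg_sq, show (2 * ε) ^ 2 / 2 * n = 2 * ε ^ 2 * n by ring]
  field_simp
  norm_num

/-! ### A lower bound for the number of strings with nearly typical block counts -/

lemma take_idxOf_append_cons_drop {a : List ℕ} {p : ℕ} (h : p ∈ a) :
    a.take (a.idxOf p) ++ p :: a.drop (a.idxOf p + 1) = a := by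
  have idxOf_lt := List.idxOf_lt_length_of_mem h
  conv_rhs => rw [← List.take_append_drop (a.idxOf p) a, List.drop_eq_getElem_cons idxOf_lt,
    List.getElem_idxOf idxOf_lt]

/-- The string obtained from `x` by replacing its first gap of length `p` by the list `B` of
gaps. It has the length of `x` if `B.sum + B.length = p + 1`. -/
def replaceGap {n : ℕ} (x : Fin n → Bool) (p : ℕ) (B : List ℕ) : Fin n → Bool :=
  strOfGaps n ((gapsOf x).take ((gapsOf x).idxOf p) ++
    (B ++ (gapsOf x).drop ((gapsOf x).idxOf p + 1)))

section ReplaceGap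

variable {n p : ℕ} {x : Fin n → Bool} {B : List ℕ}

lemma gapsOf_replaceGap (hp : p ∈ gapsOf x) (hB : B.sum + B.length = p + 1) :
    gapsOf (replaceGap x p B) = (gapsOf x).take ((gapsOf x).idxOf p) ++
      (B ++ (gapsOf x).drop ((gapsOf x).idxOf p + 1)) := by
  have total := sum_add_length_gapsOf x
  rw [← take_idxOf_append_cons_drop hp] at total
  simp only [List.sum_append, List.length_append, List.sum_cons, List.length_cons] at total
  apply gapsOf_strOfGaps
  · have : B ≠ [] := by rintro rfl; simp at hB
    simp [this]
  · simp only [List.sum_append, List.length_append]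
    omega

lemma count_gapsOf_replaceGap (hp : p ∈ gapsOf x) (hB : B.sum + B.length = p + 1) (c : ℕ) :
    (gapsOf (replaceGap x p B)).count c + (if p = c then 1 else 0) =
      (gapsOf x).count c + B.count c := by
  rw [gapsOf_replaceGap hp hB]
  conv_rhs => rw [← take_idxOf_append_cons_drop hp]
  simp only [List.count_append, List.count_cons, beq_iff_eq]
  omega

lemma eq_of_replaceGap_eq {x' : Fin n → Bool} (hp : p ∈ gapsOf x) (hp' : p ∈ gapsOf x')
    (hB : B.sum + B.length = p + 1) (idxOf_eq : (gapsOf x).idxOf p = (gapsOf x').idxOf p)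
    (h : replaceGap x p B = replaceGap x' p B) : x = x' := by
  have gaps_eq := congrArg gapsOf h
  rw [gapsOf_replaceGap hp hB, gapsOf_replaceGap hp' hB] at gaps_eq
  have idxOf_le := (List.idxOf_lt_length_of_mem hp).le
  have idxOf_le' := (List.idxOf_lt_length_of_mem hp').le
  obtain ⟨take_eq, drop_eq⟩ := List.append_inj gaps_eq (by
    rw [List.length_take_of_le idxOf_le, List.length_take_of_le idxOf_le', idxOf_eq])
  apply gapsOf_injective
  rw [← take_idxOf_append_cons_drop hp, ← take_idxOf_append_cons_drop hp', take_eq,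
    List.append_cancel_left drop_eq]

-- `x` is determined by `replaceGap x p B` and the index of the replaced gap.
lemma card_le_mul_card_of_replaceGap_mem {s t : Finset (Fin n → Bool)} (p : ℕ) (B : List ℕ)
    (hB : B.sum + B.length = p + 1) (hs : ∀ x ∈ s, p ∈ gapsOf x)
    (hst : ∀ x ∈ s, replaceGap x p B ∈ t) : s.card ≤ (n + 1) * t.card := by
  have idxOf_lt (x : Fin n → Bool) (hx : x ∈ s) : (gapsOf x).idxOf p < n + 1 :=
    (List.idxOf_lt_length_of_mem (hs x hx)).trans_le
      (le_of_add_le_right (sum_add_length_gapsOf x).le)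
  have injOn := Finset.card_le_card_of_injOn (s := s) (t := Finset.range (n + 1) ×ˢ t)
    (fun x => ((gapsOf x).idxOf p, replaceGap x p B))
    (fun x hx => Finset.mem_product.2 ⟨Finset.mem_range.2 (idxOf_lt x hx), hst x hx⟩)
    (fun x hx x' hx' h => eq_of_replaceGap_eq (hs x hx) (hs x' hx') hB
      (congrArg Prod.fst h) (congrArg Prod.snd h))
  simpa using injOn

end ReplaceGap

lemma blockLen_pos (i : Fin 4) : 0 < blockLen i := by fin_cases i <;> simp [blockLen]

lemma blockLen_lt_six (i : Fin 4) : blockLen i < 6 := by fin_cases i <;> simp [blockLen]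

lemma blockLen_injective : Function.Injective blockLen := by decide

lemma count_replicate_zero (k : ℕ) {c : ℕ} (h : 0 < c) : (List.replicate k 0).count c = 0 :=
  List.count_eq_zero.2 fun hc => h.ne (List.eq_of_mem_replicate hc).symm

/-- Strings with block counts `v` and at least `r` blocks of length six; the latter serve as a
reservoir out of which blocks of the other lengths are produced. -/
def reservoirStrings (n : ℕ) (v : Fin 4 → ℕ) (r : ℕ) : Finset (Fin n → Bool) :=
  (strSetV n v).filter fun x => r ≤ (gapsOf x).count 6

section Reservoir

variable {n r : ℕ} {v w : Fin 4 → ℕ}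

lemma mem_reservoirStrings {x : Fin n → Bool} : x ∈ reservoirStrings n v r ↔
    (∀ i, (gapsOf x).count (blockLen i) = v i) ∧ r ≤ (gapsOf x).count 6 := by
  rw [reservoirStrings, Finset.mem_filter, strSetV, Finset.mem_filter]
  simp [numBlocks_eq_count _ _ (blockLen_pos _)]

lemma card_reservoirStrings_add_single_le (n r : ℕ) (w : Fin 4 → ℕ) (i : Fin 4) :
    (reservoirStrings n (w + Pi.single i 1) (r + 1)).card ≤
      (n + 1) * (reservoirStrings n w r).card := by
  have removable (x : Fin n → Bool) (hx : x ∈ reservoirStrings n (w + Pi.single i 1) (r + 1)) :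
      blockLen i ∈ gapsOf x := by
    rw [← List.count_pos_iff, (mem_reservoirStrings.1 hx).1 i]
    simp
  have sum_eq : (List.replicate (blockLen i + 1) 0).sum +
      (List.replicate (blockLen i + 1) 0).length = blockLen i + 1 := by simp
  refine card_le_mul_card_of_replaceGap_mem (blockLen i) _ sum_eq removable fun x hx => ?_
  have count := count_gapsOf_replaceGap (removable x hx) sum_eq
  obtain ⟨counts, sixes⟩ := mem_reservoirStrings.1 hx
  refine mem_reservoirStrings.2 ⟨fun j => ?_, ?_⟩
  · have count_j := count (blockLen j)
    rw [count_replicate_zero _ (blockLen_pos j), counts j, Pi.add_apply, Pi.single_apply] at count_j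
    simpa only [blockLen_injective.eq_iff, eq_comm (a := i), add_zero, add_left_inj] using count_j
  · have count_six := count 6
    rw [count_replicate_zero _ (by norm_num), if_neg (blockLen_lt_six i).ne] at count_six
    omega

lemma card_reservoirStrings_le_add_single (n r : ℕ) (v : Fin 4 → ℕ) (i : Fin 4) :
    (reservoirStrings n v (r + 1)).card ≤
      (n + 1) * (reservoirStrings n (v + Pi.single i 1) r).card := by
  have six_mem (x : Fin n → Bool) (hx : x ∈ reservoirStrings n v (r + 1)) : 6 ∈ gapsOf x := by
    rw [← List.count_pos_iff]
    exact (Nat.succ_pos r).trans_le (mem_reservoirStrings.1 hx).2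
  have lt_six := blockLen_lt_six i
  have sum_eq : (blockLen i :: List.replicate (6 - blockLen i) 0).sum +
      (blockLen i :: List.replicate (6 - blockLen i) 0).length = 6 + 1 := by
    simp only [List.sum_cons, List.sum_replicate, smul_zero, List.length_cons,
      List.length_replicate]
    omega
  refine card_le_mul_card_of_replaceGap_mem 6 _ sum_eq six_mem fun x hx => ?_
  have count := count_gapsOf_replaceGap (six_mem x hx) sum_eq
  obtain ⟨counts, sixes⟩ := mem_reservoirStrings.1 hx
  refine mem_reservoirStrings.2 ⟨fun j => ?_, ?_⟩
  · have count_j := count (blockLen j)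
    rw [if_neg (blockLen_lt_six j).ne', List.count_cons, count_replicate_zero _ (blockLen_pos j),
      counts j] at count_j
    rw [Pi.add_apply, Pi.single_apply]
    simpa only [beq_iff_eq, blockLen_injective.eq_iff, eq_comm (a := i), add_zero, zero_add]
      using count_j
  · have count_six := count 6
    rw [if_pos rfl] at count_six
    omega

/-- The `ℓ¹` distance of two block-count vectors. -/
def countDist (v w : Fin 4 → ℕ) : ℕ := ∑ i, Nat.dist (v i) (w i)

lemma countDist_add_single_add_one {i : Fin 4} (h : v i < w i) :
    countDist (v + Pi.single i 1) w + 1 = countDist v w := by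
  fin_cases i <;> simp [countDist, Fin.sum_univ_four, Nat.dist] at h ⊢ <;> omega

lemma countDist_add_single {i : Fin 4} (h : w i ≤ v i) :
    countDist (v + Pi.single i 1) w = countDist v w + 1 := by
  fin_cases i <;> simp [countDist, Fin.sum_univ_four, Nat.dist] at h ⊢ <;> omega

lemma eq_of_countDist_eq_zero (h : countDist v w = 0) : v = w :=
  funext fun i => Nat.eq_of_dist_eq_zero (Finset.sum_eq_zero_iff.1 h i (Finset.mem_univ i))

lemma card_reservoirStrings_le (n r : ℕ) (v w : Fin 4 → ℕ) :
    (reservoirStrings n v (countDist v w + r)).card ≤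
      (n + 1) ^ countDist v w * (reservoirStrings n w r).card := by
  induction hD : countDist v w generalizing v r with
  | zero => simp [eq_of_countDist_eq_zero hD]
  | succ D ih =>
    rw [pow_succ', mul_assoc, Nat.add_right_comm]
    obtain ⟨i, hi⟩ : ∃ i, v i ≠ w i := by
      by_contra! h
      simp [countDist, h] at hD
    rcases Nat.lt_or_gt_of_ne hi with below | above
    · refine (card_reservoirStrings_le_add_single n (D + r) v i).trans (Nat.mul_le_mul_left _ ?_)
      exact ih r _ (by have := countDist_add_single_add_one below; omega)
    · obtain ⟨v', rfl⟩ : ∃ v', v = v' + Pi.single i 1 :=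
        ⟨Function.update v i (v i - 1), funext fun j => by
          rcases eq_or_ne j i with rfl | hj
          · simp only [Pi.add_apply, Function.update_self, Pi.single_eq_same]
            omega
          · simp [hj]⟩
      simp only [Pi.add_apply, Pi.single_eq_same] at above
      refine (card_reservoirStrings_add_single_le n (D + r) v' i).trans (Nat.mul_le_mul_left _ ?_)
      exact ih r _ (by have := countDist_add_single (Nat.lt_succ_iff.1 above); omega)

end Reservoir

lemma muVec_eq_meanGapCount (n : ℕ) (i : Fin 4) : muVec n i = meanGapCount n (blockLen i) := by
  simp only [muVec, meanGapCount, numBlocks_eq_count _ _ (blockLen_pos i)]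

/-- The strings all of whose relevant block counts are within `7√n` of their means. -/
def typicalStrings (n : ℕ) : Finset (Fin n → Bool) := univ.filter fun x =>
  ∀ ℓ ∈ ({1, 2, 4, 5, 6} : Finset ℕ), |((gapsOf x).count ℓ : ℝ) - meanGapCount n ℓ| ≤ 7 * √n

lemma mem_typicalStrings {n : ℕ} {x : Fin n → Bool} : x ∈ typicalStrings n ↔
    ∀ ℓ ∈ ({1, 2, 4, 5, 6} : Finset ℕ),
      |((gapsOf x).count ℓ : ℝ) - meanGapCount n ℓ| ≤ 7 * √n := by
  simp [typicalStrings]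

lemma two_pow_le_two_mul_card_typicalStrings (n : ℕ) (hn : 0 < n) :
    (2 : ℝ) ^ n ≤ 2 * (typicalStrings n).card := by
  let atypical (ℓ : ℕ) : Finset (Fin n → Bool) :=
    univ.filter fun x => 7 * √n < |((gapsOf x).count ℓ : ℝ) - meanGapCount n ℓ|
  have cover : univ ⊆ typicalStrings n ∪ ({1, 2, 4, 5, 6} : Finset ℕ).biUnion atypical := by
    intro x _
    rw [Finset.mem_union, mem_typicalStrings, Finset.mem_biUnion]
    by_contra! h
    obtain ⟨⟨ℓ, hℓ, far⟩, not_atypical⟩ := h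
    exact not_atypical ℓ hℓ (Finset.mem_filter.2 ⟨Finset.mem_univ x, far⟩)
  have card_le := (Finset.card_le_card cover).trans
    ((Finset.card_union_le _ _).trans (Nat.add_le_add_left Finset.card_biUnion_le _))
  rw [Finset.card_univ, Fintype.card_fun, Fintype.card_bool, Fintype.card_fin] at card_le
  have atypical_le : ∑ ℓ ∈ ({1, 2, 4, 5, 6} : Finset ℕ), ((atypical ℓ).card : ℝ) ≤
      ∑ _ℓ ∈ ({1, 2, 4, 5, 6} : Finset ℕ), 2 ^ n * (4 / 49) :=
    Finset.sum_le_sum fun ℓ _ => card_gapCount_deviation_le n ℓ hn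
  rw [Finset.sum_const, nsmul_eq_mul, show ({1, 2, 4, 5, 6} : Finset ℕ).card = 5 from rfl]
    at atypical_le
  have card_le_real : (2 : ℝ) ^ n ≤
      (typicalStrings n).card + ∑ ℓ ∈ ({1, 2, 4, 5, 6} : Finset ℕ), ((atypical ℓ).card : ℝ) := by
    exact_mod_cast card_le
  push_cast at atypical_le
  linarith [pow_pos (two_pos : (0 : ℝ) < 2) n]

lemma natCast_dist_eq_abs_sub (a b : ℕ) : (Nat.dist a b : ℝ) = |(a : ℝ) - b| := by
  rcases le_total a b with h | h
  · rw [Nat.dist_eq_sub_of_le h, Nat.cast_sub h, abs_sub_comm, abs_of_nonneg]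
    exact sub_nonneg.2 (Nat.cast_le.2 h)
  · rw [Nat.dist_eq_sub_of_le_right h, Nat.cast_sub h, abs_of_nonneg]
    exact sub_nonneg.2 (Nat.cast_le.2 h)

lemma countDist_le {v w : Fin 4 → ℕ} {m : Fin 4 → ℝ} {a b : ℝ} (hv : ∀ i, |v i - m i| ≤ a)
    (hw : ∀ i, |w i - m i| ≤ b) : (countDist v w : ℝ) ≤ 4 * (a + b) := by
  rw [countDist, Nat.cast_sum]
  calc ∑ i, (Nat.dist (v i) (w i) : ℝ) ≤ ∑ _i : Fin 4, (a + b) :=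
        Finset.sum_le_sum fun i _ => by
          rw [natCast_dist_eq_abs_sub]
          have := hw i
          rw [abs_sub_comm] at this
          exact (abs_sub_le _ _ _).trans (add_le_add (hv i) this)
    _ = 4 * (a + b) := by rw [Fin.sum_const, nsmul_eq_mul, Nat.cast_ofNat]

lemma blockLen_mem (i : Fin 4) : blockLen i ∈ ({1, 2, 4, 5, 6} : Finset ℕ) := by
  fin_cases i <;> simp [blockLen]

lemma card_typicalStrings_inter_strSetV_le {n D : ℕ} {K : ℝ} {u : Fin 4 → ℕ}
    (hu : ∀ i, |(u i : ℝ) - muVec n i| ≤ K * √n) (hD : 4 * ((7 + K) * √n) ≤ D)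
    (h6 : (D : ℝ) + 7 * √n ≤ meanGapCount n 6) (v : Fin 4 → ℕ) :
    (typicalStrings n ∩ strSetV n v).card ≤ (n + 1) ^ D * (strSetV n u).card := by
  rcases (typicalStrings n ∩ strSetV n v).eq_empty_or_nonempty with empty | ⟨x, hx⟩
  · simp [empty]
  rw [Finset.mem_inter] at hx
  have hv (i : Fin 4) : |(v i : ℝ) - muVec n i| ≤ 7 * √n := by
    rw [muVec_eq_meanGapCount, ← (Finset.mem_filter.1 hx.2).2 i,
      numBlocks_eq_count _ _ (blockLen_pos i)]
    exact mem_typicalStrings.1 hx.1 _ (blockLen_mem i)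
  have dist_le : countDist v u ≤ D := by
    have := countDist_le hv hu
    exact_mod_cast (by linarith : (countDist v u : ℝ) ≤ D)
  have subset_reservoir : typicalStrings n ∩ strSetV n v ⊆
      reservoirStrings n v (countDist v u + 0) := fun y hy => by
    rw [Finset.mem_inter] at hy
    refine Finset.mem_filter.2 ⟨hy.2, ?_⟩
    have sixes := abs_le.1 (mem_typicalStrings.1 hy.1 6 (by simp))
    have dist_le_real : (countDist v u : ℝ) ≤ D := Nat.cast_le.2 dist_le
    exact_mod_cast (by linarith : (countDist v u : ℝ) ≤ (gapsOf y).count 6)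
  calc (typicalStrings n ∩ strSetV n v).card
      ≤ (reservoirStrings n v (countDist v u + 0)).card := Finset.card_le_card subset_reservoir
    _ ≤ (n + 1) ^ countDist v u * (reservoirStrings n u 0).card := card_reservoirStrings_le n 0 v u
    _ ≤ (n + 1) ^ D * (strSetV n u).card := by
        gcongr
        · omega
        · exact Finset.filter_subset _ _

-- With `D = O(√n)` this is `card (strSetV n u) ≥ 2 ^ n * exp (-O(√n log n))`.
lemma two_pow_le_mul_card_strSetV {n D : ℕ} (hn : 0 < n) {K : ℝ} {u : Fin 4 → ℕ}
    (hu : ∀ i, |(u i : ℝ) - muVec n i| ≤ K * √n) (hD : 4 * ((7 + K) * √n) ≤ D)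
    (h6 : (D : ℝ) + 7 * √n ≤ meanGapCount n 6) :
    (2 : ℝ) ^ n ≤ 2 * ((n + 2) ^ (4 + D) * (strSetV n u).card) := by
  have card_typical_le : (typicalStrings n).card ≤ ((n + 1) ^ D * (strSetV n u).card) *
      (Fintype.piFinset fun _ : Fin 4 => Finset.range (n + 2)).card := by
    refine Finset.card_le_mul_card_image_of_maps_to
      (f := fun x i => numBlocks x (blockLen i)) (fun x _ => ?_) _ fun v _ => ?_
    · refine Fintype.mem_piFinset.2 fun i => Finset.mem_range.2 ?_
      rw [numBlocks_eq_count _ _ (blockLen_pos i)]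
      have count_le : (gapsOf x).count (blockLen i) ≤ (gapsOf x).length := List.count_le_length
      have total := sum_add_length_gapsOf x
      omega
    · refine le_trans (Finset.card_le_card fun x hx => ?_)
        (card_typicalStrings_inter_strSetV_le hu hD h6 v)
      obtain ⟨typical, rfl⟩ := Finset.mem_filter.1 hx
      exact Finset.mem_inter.2 ⟨typical, by simp [strSetV]⟩
  have card_le : (typicalStrings n).card ≤ (n + 2) ^ (4 + D) * (strSetV n u).card := by
    rw [Fintype.card_piFinset_const, Finset.card_range] at card_typical_le
    calc (typicalStrings n).card
        ≤ ((n + 1) ^ D * (strSetV n u).card) * (n + 2) ^ 4 := card_typical_le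
      _ ≤ ((n + 2) ^ D * (strSetV n u).card) * (n + 2) ^ 4 := by gcongr; omega
      _ = (n + 2) ^ (4 + D) * (strSetV n u).card := by ring
  have card_le_real : ((typicalStrings n).card : ℝ) ≤ (n + 2) ^ (4 + D) * (strSetV n u).card := by
    exact_mod_cast card_le
  linarith [two_pow_le_two_mul_card_typicalStrings n hn]

/-! ### Base points of the chains which reach the set `Iⁿ` -/

lemma abs_le_enorm4 (v : Fin 4 → ℝ) (i : Fin 4) : |v i| ≤ enorm4 v :=
  Real.abs_le_sqrt (Finset.single_le_sum (f := fun i => v i ^ 2) (fun _ _ => sq_nonneg _)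
    (Finset.mem_univ i))

lemma abs_evec (i : Fin 4) : |evec i| = 1 := by fin_cases i <;> simp [evec]

lemma natVec_shiftCounts {m : Fin 4 → ℕ} {k : ℕ} (h0 : k ≤ m 0) (h3 : k ≤ m 3) :
    natVec (shiftCounts m k) = natVec m + (k : ℝ) • evec := by
  funext i
  fin_cases i <;> simp [natVec, shiftCounts, evec, h0, h3, sub_eq_add_neg]

section MemIset

variable {n : ℕ} {C : ℝ} {w : Fin 4 → ℝ}

lemma abs_sub_muVec_le_of_mem_Iset (hC : 0 < C) (hw : w ∈ Iset n C) (i : Fin 4) :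
    |w i - muVec n i| ≤ 2 * C * √n := by
  obtain ⟨v, -, hv, k, hk, rfl⟩ := hw
  have v_le : |v i| ≤ √n := (abs_le_enorm4 v i).trans hv
  have k_le : |k * evec i| ≤ √n := by rwa [abs_mul, abs_evec, mul_one]
  calc |(C • v + C • (k • evec) + muVec n) i - muVec n i| = |C * (v i + k * evec i)| := by
        rw [Pi.add_apply, add_sub_cancel_right]
        simp only [Pi.add_apply, Pi.smul_apply, smul_eq_mul, mul_add]
    _ = C * |v i + k * evec i| := by rw [abs_mul, abs_of_pos hC]
    _ ≤ C * (√n + √n) := by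
        gcongr
        exact (abs_add_le _ _).trans (add_le_add v_le k_le)
    _ = 2 * C * √n := by ring

lemma le_of_mem_Iset (hC : 0 < C) (hn : 100 ≤ n) (hCn : 2400 * C ≤ √n) (hw : w ∈ Iset n C)
    (i : Fin 4) : 1 / 400 * (n : ℝ) ≤ w i := by
  have near := (abs_le.1 (abs_sub_muVec_le_of_mem_Iset hC hw i)).1
  have mean : (n : ℝ) / 300 ≤ muVec n i :=
    muVec_eq_meanGapCount n i ▸ le_meanGapCount (blockLen_lt_six i).le hn
  have loss : 2400 * C * √n ≤ n := by
    simpa only [Real.mul_self_sqrt (Nat.cast_nonneg n)] using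
      mul_le_mul_of_nonneg_right hCn (Real.sqrt_nonneg n)
  linarith

lemma add_le_of_natVec_add_smul_evec_mem_Iset (hC : 0 < C) (hn : 100 ≤ n) (hCn : 2400 * C ≤ √n)
    {m : Fin 4 → ℕ} {k : ℕ} (hk : natVec m + (k : ℝ) • evec ∈ Iset n C) :
    1 / 400 * (n : ℝ) + k ≤ m 0 ∧ 1 / 400 * (n : ℝ) + k ≤ m 3 := by
  have bound0 := le_of_mem_Iset hC hn hCn hk 0
  have bound3 := le_of_mem_Iset hC hn hCn hk 3
  simp only [natVec, evec, Pi.add_apply, Pi.smul_apply, Matrix.cons_val, smul_eq_mul]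
    at bound0 bound3
  constructor <;> linarith

end MemIset

lemma le_natCast_of_add_le {c : ℝ} {n k a : ℕ} (hc : 0 ≤ c) (h : c * n + k ≤ (a : ℝ)) : k ≤ a := by
  have : 0 ≤ c * n := by positivity
  exact_mod_cast (by linarith : (k : ℝ) ≤ a)

section Asymptotics

lemma eventually_le_sqrt (c : ℝ) : ∀ᶠ n : ℕ in atTop, c ≤ √(n : ℝ) :=
  (Real.tendsto_sqrt_atTop.comp tendsto_natCast_atTop_atTop).eventually_ge_atTop c

lemma eventually_le_sqrt_sqrt (c : ℝ) : ∀ᶠ n : ℕ in atTop, c ≤ √√(n : ℝ) :=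
  (Real.tendsto_sqrt_atTop.comp
    (Real.tendsto_sqrt_atTop.comp tendsto_natCast_atTop_atTop)).eventually_ge_atTop c

lemma sqrt_sqrt_pow_four {x : ℝ} (hx : 0 ≤ x) : √√x ^ 4 = x := by
  rw [show √√x ^ 4 = (√√x ^ 2) ^ 2 by ring, Real.sq_sqrt (Real.sqrt_nonneg x), Real.sq_sqrt hx]

lemma log_add_two_le {x : ℝ} (hx : 1 ≤ x) : Real.log (x + 2) ≤ 8 * √√x := by
  have x_pos : 0 < x := by positivity
  have le_pow : x + 2 ≤ (2 * √√x) ^ 4 := by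
    rw [mul_pow, sqrt_sqrt_pow_four x_pos.le]
    linarith
  calc Real.log (x + 2) ≤ Real.log ((2 * √√x) ^ 4) := Real.log_le_log (by positivity) le_pow
    _ = 4 * Real.log (2 * √√x) := by rw [Real.log_pow, Nat.cast_ofNat]
    _ ≤ 4 * (2 * √√x) := by gcongr; exact Real.log_le_self (by positivity)
    _ = 8 * √√x := by ring

lemma add_two_pow_le_exp {a b x : ℝ} {d : ℕ} (ha : 0 ≤ a) (hb : 0 < b) (hx : 1 ≤ x)
    (hd : d ≤ a * √x + 1) (hax : 8 * (5 + a) / b ≤ √√x) :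
    (x + 2) ^ (4 + d) ≤ Real.exp (b * x) := by
  rw [div_le_iff₀ hb, mul_comm _ b] at hax
  have degree_le : (4 + d : ℝ) ≤ (5 + a) * √√x ^ 2 := by
    rw [Real.sq_sqrt (Real.sqrt_nonneg x)]
    have : 1 ≤ √x := Real.one_le_sqrt.2 hx
    linarith
  rw [← Real.exp_log (by positivity : 0 < x + 2), ← Real.exp_nat_mul]
  apply Real.exp_le_exp.2
  push_cast
  calc (4 + d : ℝ) * Real.log (x + 2) ≤ (5 + a) * √√x ^ 2 * (8 * √√x) := by
        gcongr
        · exact Real.log_nonneg (by linarith)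
        · exact log_add_two_le hx
    _ = 8 * (5 + a) * √√x ^ 3 := by ring
    _ ≤ b * √√x * √√x ^ 3 := by gcongr
    _ = b * √√x ^ 4 := by ring
    _ = b * x := by rw [sqrt_sqrt_pow_four (by positivity)]

end Asymptotics

/-- The strings with block counts `m` whose proportion of ones differs from `1 / 2` by more
than `ε`. -/
def unbalancedStrings (ε : ℝ) (n : ℕ) (m : Fin 4 → ℕ) : Finset (Fin n → Bool) :=
  strSetOnes n m fun k => ¬|(k : ℝ) - n / 2| ≤ ε * n

lemma mem_unbalancedStrings {ε : ℝ} {n : ℕ} {m : Fin 4 → ℕ} {x : Fin n → Bool} :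
    x ∈ unbalancedStrings ε n m ↔ x ∈ strSetV n m ∧ ¬IsBalanced ε x := mem_strSetOnes

section Unbalanced

variable {ε C : ℝ}

lemma eventually_two_pow_le_card_strSetV {b : ℝ} (hb : 0 < b) (hC : 0 < C) :
    ∀ᶠ n : ℕ in atTop, ∀ u : Fin 4 → ℕ, natVec u ∈ Iset n C →
      (2 : ℝ) ^ n ≤ 2 * (Real.exp (b * n) * (strSetV n u).card) := by
  set a := 4 * (7 + 2 * C) with a_def
  have a_pos : 0 < a := by positivity
  filter_upwards [eventually_ge_atTop 100, eventually_le_sqrt (300 * (a + 8)),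
    eventually_le_sqrt_sqrt (8 * (5 + a) / b)] with n hn hna hnb u hu
  have le_ceil : 4 * ((7 + 2 * C) * √n) ≤ ⌈a * √(n : ℝ)⌉₊ := by
    rw [← mul_assoc, ← a_def]
    exact Nat.le_ceil _
  have ceil_le : (⌈a * √(n : ℝ)⌉₊ : ℝ) ≤ a * √n + 1 := (Nat.ceil_lt_add_one (by positivity)).le
  have one_le : (1 : ℝ) ≤ n := by exact_mod_cast (by omega : 1 ≤ n)
  have sixes : (⌈a * √(n : ℝ)⌉₊ : ℝ) + 7 * √n ≤ meanGapCount n 6 := by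
    have := mul_le_mul_of_nonneg_right hna (Real.sqrt_nonneg n)
    rw [Real.mul_self_sqrt n.cast_nonneg] at this
    linarith [le_meanGapCount (le_refl 6) hn, Real.one_le_sqrt.2 one_le]
  refine (two_pow_le_mul_card_strSetV (by omega) (abs_sub_muVec_le_of_mem_Iset hC hu)
    le_ceil sixes).trans ?_
  gcongr
  exact add_two_pow_le_exp a_pos.le hb one_le ceil_le hnb

lemma eventually_card_unbalancedStrings_le_of_mem_Iset (hε : 0 < ε) (hC : 0 < C) :
    ∀ᶠ n : ℕ in atTop, ∀ u : Fin 4 → ℕ, natVec u ∈ Iset n C →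
      ((unbalancedStrings ε n u).card : ℝ) ≤
        (strSetV n u).card * (4 * Real.exp (-(ε ^ 2 * n))) := by
  filter_upwards [eventually_two_pow_le_card_strSetV (pow_pos hε 2) hC] with n lower u hu
  have exp_mul_exp : Real.exp (ε ^ 2 * n) * Real.exp (-(2 * ε ^ 2 * n)) =
      Real.exp (-(ε ^ 2 * n)) := by
    rw [← Real.exp_add]
    ring_nf
  have subset_all : unbalancedStrings ε n u ⊆ univ.filter fun x => ¬IsBalanced ε x :=
    fun x hx => Finset.mem_filter.2 ⟨Finset.mem_univ x, (mem_unbalancedStrings.1 hx).2⟩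
  calc ((unbalancedStrings ε n u).card : ℝ)
      ≤ (univ.filter fun x : Fin n → Bool => ¬IsBalanced ε x).card :=
        Nat.cast_le.2 (Finset.card_le_card subset_all)
    _ ≤ 2 ^ n * (2 * Real.exp (-(2 * ε ^ 2 * n))) := card_not_isBalanced_le n hε
    _ ≤ 2 * (Real.exp (ε ^ 2 * n) * (strSetV n u).card) *
          (2 * Real.exp (-(2 * ε ^ 2 * n))) := by gcongr; exact lower u hu
    _ = (strSetV n u).card * (4 * (Real.exp (ε ^ 2 * n) * Real.exp (-(2 * ε ^ 2 * n)))) := by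
        ring
    _ = (strSetV n u).card * (4 * Real.exp (-(ε ^ 2 * n))) := by rw [exp_mul_exp]

-- `natVec m` itself may be far from `Iset n C`.
lemma eventually_card_unbalancedStrings_le (hε : 0 < ε) (hC : 0 < C) :
    ∀ᶠ n : ℕ in atTop, ∀ (m : Fin 4 → ℕ) (k : ℕ), (strSetV n m).Nonempty →
      natVec m + (k : ℝ) • evec ∈ Iset n C → ((unbalancedStrings ε n m).card : ℝ) ≤
        (strSetV n m).card * (4 * Real.exp (-(ε ^ 2 * n))) := by
  filter_upwards [eventually_ge_atTop 100, eventually_le_sqrt (2400 * C),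
    eventually_card_unbalancedStrings_le_of_mem_Iset hε hC] with n hn hCn bound m k hne hk
  obtain ⟨le0, le3⟩ := add_le_of_natVec_add_smul_evec_mem_Iset hC hn hCn hk
  have k_le0 : k ≤ m 0 := le_natCast_of_add_le (by norm_num) le0
  have k_le3 : k ≤ m 3 := le_natCast_of_add_le (by norm_num) le3
  have pos : (0 : ℝ) < (strSetV n (shiftCounts m k)).card :=
    Nat.cast_pos.2 (Finset.card_pos.2 (strSetV_shiftCounts_nonempty hne k_le0 k_le3))
  rw [← natVec_shiftCounts k_le0 k_le3] at hk
  have same_fraction : ((unbalancedStrings ε n m).card : ℝ) * (strSetV n (shiftCounts m k)).card =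
      (unbalancedStrings ε n (shiftCounts m k)).card * (strSetV n m).card := by
    exact_mod_cast card_strSetOnes_mul_card_strSetV hne k_le0 k_le3 _
  refine le_of_mul_le_mul_right ?_ pos
  calc ((unbalancedStrings ε n m).card : ℝ) * (strSetV n (shiftCounts m k)).card
      ≤ (strSetV n (shiftCounts m k)).card * (4 * Real.exp (-(ε ^ 2 * n))) *
          (strSetV n m).card := same_fraction ▸ by gcongr; exact bound _ hk
    _ = (strSetV n m).card * (4 * Real.exp (-(ε ^ 2 * n))) *
          (strSetV n (shiftCounts m k)).card := by ring

end Unbalanced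

/-! ### Sums over histories of a Markov chain -/

/-- The sum of `F` over all histories of length `k`; the coordinates from `k` on, on which `F` is
meant not to depend, are set to a default value. -/
def sumHistories {α : Type*} [Fintype α] [Inhabited α] : ℕ → ((ℕ → α) → ℝ) → ℝ
  | 0, F => F fun _ => default
  | k + 1, F => sumHistories k fun xs => ∑ z, F (Function.update xs k z)

/-- The probability of the history `xs 0, …, xs k` of a Markov chain with initial law `ν` and
transition matrix `T`. -/
def historyWeight {α : Type*} (ν : α → ℝ) (T : α → α → ℝ) (k : ℕ) (xs : ℕ → α) : ℝ :=
  ν (xs 0) * ∏ i ∈ Finset.range k, T (xs i) (xs (i + 1))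

/-- `f` is the mass function of a measure of total mass at most one. -/
structure IsSubprobability {α : Type*} [Fintype α] (f : α → ℝ) : Prop where
  nonneg : ∀ x, 0 ≤ f x
  sum_le_one : ∑ x, f x ≤ 1

section Histories

variable {α : Type*}

lemma historyWeight_succ (ν : α → ℝ) (T : α → α → ℝ) (k : ℕ) (xs : ℕ → α) :
    historyWeight ν T (k + 1) xs = historyWeight ν T k xs * T (xs k) (xs (k + 1)) := by
  rw [historyWeight, historyWeight, Finset.prod_range_succ, mul_assoc]

lemma historyWeight_nonneg {ν : α → ℝ} {T : α → α → ℝ} (hν : ∀ x, 0 ≤ ν x)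
    (hT : ∀ x z, 0 ≤ T x z) (k : ℕ) (xs : ℕ → α) : 0 ≤ historyWeight ν T k xs :=
  mul_nonneg (hν _) (Finset.prod_nonneg fun _ _ => hT _ _)

variable [Fintype α] [Inhabited α]

lemma sumHistories_mono (k : ℕ) {F G : (ℕ → α) → ℝ} (h : ∀ xs, F xs ≤ G xs) :
    sumHistories k F ≤ sumHistories k G := by
  induction k generalizing F G with
  | zero => exact h _
  | succ k ih => exact ih fun xs => Finset.sum_le_sum fun z _ => h _

lemma sumHistories_mul_right (k : ℕ) (F : (ℕ → α) → ℝ) (c : ℝ) :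
    sumHistories k (fun xs => F xs * c) = sumHistories k F * c := by
  induction k generalizing F with
  | zero => rfl
  | succ k ih => simp only [sumHistories, ← Finset.sum_mul, ih]

lemma sumHistories_sum {ι : Type*} (s : Finset ι) (k : ℕ) (F : ι → (ℕ → α) → ℝ) :
    sumHistories k (fun xs => ∑ y ∈ s, F y xs) = ∑ y ∈ s, sumHistories k (F y) := by
  induction k generalizing F with
  | zero => rfl
  | succ k ih => simp only [sumHistories, ← ih, Finset.sum_comm (s := univ)]

lemma sumHistories_prod_le {ν : α → ℝ} (hν : IsSubprobability ν) {v : ℕ → α → α → ℝ} {r : ℕ → ℝ}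
    (hv : ∀ i x z, 0 ≤ v i x z) (hr : ∀ i, 0 ≤ r i) (hvr : ∀ i x, ∑ z, v i x z ≤ r i) (k : ℕ) :
    sumHistories (k + 1) (fun xs => ν (xs 0) * ∏ i ∈ Finset.range k, v i (xs i) (xs (i + 1))) ≤
      ∏ i ∈ Finset.range k, r i := by
  induction k with
  | zero => simpa [sumHistories] using hν.sum_le_one
  | succ k ih =>
    have split (xs : ℕ → α) (z : α) : ν (Function.update xs (k + 1) z 0) *
        ∏ i ∈ Finset.range (k + 1),
          v i (Function.update xs (k + 1) z i) (Function.update xs (k + 1) z (i + 1)) =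
        (ν (xs 0) * ∏ i ∈ Finset.range k, v i (xs i) (xs (i + 1))) * v k (xs k) z := by
      have past_eq : ∏ i ∈ Finset.range k,
          v i (Function.update xs (k + 1) z i) (Function.update xs (k + 1) z (i + 1)) =
          ∏ i ∈ Finset.range k, v i (xs i) (xs (i + 1)) :=
        Finset.prod_congr rfl fun i hi => by
          have := Finset.mem_range.1 hi
          rw [Function.update_of_ne (by omega), Function.update_of_ne (by omega)]
      rw [Finset.prod_range_succ, past_eq, ← mul_assoc, Function.update_of_ne (by omega),
        Function.update_of_ne (by omega), Function.update_self]
    rw [Finset.prod_range_succ, sumHistories]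
    simp only [split, ← Finset.mul_sum]
    refine le_trans ?_ (mul_le_mul_of_nonneg_right ih (hr k))
    rw [← sumHistories_mul_right]
    refine sumHistories_mono _ fun xs => mul_le_mul_of_nonneg_left (hvr k _) ?_
    exact mul_nonneg (hν.nonneg _) (Finset.prod_nonneg fun i _ => hv _ _ _)

lemma sumHistories_historyWeight_le {ν : α → ℝ} {T : α → α → ℝ} (hν : IsSubprobability ν)
    (hT : ∀ x, IsSubprobability (T x)) (k : ℕ) :
    sumHistories (k + 1) (historyWeight ν T k) ≤ 1 := by
  simpa only [Finset.prod_const_one, ← historyWeight.eq_1] using sumHistories_prod_le hν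
    (fun _ x => (hT x).nonneg) (fun _ => zero_le_one) (fun _ x => (hT x).sum_le_one) k

end Histories

section Tilt

variable {α : Type*} [Fintype α] {T : α → α → ℝ}

/-- The factor which the transition from `x` to `z` at time `i` contributes to
`exp (-c * (g (X k) - g (X j)))`; it is set to zero where the exponential moment of the one-step
increment of `g` exceeds `r`. -/
def tiltFactor (T : α → α → ℝ) (g : α → ℝ) (c r : ℝ) (j i : ℕ) (x z : α) : ℝ :=
  if i < j then 1
  else if ∑ z', T x z' * Real.exp (-c * (g z' - g x)) ≤ r then Real.exp (-c * (g z - g x)) else 0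

lemma tiltFactor_nonneg (T : α → α → ℝ) (g : α → ℝ) (c r : ℝ) (j i : ℕ) (x z : α) :
    0 ≤ tiltFactor T g c r j i x z := by
  rw [tiltFactor]
  split_ifs <;> positivity

lemma sum_mul_tiltFactor_le {r : ℝ} (hr : 0 ≤ r) (hT : ∀ x, IsSubprobability (T x)) (g : α → ℝ)
    (c : ℝ) (j i : ℕ) (x : α) :
    ∑ z, T x z * tiltFactor T g c r j i x z ≤ if i < j then 1 else r := by
  by_cases before : i < j
  · simpa only [tiltFactor, if_pos before, mul_one] using (hT x).sum_le_one
  by_cases drift : ∑ z, T x z * Real.exp (-c * (g z - g x)) ≤ r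
  · simpa only [tiltFactor, if_neg before, if_pos drift] using drift
  · simpa only [tiltFactor, if_neg before, if_neg drift, mul_zero, Finset.sum_const_zero] using hr

lemma prod_tiltFactor {g : α → ℝ} {c r : ℝ} {xs : ℕ → α} {j k : ℕ} (hjk : j ≤ k)
    (drift : ∀ i < k, ∑ z, T (xs i) z * Real.exp (-c * (g z - g (xs i))) ≤ r) :
    ∏ i ∈ Finset.range k, tiltFactor T g c r j i (xs i) (xs (i + 1)) =
      Real.exp (-c * (g (xs k) - g (xs j))) := by
  induction k, hjk using Nat.le_induction with
  | base =>
    rw [sub_self, mul_zero, Real.exp_zero]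
    exact Finset.prod_eq_one fun i hi => if_pos (Finset.mem_range.1 hi)
  | succ k hjk ih =>
    rw [Finset.prod_range_succ, ih fun i hi => drift i (by omega), tiltFactor,
      if_neg (Nat.not_lt.2 hjk), if_pos (drift k (Nat.lt_succ_self k)), ← Real.exp_add]
    ring_nf

lemma prod_range_ite_lt (r : ℝ) {j k : ℕ} (hjk : j ≤ k) :
    ∏ i ∈ Finset.range k, (if i < j then 1 else r) = r ^ (k - j) := by
  induction k, hjk using Nat.le_induction with
  | base => simpa using Finset.prod_eq_one fun i hi => if_pos (Finset.mem_range.1 hi)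
  | succ k hjk ih =>
    rw [Finset.prod_range_succ, ih, if_neg (Nat.not_lt.2 hjk), Nat.sub_add_comm hjk, pow_succ]

lemma sumHistories_mul_prod_tiltFactor_le [Inhabited α] {ν : α → ℝ} {r : ℝ} (hr : 0 ≤ r)
    (hν : IsSubprobability ν) (hT : ∀ x, IsSubprobability (T x)) (g : α → ℝ) (c : ℝ) {j k : ℕ}
    (hjk : j ≤ k) : sumHistories (k + 1) (fun xs => historyWeight ν T k xs *
      ∏ i ∈ Finset.range k, tiltFactor T g c r j i (xs i) (xs (i + 1))) ≤ r ^ (k - j) := by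
  have bound := sumHistories_prod_le hν
    (v := fun i x z => T x z * tiltFactor T g c r j i x z) (r := fun i => if i < j then 1 else r)
    (fun i x z => mul_nonneg ((hT x).nonneg z) (tiltFactor_nonneg _ _ _ _ _ _ _ _))
    (fun i => by positivity) (fun i x => sum_mul_tiltFactor_le hr hT g c j i x) k
  simpa only [historyWeight, Finset.prod_mul_distrib, ← mul_assoc, prod_range_ite_lt r hjk]
    using bound

end Tilt

/-- `X` is a Markov chain with initial law `ν` and transition matrix `T`, and `Y` is independent of
it and has law `q`. This is stated through the probabilities of finite histories, and the random
variables are not assumed measurable. -/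
structure IsIndepMarkovChain {α β Ω : Type*} [MeasurableSpace Ω] (P : Measure Ω)
    (X : ℕ → Ω → α) (Y : Ω → β) (ν : α → ℝ) (T : α → α → ℝ) (q : β → ℝ) : Prop where
  initial : ∀ x y, P.real {ω | X 0 ω = x ∧ Y ω = y} = ν x * q y
  step : ∀ (k : ℕ) (y : β) (xs : ℕ → α) (z : α),
    P.real {ω | Y ω = y ∧ (∀ j ≤ k, X j ω = xs j) ∧ X (k + 1) ω = z} =
      P.real {ω | Y ω = y ∧ ∀ j ≤ k, X j ω = xs j} * T (xs k) z

lemma IsIndepMarkovChain.measureReal_history {α β Ω : Type*} [MeasurableSpace Ω] {P : Measure Ω}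
    {X : ℕ → Ω → α} {Y : Ω → β} {ν : α → ℝ} {T : α → α → ℝ} {q : β → ℝ}
    (h : IsIndepMarkovChain P X Y ν T q) (k : ℕ) (y : β) (xs : ℕ → α) :
    P.real {ω | Y ω = y ∧ ∀ j ≤ k, X j ω = xs j} = historyWeight ν T k xs * q y := by
  induction k with
  | zero => simpa [historyWeight, and_comm] using h.initial (xs 0) y
  | succ k ih =>
    have forall_le_succ (ω : Ω) : (∀ j ≤ k + 1, X j ω = xs j) ↔
        (∀ j ≤ k, X j ω = xs j) ∧ X (k + 1) ω = xs (k + 1) := by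
      simp only [Nat.le_succ_iff, or_imp, forall_and, forall_eq]
    simp only [forall_le_succ, h.step, ih, historyWeight_succ]
    ring

section MeasureBounds

variable {α β Ω : Type*} [Fintype α] [Fintype β] [MeasurableSpace Ω] {P : Measure Ω}
  [IsFiniteMeasure P]

lemma measureReal_le_sum_fibers (Y : Ω → β) (A : Set Ω) :
    P.real A ≤ ∑ y, P.real {ω | ω ∈ A ∧ Y ω = y} := by
  refine (measureReal_mono (fun ω hω => ?_) (measure_ne_top _ _)).trans
    (measureReal_biUnion_finset_le (μ := P) univ fun y => {ω | ω ∈ A ∧ Y ω = y})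
  exact Set.mem_biUnion (Finset.mem_coe.2 (Finset.mem_univ (Y ω))) ⟨hω, rfl⟩

variable [Inhabited α]

lemma measureReal_le_sumHistories (X : ℕ → Ω → α) (k : ℕ) (A : Set Ω) :
    P.real A ≤ sumHistories k fun xs => P.real {ω | ω ∈ A ∧ ∀ j < k, X j ω = xs j} := by
  induction k with
  | zero => simp [sumHistories]
  | succ k ih =>
    refine ih.trans (sumHistories_mono k fun xs =>
      (measureReal_le_sum_fibers (X k) _).trans (Finset.sum_le_sum fun z _ => ?_))
    refine measureReal_mono (fun ω hω => ⟨hω.1.1, fun j hj => ?_⟩) (measure_ne_top _ _)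
    rcases Nat.lt_succ_iff_lt_or_eq.1 hj with lt | rfl
    · rw [Function.update_of_ne lt.ne]
      exact hω.1.2 j lt
    · rw [Function.update_self]
      exact hω.2

namespace IsIndepMarkovChain

variable {X : ℕ → Ω → α} {Y : Ω → β} {ν : α → ℝ} {T : α → α → ℝ} {q : β → ℝ}

-- The random variables need not be measurable, so that only the subadditivity of `P` is available.
lemma measureReal_le_sum (h : IsIndepMarkovChain P X Y ν T q) (hν : ∀ x, 0 ≤ ν x)
    (hT : ∀ x z, 0 ≤ T x z) (hq : ∀ y, 0 ≤ q y) {A : Set Ω} (k : ℕ) {G : β → (ℕ → α) → ℝ}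
    (nonneg : ∀ y xs, 0 ≤ G y xs)
    (one_le : ∀ ω ∈ A, ∀ xs : ℕ → α, (∀ j ≤ k, X j ω = xs j) → 1 ≤ G (Y ω) xs) :
    P.real A ≤ ∑ y, sumHistories (k + 1) fun xs => historyWeight ν T k xs * q y * G y xs := by
  refine (measureReal_le_sum_fibers Y A).trans (Finset.sum_le_sum fun y _ =>
    (measureReal_le_sumHistories X (k + 1) _).trans (sumHistories_mono _ fun xs => ?_))
  have weight_nonneg : 0 ≤ historyWeight ν T k xs * q y :=
    mul_nonneg (historyWeight_nonneg hν hT k xs) (hq y)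
  rcases Set.eq_empty_or_nonempty
    {ω | ω ∈ {ω | ω ∈ A ∧ Y ω = y} ∧ ∀ j < k + 1, X j ω = xs j} with empty | ⟨ω, ⟨hA, hy⟩, hX⟩
  · rw [empty, measureReal_empty]
    exact mul_nonneg weight_nonneg (nonneg y xs)
  · have one_le_G := one_le ω hA xs fun j hj => hX j (Nat.lt_succ_of_le hj)
    rw [hy] at one_le_G
    rw [← h.measureReal_history] at weight_nonneg ⊢
    refine (measureReal_mono ?_).trans (le_mul_of_one_le_right weight_nonneg one_le_G)
    exact fun ω' hω' => ⟨hω'.1.2, fun j hj => hω'.2 j (Nat.lt_succ_of_le hj)⟩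

variable (h : IsIndepMarkovChain P X Y ν T q) (hν : IsSubprobability ν)
  (hT : ∀ x, IsSubprobability (T x)) (hq : IsSubprobability q)
include h hν hT hq

lemma measureReal_le_of_forall_history {A : Set Ω} {k : ℕ} {b : ℝ} (hb : 0 ≤ b)
    {B : β → (ℕ → α) → Prop}
    (mem : ∀ ω ∈ A, ∀ xs : ℕ → α, (∀ j ≤ k, X j ω = xs j) → B (Y ω) xs)
    (bound : ∀ xs, historyWeight ν T k xs ≠ 0 → ∑ y with B y xs, q y ≤ b) : P.real A ≤ b := by
  refine (h.measureReal_le_sum hν.nonneg (fun x => (hT x).nonneg) hq.nonneg k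
    (G := fun y xs => if B y xs then 1 else 0) (fun y xs => by positivity)
    fun ω hω xs hxs => (if_pos (mem ω hω xs hxs)).ge).trans ?_
  rw [← sumHistories_sum]
  calc sumHistories (k + 1) (fun xs =>
        ∑ y, historyWeight ν T k xs * q y * if B y xs then 1 else 0)
      ≤ sumHistories (k + 1) (fun xs => historyWeight ν T k xs * b) := by
        refine sumHistories_mono _ fun xs => ?_
        simp only [mul_ite, mul_one, mul_zero, ← Finset.sum_filter, ← Finset.mul_sum]
        rcases eq_or_ne (historyWeight ν T k xs) 0 with zero | ne_zero
        · simp [zero]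
        · exact mul_le_mul_of_nonneg_left (bound xs ne_zero)
            (historyWeight_nonneg hν.nonneg (fun x => (hT x).nonneg) k xs)
    _ ≤ b := by
        rw [sumHistories_mul_right]
        exact mul_le_of_le_one_left hb (sumHistories_historyWeight_le hν hT k)

lemma measureReal_le_of_forall_right {A : Set Ω} {k : ℕ} {b : ℝ} (hb : 0 ≤ b)
    {G : β → (ℕ → α) → ℝ} (nonneg : ∀ y xs, 0 ≤ G y xs)
    (one_le : ∀ ω ∈ A, ∀ xs : ℕ → α, (∀ j ≤ k, X j ω = xs j) → 1 ≤ G (Y ω) xs)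
    (bound : ∀ y, sumHistories (k + 1) (fun xs => historyWeight ν T k xs * G y xs) ≤ b) :
    P.real A ≤ b := by
  refine (h.measureReal_le_sum hν.nonneg (fun x => (hT x).nonneg) hq.nonneg k nonneg
    one_le).trans ?_
  simp only [mul_right_comm _ (q _), sumHistories_mul_right]
  calc ∑ y, sumHistories (k + 1) (fun xs => historyWeight ν T k xs * G y xs) * q y
      ≤ ∑ y, b * q y :=
        Finset.sum_le_sum fun y _ => mul_le_mul_of_nonneg_right (bound y) (hq.nonneg y)
    _ ≤ b := by
        rw [← Finset.mul_sum]
        exact mul_le_of_le_one_right hb hq.sum_le_one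

lemma measureReal_initial_le (B : α → Prop) :
    P.real {ω | B (X 0 ω)} ≤ ∑ x with B x, ν x := by
  refine h.measureReal_le_of_forall_right hν hT hq (k := 0)
    (G := fun _ xs => if B (xs 0) then 1 else 0) (Finset.sum_nonneg fun x _ => hν.nonneg x)
    (fun _ _ => by positivity)
    (fun ω hω xs hxs => (if_pos (hxs 0 le_rfl ▸ hω)).ge) fun _ => ?_
  simp [sumHistories, historyWeight, Finset.sum_filter]

/-- Exponential Markov inequality: the exponential moments of the one-step increments of
`f (X ·) Y` multiply along the chain. -/
lemma measureReal_increment_lt_le {f : α → β → ℝ} {c r : ℝ} (hc : 0 ≤ c) (hr : 0 ≤ r) (t : ℝ)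
    {j k : ℕ} (hjk : j ≤ k) :
    P.real {ω | f (X k ω) (Y ω) - f (X j ω) (Y ω) < t * (k - j) ∧
      ∀ i < k, ∑ z, T (X i ω) z * Real.exp (-c * (f z (Y ω) - f (X i ω) (Y ω))) ≤ r} ≤
      (r * Real.exp (c * t)) ^ (k - j) := by
  refine h.measureReal_le_of_forall_right hν hT hq (k := k)
    (G := fun y xs => (∏ i ∈ Finset.range k, tiltFactor T (f · y) c r j i (xs i) (xs (i + 1))) *
      Real.exp (c * t) ^ (k - j)) (by positivity)
    (fun y xs => mul_nonneg (Finset.prod_nonneg fun _ _ => tiltFactor_nonneg _ _ _ _ _ _ _ _)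
      (by positivity)) ?_ fun y => ?_
  · rintro ω ⟨small, drift⟩ xs hxs
    rw [prod_tiltFactor hjk fun i hi => hxs i hi.le ▸ drift i hi, ← hxs k le_rfl, ← hxs j hjk,
      ← Real.exp_nat_mul, ← Real.exp_add, Nat.cast_sub hjk]
    exact Real.one_le_exp (by nlinarith [mul_le_mul_of_nonneg_left small.le hc])
  · simp only [← mul_assoc, sumHistories_mul_right]
    rw [mul_pow]
    gcongr
    exact sumHistories_mul_prod_tiltFactor_le hr hν hT _ _ hjk

end IsIndepMarkovChain

end MeasureBounds

/-! ### The block-moving chain -/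

section TransProb

variable {n : ℕ} {m : Fin 4 → ℕ} {x z : Fin n → Bool}

lemma transProb_nonneg (x z : Fin n → Bool) : 0 ≤ transProb x z := by
  rw [transProb]; split_ifs <;> positivity

lemma sum_transProb_eq_one (x : Fin n → Bool) : ∑ z, transProb x z = 1 := by
  by_cases h : (starts x 5).Nonempty ∧ (starts x 1).Nonempty
  · have pos5 : 0 < numBlocks x 5 := Finset.card_pos.2 h.1
    have pos1 : 0 < numBlocks x 1 := Finset.card_pos.2 h.2
    have sum_eq := sum_transProb x pos5 pos1 fun _ => 1
    simp only [mul_one, Finset.sum_const, card_indicesOf, nsmul_eq_mul] at sum_eq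
    rw [sum_eq, ← numBlocks_eq_count x 5 (by norm_num), ← numBlocks_eq_count x 1 (by norm_num)]
    field_simp
  · simp [transProb, h]

lemma isSubprobability_transProb (x : Fin n → Bool) : IsSubprobability (transProb x) :=
  ⟨transProb_nonneg x, (sum_transProb_eq_one x).le⟩

lemma exists_eq_setGaps_of_transProb_ne_zero (h5 : 0 < numBlocks x 5) (h1 : 0 < numBlocks x 1)
    (h : transProb x z ≠ 0) :
    ∃ i ∈ indicesOf (gapsOf x) 5, ∃ k ∈ indicesOf (gapsOf x) 1, z = setGaps x i k 4 2 := by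
  rw [transProb, if_pos ⟨Finset.card_pos.1 h5, Finset.card_pos.1 h1⟩] at h
  have pairCount_ne_zero : pairCount x z ≠ 0 := fun zero => h (by simp [zero])
  obtain ⟨⟨p, q⟩, hpq⟩ := Finset.card_pos.1 (Nat.pos_of_ne_zero pairCount_ne_zero)
  rw [Finset.mem_filter, Finset.mem_product, starts_eq_image_gapPos x 5 (by norm_num),
    starts_eq_image_gapPos x 1 (by norm_num), Finset.mem_image, Finset.mem_image] at hpq
  obtain ⟨⟨⟨i, hi, rfl⟩, k, hk, rfl⟩, rfl⟩ := hpq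
  exact ⟨i, hi, k, hk, modifyStr_gapPos hi hk⟩

lemma mem_of_transProb_ne_zero (hx : x ∈ strSetV n m) (h0 : 0 < m 0) (h3 : 0 < m 3)
    (h : transProb x z ≠ 0) : z ∈ strSetV n (shiftCounts m 1) ∧ numOnes z = numOnes x := by
  obtain ⟨count1, -, -, count5⟩ := mem_strSetV.1 hx
  obtain ⟨i, hi, k, hk, rfl⟩ := exists_eq_setGaps_of_transProb_ne_zero
    (by rwa [numBlocks_eq_count x 5 (by norm_num), count5])
    (by rwa [numBlocks_eq_count x 1 (by norm_num), count1]) h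
  exact ⟨setGaps_mem_strSetV_shiftCounts hx hi hk, numOnes_setGaps (by norm_num) hi hk rfl⟩

end TransProb

/-- The initial law of the chain: uniform on the strings with block counts `m`. It is `0` if there
is no such string. -/
def initialLaw (n : ℕ) (m : Fin 4 → ℕ) (x : Fin n → Bool) : ℝ :=
  if x ∈ strSetV n m then (1 : ℝ) / ((strSetV n m).card : ℝ) else 0

section InitialLaw

variable {n : ℕ} {m : Fin 4 → ℕ}

lemma sum_filter_initialLaw (n : ℕ) (m : Fin 4 → ℕ) (B : (Fin n → Bool) → Prop) :
    ∑ x with B x, initialLaw n m x =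
      ((strSetV n m).filter B).card / ((strSetV n m).card : ℝ) := by
  simp only [initialLaw]
  rw [← Finset.sum_filter, Finset.filter_filter, Finset.sum_const, nsmul_eq_mul, mul_one_div]
  congr 3
  ext1 x
  simp [and_comm]

lemma isSubprobability_initialLaw (n : ℕ) (m : Fin 4 → ℕ) : IsSubprobability (initialLaw n m) where
  nonneg x := by rw [initialLaw]; split_ifs <;> positivity
  sum_le_one := by
    have total := sum_filter_initialLaw n m fun _ => True
    rw [Finset.filter_true, Finset.filter_true] at total
    exact total.trans_le (div_self_le_one _)

lemma mem_of_historyWeight_ne_zero (xs : ℕ → Fin n → Bool) {k : ℕ} (h0 : k ≤ m 0) (h3 : k ≤ m 3)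
    (h : historyWeight (initialLaw n m) transProb k xs ≠ 0) :
    xs k ∈ strSetV n (shiftCounts m k) ∧ numOnes (xs k) = numOnes (xs 0) := by
  induction k with
  | zero =>
    rw [shiftCounts_zero]
    refine ⟨?_, rfl⟩
    by_contra not_mem
    simp [historyWeight, initialLaw, not_mem] at h
  | succ k ih =>
    rw [historyWeight_succ] at h
    obtain ⟨mem, ones⟩ := ih (by omega) (by omega) (left_ne_zero_of_mul h)
    obtain ⟨mem', ones'⟩ := mem_of_transProb_ne_zero mem (Nat.sub_pos_of_lt h0)
      (Nat.sub_pos_of_lt h3) (right_ne_zero_of_mul h)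
    rw [shiftCounts_succ] at mem'
    exact ⟨mem', ones'.trans ones⟩

end InitialLaw

lemma isSubprobability_uniform (n : ℕ) :
    IsSubprobability fun _ : Fin n → Bool => (1 : ℝ) / 2 ^ n where
  nonneg _ := by positivity
  sum_le_one := by simp

/-- `X` is the block-moving chain started uniformly on the strings of length `n` with block counts
`m`, and `Y` is a uniform string of length `n` independent of it. -/
abbrev IsBlockMovingChain {Ω : Type*} [MeasurableSpace Ω] (P : Measure Ω) {n : ℕ} (m : Fin 4 → ℕ)
    (X : ℕ → Ω → Fin n → Bool) (Y : Ω → Fin n → Bool) : Prop :=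
  IsIndepMarkovChain P X Y (initialLaw n m) transProb fun _ => 1 / 2 ^ n

lemma exp_driftExponent_mul_le : 0.997 * Real.exp (driftExponent * 0.02) ≤ 0.999 := by
  have exp_le : Real.exp (driftExponent * 0.02) ≤ 1.002 := by
    refine le_of_pow_le_pow_left₀ (n := 50) (by norm_num) (by norm_num) ?_
    rw [← Real.exp_nat_mul, show ((50 : ℕ) : ℝ) * (driftExponent * 0.02) = driftExponent by
      push_cast; ring, exp_driftExponent]
    norm_num
  linarith

lemma setOf_increment_lt_subset {Ω : Type*} {n : ℕ} (X : ℕ → Ω → Fin n → Bool)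
    (Y : Ω → Fin n → Bool) (S ε c : ℝ) (j k : ℕ) :
    {ω | optScore S n (X k ω) (Y ω) - optScore S n (X j ω) (Y ω) < c} ⊆
      {ω | ¬IsBalanced ε (Y ω)} ∪ {ω | ¬IsBalanced ε (X 0 ω)} ∪
        (⋃ i ∈ Finset.range k, {ω | IsBalanced ε (Y ω) ∧ IsBalanced ε (X 0 ω) ∧
          ¬HasUpwardDrift S (X i ω) (Y ω)}) ∪
        {ω | optScore S n (X k ω) (Y ω) - optScore S n (X j ω) (Y ω) < c ∧
          ∀ i < k, HasUpwardDrift S (X i ω) (Y ω)} := by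
  intro ω small
  simp only [Set.mem_union, Set.mem_iUnion, Set.mem_ofPred_eq, Finset.mem_range, exists_prop]
    at small ⊢
  by_cases drift : ∀ i < k, HasUpwardDrift S (X i ω) (Y ω)
  · exact Or.inr ⟨small, drift⟩
  · push Not at drift
    obtain ⟨i, hi, not_drift⟩ := drift
    by_cases hY : IsBalanced ε (Y ω)
    · by_cases hX : IsBalanced ε (X 0 ω)
      · exact Or.inl (Or.inr ⟨i, hi, hY, hX, not_drift⟩)
      · exact Or.inl (Or.inl (Or.inr hX))
    · exact Or.inl (Or.inl (Or.inl hY))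

namespace IsBlockMovingChain

variable {Ω : Type*} [MeasurableSpace Ω] {P : Measure Ω} [IsFiniteMeasure P] {n : ℕ}
  {m : Fin 4 → ℕ} {X : ℕ → Ω → Fin n → Bool} {Y : Ω → Fin n → Bool} {S ε κ : ℝ}

lemma measureReal_not_isBalanced_right_le (h : IsBlockMovingChain P m X Y) (hε : 0 < ε) :
    P.real {ω | ¬IsBalanced ε (Y ω)} ≤ 2 * Real.exp (-(2 * ε ^ 2 * n)) := by
  refine h.measureReal_le_of_forall_history (isSubprobability_initialLaw n m)
    isSubprobability_transProb (isSubprobability_uniform n) (k := 0)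
    (B := fun y _ => ¬IsBalanced ε y) (by positivity) (fun ω hω _ _ => hω) fun _ _ => ?_
  rw [Finset.sum_const, nsmul_eq_mul, mul_one_div, div_le_iff₀' (by positivity)]
  refine le_trans (le_of_eq ?_) (card_not_isBalanced_le n hε)
  congr!

lemma measureReal_not_isBalanced_initial_le (h : IsBlockMovingChain P m X Y) {b : ℝ} (hb : 0 ≤ b)
    (card_le : ((unbalancedStrings ε n m).card : ℝ) ≤ (strSetV n m).card * b) :
    P.real {ω | ¬IsBalanced ε (X 0 ω)} ≤ b := by
  refine (h.measureReal_initial_le (isSubprobability_initialLaw n m) isSubprobability_transProb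
    (isSubprobability_uniform n) fun x => ¬IsBalanced ε x).trans ?_
  rw [sum_filter_initialLaw]
  refine div_le_of_le_mul₀ (Nat.cast_nonneg _) hb
    (le_trans (le_of_eq ?_) (card_le.trans_eq (mul_comm _ _)))
  congr 2

lemma measureReal_not_hasUpwardDrift_le (h : IsBlockMovingChain P m X Y) (hκ : 0 < κ)
    (hκ1 : κ ≤ 1) (hS : 1 / balanceTol κ ≤ S) (hn : 0 < n) {i : ℕ} (h0 : κ * n + i ≤ m 0)
    (h3 : κ * n + i ≤ m 3) :
    P.real {ω | IsBalanced (balanceTol κ) (Y ω) ∧ IsBalanced (balanceTol κ) (X 0 ω) ∧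
      ¬HasUpwardDrift S (X i ω) (Y ω)} ≤ 8 * (n + 1) * Real.exp (-(0.006 * κ * n)) := by
  refine h.measureReal_le_of_forall_history (isSubprobability_initialLaw n m)
    isSubprobability_transProb (isSubprobability_uniform n) (k := i)
    (B := fun y xs => IsBalanced (balanceTol κ) y ∧ IsBalanced (balanceTol κ) (xs 0) ∧
      ¬HasUpwardDrift S (xs i) y) (by positivity)
    (fun ω hω xs hxs => hxs 0 (Nat.zero_le i) ▸ hxs i le_rfl ▸ hω) fun xs weight_ne_zero => ?_
  rw [Finset.sum_const, nsmul_eq_mul, mul_one_div, div_le_iff₀' (by positivity)]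
  by_cases balanced : IsBalanced (balanceTol κ) (xs 0)
  · have le0 : i ≤ m 0 := le_natCast_of_add_le hκ.le h0
    have le3 : i ≤ m 3 := le_natCast_of_add_le hκ.le h3
    obtain ⟨mem, ones⟩ := mem_of_historyWeight_ne_zero xs le0 le3 weight_ne_zero
    obtain ⟨count1, -, -, count5⟩ := mem_strSetV.1 mem
    have balanced' : IsBalanced (balanceTol κ) (xs i) := by rwa [IsBalanced, ones]
    have blocks1 : κ * n ≤ numBlocks (xs i) 1 := by
      rw [numBlocks_eq_count _ 1 (by norm_num), count1]
      change κ * n ≤ ((m 0 - i : ℕ) : ℝ)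
      rw [Nat.cast_sub le0]
      linarith
    have blocks5 : κ * n ≤ numBlocks (xs i) 5 := by
      rw [numBlocks_eq_count _ 5 (by norm_num), count5]
      change κ * n ≤ ((m 3 - i : ℕ) : ℝ)
      rw [Nat.cast_sub le3]
      linarith
    simpa only [balanced, true_and] using
      card_not_hasUpwardDrift_le hκ hκ1 hS hn balanced' blocks1 blocks5
  · simp only [balanced, false_and, and_false, Finset.filter_false, Finset.card_empty,
      Nat.cast_zero]
    positivity

lemma measureReal_drift_and_increment_lt_le (h : IsBlockMovingChain P m X Y) {j k : ℕ}
    (hjk : j ≤ k) :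
    P.real {ω | optScore S n (X k ω) (Y ω) - optScore S n (X j ω) (Y ω) < 0.02 * (k - j) ∧
      ∀ i < k, HasUpwardDrift S (X i ω) (Y ω)} ≤ 0.999 ^ (k - j) :=
  (h.measureReal_increment_lt_le (isSubprobability_initialLaw n m) isSubprobability_transProb
    (isSubprobability_uniform n) (f := optScore S n) driftExponent_pos.le (by norm_num) 0.02
    hjk).trans (pow_le_pow_left₀ (by positivity) exp_driftExponent_mul_le _)

lemma measureReal_increment_lt_le (h : IsBlockMovingChain P m X Y) (hκ : 0 < κ) (hκ1 : κ ≤ 1)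
    (hS : 1 / balanceTol κ ≤ S) (hn : 0 < n) {j k : ℕ} (hjk : j ≤ k) (h0 : κ * n + k ≤ m 0)
    (h3 : κ * n + k ≤ m 3)
    (card_le : ((unbalancedStrings (balanceTol κ) n m).card : ℝ) ≤
      (strSetV n m).card * (4 * Real.exp (-(balanceTol κ ^ 2 * n)))) :
    P.real {ω | optScore S n (X k ω) (Y ω) - optScore S n (X j ω) (Y ω) < 0.02 * (k - j)} ≤
      2 * Real.exp (-(2 * balanceTol κ ^ 2 * n)) + 4 * Real.exp (-(balanceTol κ ^ 2 * n)) +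
        k * (8 * (n + 1) * Real.exp (-(0.006 * κ * n))) + 0.999 ^ (k - j) := by
  refine (measureReal_mono (setOf_increment_lt_subset X Y S (balanceTol κ) _ j k)
    (measure_ne_top _ _)).trans ?_
  refine (measureReal_union_le _ _).trans (add_le_add ?_
    (h.measureReal_drift_and_increment_lt_le hjk))
  refine (measureReal_union_le _ _).trans (add_le_add ?_ ?_)
  · exact (measureReal_union_le _ _).trans (add_le_add
      (h.measureReal_not_isBalanced_right_le (balanceTol_pos hκ hκ1))
      (h.measureReal_not_isBalanced_initial_le (by positivity) card_le))
  · refine (measureReal_biUnion_finset_le _ _).trans ((Finset.sum_le_card_nsmul _ _ _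
      fun i hi => h.measureReal_not_hasUpwardDrift_le hκ hκ1 hS hn ?_ ?_).trans_eq
        (by rw [Finset.card_range, nsmul_eq_mul]))
    all_goals
      have : (i : ℝ) ≤ k := by exact_mod_cast (Finset.mem_range.1 hi).le
      linarith

end IsBlockMovingChain

/-! ### Union bound -/

lemma enorm4_smul_evec {t : ℝ} (ht : 0 ≤ t) : enorm4 (t • evec) = 2 * t := by
  have sum_sq : ∑ i, (t • evec) i ^ 2 = (2 * t) ^ 2 := by
    simp only [Fin.sum_univ_four, evec, Pi.smul_apply, Matrix.cons_val, smul_eq_mul]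
    ring
  rw [enorm4, sum_sq, Real.sqrt_sq (by linarith)]

lemma tendsto_add_one_pow_mul_exp_neg_rpow (d : ℕ) {a b : ℝ} (ha : 0 < a) (hb : 0 < b) :
    Tendsto (fun n : ℕ => ((n : ℝ) + 1) ^ d * Real.exp (-a * (n : ℝ) ^ b)) atTop (nhds 0) := by
  have rpow_atTop : Tendsto (fun n : ℕ => (n : ℝ) ^ b) atTop atTop :=
    (tendsto_rpow_atTop hb).comp tendsto_natCast_atTop_atTop
  have limit := ((tendsto_rpow_mul_exp_neg_mul_atTop_nhds_zero (d / b) a ha).comp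
    rpow_atTop).const_mul (2 ^ d)
  rw [mul_zero] at limit
  refine squeeze_zero' (Eventually.of_forall fun n => by positivity) ?_ limit
  filter_upwards [eventually_ge_atTop 1] with n hn
  have one_le : (1 : ℝ) ≤ n := by exact_mod_cast hn
  have rpow_rpow : ((n : ℝ) ^ b) ^ (d / b) = (n : ℝ) ^ d := by
    rw [← Real.rpow_mul n.cast_nonneg, mul_div_cancel₀ _ hb.ne', Real.rpow_natCast]
  calc ((n : ℝ) + 1) ^ d * Real.exp (-a * (n : ℝ) ^ b)
      ≤ (2 * n) ^ d * Real.exp (-a * (n : ℝ) ^ b) := by gcongr; linarith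
    _ = 2 ^ d * (((n : ℝ) ^ b) ^ (d / b) * Real.exp (-a * (n : ℝ) ^ b)) := by
        rw [rpow_rpow, mul_pow, mul_assoc]

lemma numBlocks_le {n : ℕ} (x : Fin n → Bool) (ℓ : ℕ) : numBlocks x ℓ ≤ n := by
  simpa [numBlocks, starts] using Finset.card_filter_le (Finset.range n) (blockStart x ℓ)

lemma le_of_strSetV_nonempty {n : ℕ} {m : Fin 4 → ℕ} (hne : (strSetV n m).Nonempty) (i : Fin 4) :
    m i ≤ n := by
  obtain ⟨x, hx⟩ := hne
  rw [strSetV, Finset.mem_filter] at hx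
  exact hx.2 i ▸ numBlocks_le x _

lemma pow_sub_le_exp {j k : ℕ} (hjk : j ≤ k) :
    (0.999 : ℝ) ^ (k - j) ≤ Real.exp (-(0.001 * (k - j))) := by
  have le_exp : (0.999 : ℝ) ≤ Real.exp (-0.001) := by
    linarith [Real.add_one_le_exp (-0.001 : ℝ)]
  refine (pow_le_pow_left₀ (by norm_num) le_exp _).trans_eq ?_
  rw [← Real.exp_nat_mul, Nat.cast_sub hjk]
  ring_nf

lemma increment_bound_le {ε a t : ℝ} {n j k : ℕ} (haε : a ≤ ε ^ 2)
    (ha : a ≤ 0.00001) (ht0 : 0 ≤ t) (htn : t ≤ n) (hk : k ≤ n) (hjk : j + t ≤ k) :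
    2 * Real.exp (-(2 * ε ^ 2 * n)) + 4 * Real.exp (-(ε ^ 2 * n)) +
      k * (8 * (n + 1) * Real.exp (-(0.006 * (1 / 400) * n))) + 0.999 ^ (k - j) ≤
      15 * (((n : ℝ) + 1) ^ 2 * Real.exp (-a * t)) := by
  have j_le_k : j ≤ k := by exact_mod_cast (le_add_of_nonneg_right ht0).trans hjk
  have k_le : (k : ℝ) ≤ n + 1 := by exact_mod_cast hk.trans n.le_succ
  have at_le : a * t ≤ ε ^ 2 * n := by gcongr
  have at_le_t : a * t ≤ 0.00001 * t := by gcongr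
  have exp1 : Real.exp (-(2 * ε ^ 2 * n)) ≤ Real.exp (-a * t) :=
    Real.exp_le_exp.2 (by linarith [mul_nonneg (sq_nonneg ε) n.cast_nonneg])
  have exp2 : Real.exp (-(ε ^ 2 * n)) ≤ Real.exp (-a * t) := Real.exp_le_exp.2 (by linarith)
  have exp3 : Real.exp (-(0.006 * (1 / 400) * n)) ≤ Real.exp (-a * t) :=
    Real.exp_le_exp.2 (by linarith)
  have exp4 : (0.999 : ℝ) ^ (k - j) ≤ Real.exp (-a * t) :=
    (pow_sub_le_exp j_le_k).trans (Real.exp_le_exp.2 (by linarith))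
  have one_le : (1 : ℝ) ≤ ((n : ℝ) + 1) ^ 2 := one_le_pow₀ (by linarith [n.cast_nonneg (α := ℝ)])
  calc _ ≤ 2 * Real.exp (-a * t) + 4 * Real.exp (-a * t) +
          ((n : ℝ) + 1) * (8 * (n + 1) * Real.exp (-a * t)) + Real.exp (-a * t) := by gcongr
    _ = (7 * 1 + 8 * ((n : ℝ) + 1) ^ 2) * Real.exp (-a * t) := by ring
    _ ≤ (7 * ((n : ℝ) + 1) ^ 2 + 8 * ((n : ℝ) + 1) ^ 2) * Real.exp (-a * t) := by gcongr
    _ = 15 * (((n : ℝ) + 1) ^ 2 * Real.exp (-a * t)) := by ring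

/-- The rate of the stretched exponential `exp (-failureRate * n ^ 0.1)` that bounds the failure
probabilities. -/
def failureRate : ℝ := min (balanceTol (1 / 400) ^ 2) 0.00001

lemma balanceTol_one_div_pos : 0 < balanceTol (1 / 400) :=
  balanceTol_pos (by norm_num) (by norm_num)

lemma failureRate_pos : 0 < failureRate :=
  lt_min (pow_pos balanceTol_one_div_pos 2) (by norm_num)

/-- The triples `(m, j, k)` for which `m + j e` and `m + k e` are compared in the slope event. The
bound `n` on the entries is no restriction for large `n`. -/
def comparedTriples (n : ℕ) (C : ℝ) : Finset ((Fin 4 → ℕ) × ℕ × ℕ) :=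
  ((Fintype.piFinset fun _ => Finset.range (n + 1)) ×ˢ Finset.range (n + 1) ×ˢ
    Finset.range (n + 1)).filter fun p =>
    natVec p.1 ∈ Ha ∪ Hb ∧ (strSetV n p.1).Nonempty ∧
      natVec p.1 + (p.2.2 : ℝ) • evec ∈ Iset n C ∧ (p.2.1 : ℝ) + (n : ℝ) ^ (0.1 : ℝ) ≤ p.2.2

/-- The event `Eⁿ_slope` of the theorem. -/
def slopeEvent {Ω : Type*} (S C : ℝ) {n : ℕ} (X : (Fin 4 → ℕ) → ℕ → Ω → Fin n → Bool)
    (Y : Ω → Fin n → Bool) : Set Ω :=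
  {ω | ∀ m : Fin 4 → ℕ, natVec m ∈ Ha ∪ Hb → (strSetV n m).Nonempty → ∀ j k : ℕ,
    natVec m + (j : ℝ) • evec ∈ Iset n C → natVec m + (k : ℝ) • evec ∈ Iset n C →
      (j : ℝ) + (n : ℝ) ^ (0.1 : ℝ) ≤ k → 0.01 * enorm4 (((k : ℝ) - j) • evec) ≤
        optScore S n (X m k ω) (Y ω) - optScore S n (X m j ω) (Y ω)}

section Triples

variable {n j k : ℕ} {m : Fin 4 → ℕ} {C : ℝ}

lemma le_of_add_rpow_le (h : (j : ℝ) + (n : ℝ) ^ (0.1 : ℝ) ≤ k) : j ≤ k := by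
  have rpow_nonneg : (0 : ℝ) ≤ (n : ℝ) ^ (0.1 : ℝ) := by positivity
  exact_mod_cast (le_add_of_nonneg_right rpow_nonneg).trans h

lemma card_comparedTriples_le (n : ℕ) (C : ℝ) :
    ((comparedTriples n C).card : ℝ) ≤ ((n : ℝ) + 1) ^ 6 := by
  have card_le : (comparedTriples n C).card ≤ (n + 1) ^ 6 := by
    refine (Finset.card_filter_le _ _).trans_eq ?_
    simp only [Finset.card_product, Fintype.card_piFinset, Finset.card_range, Finset.prod_const,
      Finset.card_univ, Fintype.card_fin]
    ring
  exact_mod_cast card_le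

lemma mem_comparedTriples (hC : 0 < C) (hn : 100 ≤ n) (hCn : 2400 * C ≤ √n) :
    (m, j, k) ∈ comparedTriples n C ↔ natVec m ∈ Ha ∪ Hb ∧ (strSetV n m).Nonempty ∧
      natVec m + (k : ℝ) • evec ∈ Iset n C ∧ (j : ℝ) + (n : ℝ) ^ (0.1 : ℝ) ≤ k := by
  rw [comparedTriples, Finset.mem_filter]
  refine ⟨And.right, fun h => ⟨?_, h⟩⟩
  obtain ⟨-, hne, hk, hjk⟩ := h
  have k_le : k ≤ n := (le_natCast_of_add_le (by norm_num)
    (add_le_of_natVec_add_smul_evec_mem_Iset hC hn hCn hk).1).trans (le_of_strSetV_nonempty hne 0)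
  simp only [Finset.mem_product, Fintype.mem_piFinset, Finset.mem_range, Nat.lt_succ_iff]
  exact ⟨le_of_strSetV_nonempty hne, (le_of_add_rpow_le hjk).trans k_le, k_le⟩

lemma compl_slopeEvent_subset {Ω : Type*} (S : ℝ) (X : (Fin 4 → ℕ) → ℕ → Ω → Fin n → Bool)
    (Y : Ω → Fin n → Bool) (hC : 0 < C) (hn : 100 ≤ n) (hCn : 2400 * C ≤ √n) :
    (slopeEvent S C X Y)ᶜ ⊆ ⋃ p ∈ comparedTriples n C,
      {ω | optScore S n (X p.1 p.2.2 ω) (Y ω) - optScore S n (X p.1 p.2.1 ω) (Y ω) <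
        0.02 * (p.2.2 - p.2.1)} := by
  intro ω hω
  simp only [slopeEvent, Set.mem_compl_iff, Set.mem_ofPred_eq, not_forall, not_le] at hω
  obtain ⟨m, hm, hne, j, k, -, hk, hjk, small⟩ := hω
  have j_le_k : (j : ℝ) ≤ k := Nat.cast_le.2 (le_of_add_rpow_le hjk)
  rw [enorm4_smul_evec (sub_nonneg.2 j_le_k)] at small
  simp only [Set.mem_iUnion, Set.mem_ofPred_eq, exists_prop]
  exact ⟨(m, j, k), (mem_comparedTriples hC hn hCn).2 ⟨hm, hne, hk, hjk⟩, by linarith⟩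

end Triples

section FailureProbability

variable {S C : ℝ}

lemma eventually_measureReal_increment_lt_le (hC : 0 < C) (hS : 1 / balanceTol (1 / 400) ≤ S) :
    ∀ᶠ n : ℕ in atTop, ∀ (Ω : Type*) [MeasurableSpace Ω] (P : Measure Ω) [IsFiniteMeasure P]
      (m : Fin 4 → ℕ) (j k : ℕ) (X : ℕ → Ω → Fin n → Bool) (Y : Ω → Fin n → Bool),
      IsBlockMovingChain P m X Y → (m, j, k) ∈ comparedTriples n C →
        P.real {ω | optScore S n (X k ω) (Y ω) - optScore S n (X j ω) (Y ω) < 0.02 * (k - j)} ≤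
          15 * (((n : ℝ) + 1) ^ 2 * Real.exp (-failureRate * (n : ℝ) ^ (0.1 : ℝ))) := by
  filter_upwards [eventually_ge_atTop 100, eventually_le_sqrt (2400 * C),
    eventually_card_unbalancedStrings_le balanceTol_one_div_pos hC]
    with n hn hCn card_le Ω _ P _ m j k X Y chain compared
  obtain ⟨-, hne, hk, hjk⟩ := (mem_comparedTriples hC hn hCn).1 compared
  obtain ⟨le0, le3⟩ := add_le_of_natVec_add_smul_evec_mem_Iset hC hn hCn hk
  have k_le : k ≤ n :=
    (le_natCast_of_add_le (by norm_num) le0).trans (le_of_strSetV_nonempty hne 0)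
  have one_le : (1 : ℝ) ≤ n := by exact_mod_cast (by omega : 1 ≤ n)
  have rpow_le : (n : ℝ) ^ (0.1 : ℝ) ≤ n := Real.rpow_le_self_of_one_le one_le (by norm_num)
  exact (chain.measureReal_increment_lt_le (by norm_num) (by norm_num) hS (by omega)
    (le_of_add_rpow_le hjk) le0 le3 (card_le m k hne hk)).trans
    (increment_bound_le (min_le_left _ _) (min_le_right _ _) (by positivity)
      rpow_le k_le hjk)

lemma eventually_measureReal_compl_slopeEvent_le (hC : 0 < C)
    (hS : 1 / balanceTol (1 / 400) ≤ S) :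
    ∀ᶠ n : ℕ in atTop, ∀ (Ω : Type*) [MeasurableSpace Ω] (P : Measure Ω) [IsFiniteMeasure P]
      (X : (Fin 4 → ℕ) → ℕ → Ω → Fin n → Bool) (Y : Ω → Fin n → Bool),
      (∀ m, natVec m ∈ Ha ∪ Hb → (strSetV n m).Nonempty → IsBlockMovingChain P m (X m) Y) →
        P.real (slopeEvent S C X Y)ᶜ ≤
          15 * (((n : ℝ) + 1) ^ 8 * Real.exp (-failureRate * (n : ℝ) ^ (0.1 : ℝ))) := by
  filter_upwards [eventually_ge_atTop 100, eventually_le_sqrt (2400 * C),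
    eventually_measureReal_increment_lt_le hC hS] with n hn hCn bound Ω _ P _ X Y chain
  set E := Real.exp (-failureRate * (n : ℝ) ^ (0.1 : ℝ))
  calc P.real (slopeEvent S C X Y)ᶜ
      ≤ P.real (⋃ p ∈ comparedTriples n C,
          {ω | optScore S n (X p.1 p.2.2 ω) (Y ω) - optScore S n (X p.1 p.2.1 ω) (Y ω) <
            0.02 * (p.2.2 - p.2.1)}) :=
        measureReal_mono (compl_slopeEvent_subset S X Y hC hn hCn) (measure_ne_top _ _)
    _ ≤ (comparedTriples n C).card • (15 * (((n : ℝ) + 1) ^ 2 * E)) := by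
        refine (measureReal_biUnion_finset_le _ _).trans (Finset.sum_le_card_nsmul _ _ _ ?_)
        rintro ⟨m, j, k⟩ compared
        obtain ⟨hm, hne, -⟩ := (mem_comparedTriples hC hn hCn).1 compared
        exact bound Ω P m j k (X m) Y (chain m hm hne) compared
    _ ≤ ((n : ℝ) + 1) ^ 6 * (15 * (((n : ℝ) + 1) ^ 2 * E)) := by
        rw [nsmul_eq_mul]
        gcongr
        exact card_comparedTriples_le n C
    _ = 15 * (((n : ℝ) + 1) ^ 8 * E) := by ring

end FailureProbability

/-- there exists `s > 0`, independent of `n`, such that if `S ≥ s`, then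
`P(Eⁿ_slope) → 1` as `n → ∞`.  Here, for each `n`, `Y` is a uniform random binary string of
length `n` and, for each base point `m⃗ ∈ H_a ∪ H_b`, `X(m⃗), X(m⃗ + e⃗), X(m⃗ + 2e⃗), …` is the
Markov chain started uniformly on `{N⃗ = m⃗}` (independently of `Y`) with the block-moving
transition kernel `transProb`; `L(m⃗ + k e⃗)` is the optimal alignment score of `X(m⃗ + k e⃗)`
with `Y`, and `Eⁿ_slope` is the event that `L(n⃗_b) - L(n⃗_a) ≥ 0.01 |n⃗_b - n⃗_a|` for all
`n⃗_a, n⃗_b ∈ Iⁿ` with `n⃗_b - n⃗_a = k e⃗`, `k ≥ n^{0.1}`. -/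
theorem slope_event_probability_tendsto_one (C : ℝ) (hC : 0 < C) :
    ∃ s > (0 : ℝ), ∀ S : ℝ, s ≤ S →
      ∀ (Ω : ℕ → Type) [∀ n, MeasureSpace (Ω n)]
        [∀ n, IsProbabilityMeasure (ℙ : Measure (Ω n))]
        (Y : ∀ n, Ω n → (Fin n → Bool))
        (Xc : ∀ n, (Fin 4 → ℕ) → ℕ → Ω n → (Fin n → Bool)),
        -- `Y` is uniform
        (∀ n (y : Fin n → Bool), (ℙ {ω | Y n ω = y}).toReal = 1 / 2 ^ n) →
        -- for each admissible base point `m⃗`, the chain starts uniformly on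
        -- `{x | N⃗(x) = m⃗}`, independently of `Y`
        (∀ n (m : Fin 4 → ℕ), natVec m ∈ Ha ∪ Hb → (strSetV n m).Nonempty →
          ∀ (x y : Fin n → Bool),
            (ℙ {ω | Xc n m 0 ω = x ∧ Y n ω = y}).toReal
              = (if x ∈ strSetV n m then (1 : ℝ) / ((strSetV n m).card : ℝ) else 0)
                * (1 / 2 ^ n)) →
        -- Markov property: given `Y` and the chain up to time `k`, the next state is obtained
        -- by the block-moving transition
        (∀ n (m : Fin 4 → ℕ), natVec m ∈ Ha ∪ Hb → (strSetV n m).Nonempty →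
          ∀ (k : ℕ) (y : Fin n → Bool) (xs : ℕ → Fin n → Bool) (z : Fin n → Bool),
            (ℙ {ω | Y n ω = y ∧ (∀ j ≤ k, Xc n m j ω = xs j) ∧ Xc n m (k + 1) ω = z}).toReal
              = (ℙ {ω | Y n ω = y ∧ (∀ j ≤ k, Xc n m j ω = xs j)}).toReal
                  * transProb (xs k) z) →
        Tendsto (fun n =>
          (ℙ {ω : Ω n | ∀ (m : Fin 4 → ℕ), natVec m ∈ Ha ∪ Hb → (strSetV n m).Nonempty →
            ∀ j k : ℕ,
              natVec m + (j : ℝ) • evec ∈ Iset n C →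
              natVec m + (k : ℝ) • evec ∈ Iset n C →
              (j : ℝ) + (n : ℝ) ^ ((0.1 : ℝ)) ≤ (k : ℝ) →
              0.01 * enorm4 (((k : ℝ) - (j : ℝ)) • evec)
                ≤ optScore S n (Xc n m k ω) (Y n ω)
                    - optScore S n (Xc n m j ω) (Y n ω)}).toReal)
          atTop (nhds 1) := by
  refine ⟨1 / balanceTol (1 / 400), one_div_pos.2 balanceTol_one_div_pos,
    fun S hS Ω _ _ Y X _ initial step => ?_⟩
  have failure_tendsto := (tendsto_add_one_pow_mul_exp_neg_rpow 8 failureRate_pos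
    (by norm_num : (0 : ℝ) < 0.1)).const_mul 15
  have lower_tendsto := failure_tendsto.const_sub 1
  rw [mul_zero, sub_zero] at lower_tendsto
  refine tendsto_of_tendsto_of_tendsto_of_le_of_le' lower_tendsto tendsto_const_nhds ?_
    (Eventually.of_forall fun n => measureReal_le_one)
  filter_upwards [eventually_measureReal_compl_slopeEvent_le hC hS] with n failure_le
  have failure := failure_le (Ω n) ℙ (X n) (Y n) fun m hm hne =>
    ⟨initial n m hm hne, step n m hm hne⟩
  have total : 1 ≤ (ℙ : Measure (Ω n)).real (slopeEvent S C (X n) (Y n)) +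
      (ℙ : Measure (Ω n)).real (slopeEvent S C (X n) (Y n))ᶜ := by
    rw [← probReal_univ (μ := (ℙ : Measure (Ω n))), ← Set.union_compl_self (slopeEvent S C _ _)]
    exact measureReal_union_le _ _
  change _ ≤ (ℙ : Measure (Ω n)).real (slopeEvent S C (X n) (Y n))
  linarith
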